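/- Let q be a prime power, m ≥ 3, l | q^m − 1, g | x^m − 1 over F_q. Let p_1, …, p_r be the primes dividing q^m − 1 but not l, and g_1, …, g_s the monic irreducible factors of x^m − 1 not dividing g. Set δ = 1 − 2Σ_{i=1}^r 1/p_i − Σ_{i=1}^s 1/q^{deg g_i}, and assume δ > 0; set Δ = (2r + s − 1)/δ + 2. If q^{m/2 − 1} > (n+2)·Δ·W(l)^2·W(g), then for every non-exceptional rational function f over F_{q^m} of degree sum n and every a ∈ F_q, there exists α ∈ F_{q^m} normal over F_q with (α, f(α)) a primitive pair and Tr_{F_{q^m}/F_q}(α^{−1}) = a. -/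

import Mathlib

open Polynomial UniqueFactorizationMonoid Finset Classical

/-- `α` is a primitive element of the finite field `F`: a generator of the cyclic group `Fˣ`. -/
def IsPrimitiveElem {F : Type*} [Field F] [Fintype F] (α : F) : Prop :=
  orderOf α = Fintype.card F - 1

/-- `α` is normal over `K`: its Frobenius conjugates form a `K`-basis of `F`. -/
def IsNormalElem (K : Type*) {F : Type*} [Field K] [Field F] [Algebra K F]
    (q m : ℕ) (α : F) : Prop :=
  LinearIndependent K (fun i : Fin m => α ^ q ^ (i : ℕ)) ∧
    Submodule.span K (Set.range fun i : Fin m => α ^ q ^ (i : ℕ)) = ⊤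

/-- A rational function `f ∈ F(x)` is exceptional if `f = c·xⁱ·hᵈ` for some `d > 1` dividing
`|F| − 1`, or `f = xⁱ` with `gcd(|F| − 1, i) ≠ 1`. -/
def ExceptionalRatFunc {F : Type*} [Field F] [Fintype F] (f : RatFunc F) : Prop :=
  (∃ (c : F) (i : ℤ) (h : RatFunc F) (d : ℕ), 1 < d ∧ d ∣ Fintype.card F - 1 ∧
      f = RatFunc.C c * RatFunc.X ^ i * h ^ d) ∨
  (∃ i : ℤ, f = RatFunc.X ^ i ∧ Nat.gcd (Fintype.card F - 1) i.natAbs ≠ 1)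

/-!
Normality of `α` and primitivity of `α` and `f α` say that certain subgroups of the characters of
the additive and multiplicative groups of `F` are nontrivial at `α`, and the trace condition that
another one, up to a twist, is trivial there. Averaging over these subgroups expands the
indicator of the conditions attached to `l`, `g` and the trace into characters, and the conditions
attached to the `pᵢ` and `gᵢ` are added by a linear sieve: their failures are subtracted, at the
price of the factor `Δ`. What has to be small is then each sum
`∑ χ₁(x) χ₂(f(x)) ψ₁(x) ψ₂(x⁻¹)` with a nontrivial character in it, and non-exceptionality of `f`
yields the bound `(n + 2) √|F|`.

That bound is proved without algebraic geometry. The `L`-function of the sum is a polynomial in `T`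
of degree at most `n + 2` because its higher coefficients are complete character sums over residue
classes, so the sums over the extensions of `F` are minus the power sums of `n + 2` complex numbers.
Stepanov's method over the extensions of even degree `2k` shows that every prescribed combination
of values of the characters is attained about equally often, with error `O(|F| ^ k)`. The character
sums there are therefore `O(|F| ^ k)`, and boundedness of the normalized power sums forces each of
the `n + 2` numbers to have absolute value at most `√|F|`.
-/

section Stepanov

theorem natCard_degreeLT (E : Type*) [Field E] (n : ℕ) :
    Nat.card (degreeLT E n) = Nat.card E ^ n := by
  rw [Nat.card_congr (degreeLTEquiv E n).toEquiv, Nat.card_fun, Nat.card_fin]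

theorem eq_zero_of_sum_pow_mul_eq_zero {R : Type*} [CommRing R] [IsDomain R] {π : R} (hπ : π ≠ 0) :
    ∀ {M : ℕ} {v : Fin M → R}, (∀ a, π ∣ v a → v a = 0) →
      ∑ a : Fin M, π ^ (a : ℕ) * v a = 0 → ∀ a, v a = 0
  | 0, _, _, _ => fun a => a.elim0
  | M + 1, v, hv, hsum => by
    have split : v 0 + π * ∑ a : Fin M, π ^ (a : ℕ) * v a.succ = 0 := by
      rw [← hsum, Fin.sum_univ_succ, mul_sum]
      simp only [Fin.val_zero, pow_zero, one_mul, Fin.val_succ, pow_succ', mul_assoc]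
    have head : v 0 = 0 := hv 0 ((dvd_add_left (dvd_mul_right _ _)).1 (split ▸ dvd_zero π))
    rw [head, zero_add] at split
    exact Fin.cases head (eq_zero_of_sum_pow_mul_eq_zero hπ (fun a => hv a.succ)
      ((mul_eq_zero.1 split).resolve_left hπ))

theorem eq_zero_of_sum_pow_mul_sum_mul_eq_zero {R I : Type*} [CommRing R] [IsDomain R]
    [Fintype I] {π : R} (hπ : π ≠ 0) {M : ℕ} {n : Fin M × I → R} {W : I → R}
    (hn : ∀ a, π ∣ ∑ i, n (a, i) * W i → ∀ i, n (a, i) = 0)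
    (hsum : ∑ a : Fin M, π ^ (a : ℕ) * ∑ i, n (a, i) * W i = 0) : n = 0 := by
  have hdigit := eq_zero_of_sum_pow_mul_eq_zero hπ
    (fun a hdvd => sum_eq_zero fun i _ => by rw [hn a hdvd i, zero_mul]) hsum
  exact funext fun ⟨a, i⟩ => hn a (hdigit a ▸ dvd_zero π) i

variable {E : Type*} [Field E] {p : ℕ} [Fact p.Prime] [CharP E p] {r : ℕ}

/-- The unknowns `n j` enter through their Frobenius powers, so counting replaces linear algebra. -/
theorem exists_sum_pow_mul_eq_zero [Finite E] {J : Type*} [Fintype J] (U : J → E[X]) {L T : ℕ}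
    (hU : ∀ j, p ^ r * (L - 1) + (U j).natDegree < T) (hT : T < L * Fintype.card J) :
    ∃ n : J → E[X], n ≠ 0 ∧ (∀ j, (n j).degree < L) ∧ ∑ j, n j ^ p ^ r * U j = 0 := by
  have mem (n : J → degreeLT E L) : ∑ j, (n j : E[X]) ^ p ^ r * U j ∈ degreeLT E T := by
    refine Submodule.sum_mem _ fun j _ => mem_degreeLT.2 (degree_le_natDegree.trans_lt ?_)
    have hn : (n j : E[X]).natDegree ≤ L - 1 := by
      rcases eq_or_ne (n j : E[X]) 0 with h0 | h0
      · simp [h0]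
      · exact Nat.le_pred_of_lt ((natDegree_lt_iff_degree_lt h0).2 (mem_degreeLT.1 (n j).2))
    have := natDegree_mul_le (p := (n j : E[X]) ^ p ^ r) (q := U j)
    have := natDegree_pow_le_of_le (p ^ r) hn
    exact_mod_cast (by have := hU j; omega)
  let Φ (n : J → degreeLT E L) : degreeLT E T := ⟨_, mem n⟩
  have : ∀ k, Finite (degreeLT E k) := fun k => .of_equiv _ (degreeLTEquiv E k).toEquiv.symm
  obtain ⟨n₁, n₂, hne, heq⟩ : ∃ n₁ n₂, n₁ ≠ n₂ ∧ Φ n₁ = Φ n₂ := by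
    by_contra! hinj
    have hle := Nat.card_le_card_of_injective Φ fun n₁ n₂ h => by_contra fun hne => hinj n₁ n₂ hne h
    rw [Nat.card_fun, natCard_degreeLT, natCard_degreeLT, ← pow_mul,
      Nat.card_eq_fintype_card (α := J), Nat.pow_le_pow_iff_right Finite.one_lt_card] at hle
    omega
  refine ⟨fun j => (n₁ - n₂) j, fun h => hne (funext fun j => ?_), fun j => ?_, ?_⟩
  · exact sub_eq_zero.1 (Subtype.ext (congrFun h j))
  · exact mem_degreeLT.1 ((n₁ - n₂) j).2
  · simp only [Pi.sub_apply, Submodule.coe_sub, sub_pow_char_pow, sub_mul, sum_sub_distrib]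
    exact sub_eq_zero.2 (congrArg Subtype.val heq)

/-- Stepanov's bound over `𝔽_{s²}`, `s = p ^ r`: on `S` the `s`-th power of the auxiliary polynomial
`∑ₐ (X - x₀) ^ (a s) ∑ᵢ nₐᵢ Wᵢ` agrees with `∑ₐ (X - x₀) ^ a ∑ᵢ nₐᵢ ^ s Vᵢ`, whose degree is so much
smaller that it can be made to vanish. -/
theorem card_le_of_stepanov [Fintype E] (hE : Fintype.card E = (p ^ r) ^ 2) {I : Type*} [Fintype I]
    {W V : I → E[X]} {B : ℕ} (hW : ∀ i, (W i).natDegree ≤ B) (hV : ∀ i, (V i).natDegree ≤ B)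
    (x₀ : E) {L M : ℕ} {S : Finset E} (hS : ∀ x ∈ S, ∀ i, (W i).eval x ^ p ^ r = (V i).eval x)
    (hind : ∀ n : I → E[X], (∀ i, (n i).degree < L) → (X - C x₀) ^ p ^ r ∣ ∑ i, n i * W i →
      ∀ i, n i = 0)
    (hcount : p ^ r * L + B + M < L * M * Fintype.card I) :
    #S ≤ L + B + M * p ^ r := by
  obtain ⟨n, hn0, hnL, hn⟩ := exists_sum_pow_mul_eq_zero (p := p) (r := r) (L := L)
    (T := p ^ r * L + B + M)
    (fun ai : Fin M × I => V ai.2 * (X - C x₀) ^ (ai.1 : ℕ)) (fun ⟨a, i⟩ => by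
      have := natDegree_mul_le (p := V i) (q := (X - C x₀) ^ (a : ℕ))
      rw [natDegree_pow, natDegree_X_sub_C, mul_one] at this
      have := Nat.mul_le_mul_left (p ^ r) (Nat.sub_le L 1)
      have := hV i
      have := a.2
      dsimp only
      omega) (by rwa [Fintype.card_prod, Fintype.card_fin, ← mul_assoc])
  set Ψ : E[X] := ∑ a : Fin M, ((X - C x₀) ^ p ^ r) ^ (a : ℕ) * ∑ i, n (a, i) * W i with hΨ
  have Ψ_ne_zero : Ψ ≠ 0 := fun h => hn0 <| eq_zero_of_sum_pow_mul_sum_mul_eq_zero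
    (pow_ne_zero _ (X_sub_C_ne_zero x₀)) (fun a => hind _ fun i => hnL (a, i)) h
  have Ψ_root : ∀ x ∈ S, Ψ.IsRoot x := fun x hx => eq_zero_of_pow_eq_zero (n := p ^ r) <| calc
    Ψ.eval x ^ p ^ r
      = ∑ a : Fin M, ∑ i, ((((x - x₀) ^ p ^ r) ^ p ^ r) ^ (a : ℕ)) *
          ((n (a, i)).eval x ^ p ^ r * (W i).eval x ^ p ^ r) := by
        simp only [hΨ, eval_finsetSum, eval_mul, eval_pow, eval_sub, eval_X, eval_C,
          sum_pow_char_pow, mul_pow, mul_sum]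
        simp only [← pow_mul, mul_comm, mul_left_comm]
    _ = (∑ ai : Fin M × I, n ai ^ p ^ r * (V ai.2 * (X - C x₀) ^ (ai.1 : ℕ))).eval x := by
        rw [← pow_mul, ← sq, ← hE, FiniteField.pow_card, Fintype.sum_prod_type]
        simp only [eval_finsetSum, eval_mul, eval_pow, eval_sub, eval_X, eval_C, hS x hx,
          mul_comm, mul_left_comm]
    _ = 0 := by rw [hn, eval_zero]
  have Ψ_natDegree : Ψ.natDegree ≤ L + B + M * p ^ r := by
    refine natDegree_sum_le_of_forall_le _ _ fun a _ => natDegree_mul_le.trans ?_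
    have hpow : (((X - C x₀) ^ p ^ r) ^ (a : ℕ)).natDegree ≤ M * p ^ r := by
      rw [← pow_mul, natDegree_pow, natDegree_X_sub_C, mul_one, mul_comm]
      exact Nat.mul_le_mul_right _ a.2.le
    have hdigit : (∑ i, n (a, i) * W i).natDegree ≤ L + B :=
      natDegree_sum_le_of_forall_le _ _ fun i _ => natDegree_mul_le.trans
        (add_le_add (natDegree_le_of_degree_le (hnL (a, i)).le) (hW i))
    omega
  exact (card_le_degree_of_subset_roots fun x hx =>
    (mem_roots Ψ_ne_zero).2 (Ψ_root x hx)).trans Ψ_natDegree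

end Stepanov

section KummerArtinSchreier

theorem injective_pow_mul_pow {M : Type*} [CommMonoid M] {N : ℕ} {a b : M} (ha : a ^ N = 1)
    (hb : b ^ N = 1) (hab : ∀ i j : ℕ, a ^ i * b ^ j = 1 → N ∣ i ∧ N ∣ j) :
    Function.Injective fun ij : Fin N × Fin N => a ^ (ij.1 : ℕ) * b ^ (ij.2 : ℕ) := by
  have fin_eq {i i' : Fin N} (h : N ∣ i + (N - i')) : i = i' := by
    have : (i : ℤ) ≡ i' [ZMOD N] := by
      refine (Int.modEq_iff_dvd.2 ?_).symm
      have := Int.natCast_dvd_natCast.2 h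
      push_cast [Nat.cast_sub i'.2.le] at this
      rwa [← add_sub_assoc, add_sub_right_comm, dvd_add_self_right] at this
    exact Fin.ext (Nat.ModEq.eq_of_lt_of_lt (Int.natCast_modEq_iff.1 this) i.2 i'.2)
  rintro ⟨i, j⟩ ⟨i', j'⟩ h
  have cancel {c : M} (hc : c ^ N = 1) (l : Fin N) : c ^ (l : ℕ) * c ^ (N - l) = 1 := by
    rw [← pow_add, Nat.add_sub_cancel' l.2.le, hc]
  obtain ⟨hi, hj⟩ := hab (i + (N - i')) (j + (N - j')) <| calc
    _ = a ^ (i : ℕ) * b ^ (j : ℕ) * (a ^ (N - i') * b ^ (N - j')) := by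
      rw [pow_add, pow_add, mul_mul_mul_comm]
    _ = a ^ (i' : ℕ) * b ^ (j' : ℕ) * (a ^ (N - i') * b ^ (N - j')) := congrArg (· * _) h
    _ = 1 := by rw [mul_mul_mul_comm, cancel ha, cancel hb, one_mul]
  rw [fin_eq hi, fin_eq hj]

theorem eq_zero_of_sum_mul_eigenvector_eq_zero {Γ Ω ι : Type*} [Monoid Γ] [Field Ω]
    [MulSemiringAction Γ Ω] [Fintype ι] {χ : ι → Γ →* Ω} (hχ : Function.Injective χ) {y a : ι → Ω}
    (hy0 : ∀ i, y i ≠ 0) (hy : ∀ i (σ : Γ), σ • y i = χ i σ * y i)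
    (ha : ∀ i (σ : Γ), σ • a i = a i) (h : ∑ i, a i * y i = 0) (i : ι) : a i = 0 := by
  have hli := Fintype.linearIndependent_iff.1 ((linearIndependent_monoidHom Γ Ω).comp χ hχ)
    (fun i => a i * y i) <| funext fun σ => calc
      _ = ∑ i, a i * y i * χ i σ := by simp
      _ = σ • ∑ i, a i * y i := by
        simp only [Finset.smul_sum, smul_mul', hy, ha]; exact sum_congr rfl fun i _ => by ring
      _ = 0 := by rw [h, smul_zero]
  exact (mul_eq_zero.1 (hli i)).resolve_right (hy0 i)

variable {k Ω : Type*} [Field k] [Field Ω] [Algebra k Ω]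

theorem algEquiv_pow_apply_of_apply_eq_add {σ : Ω ≃ₐ[k] Ω} {z : Ω} {j : ℕ} (hσ : σ z = z + j)
    (m : ℕ) : (σ ^ m) z = z + m * j := by
  induction m with
  | zero => simp
  | succ m ih =>
    rw [pow_succ', AlgEquiv.mul_apply, ih, map_add, hσ, map_mul, map_natCast, map_natCast]
    push_cast; ring

theorem exists_character_of_apply_eq_mul {N : ℕ} {y : Ω} (hy0 : y ≠ 0)
    (h : ∀ σ : Ω ≃ₐ[k] Ω, ∃ ζ : k, ζ ^ N = 1 ∧ σ y = algebraMap k Ω ζ * y) :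
    ∃ c : (Ω ≃ₐ[k] Ω) →* Ω, (∀ σ, σ y = c σ * y) ∧ c ^ N = 1 := by
  choose ζ hζN hζ using h
  refine ⟨⟨⟨fun σ => algebraMap k Ω (ζ σ), mul_right_cancel₀ hy0 ?_⟩, fun σ τ =>
    mul_right_cancel₀ hy0 ?_⟩, hζ, MonoidHom.ext fun σ => ?_⟩
  · rw [← hζ, AlgEquiv.one_apply, one_mul]
  · dsimp only
    rw [← hζ, AlgEquiv.mul_apply, hζ τ, map_mul, hζ σ, AlgEquiv.commutes, mul_left_comm, mul_assoc]
  · exact (map_pow (algebraMap k Ω) (ζ σ) N).symm.trans (by rw [hζN, map_one, MonoidHom.one_apply])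

variable {p : ℕ} [CharP Ω p]

theorem linearIndependent_pow_of_apply_eq_add {z : Ω} (hz : IsIntegral k z) {σ : Ω ≃ₐ[k] Ω} {j : ℕ}
    (hj : (j : Ω) ≠ 0) (hσ : σ z = z + j) : LinearIndependent k fun c : Fin p => z ^ (c : ℕ) := by
  have hdeg : p ≤ (minpoly k z).natDegree := by
    have hinj : Function.Injective fun m : Fin p => z + (m : ℕ) * (j : Ω) := fun m m' h =>
      Fin.ext <| CharP.natCast_injOn_Iio Ω p m.2 m'.2 <| mul_right_cancel₀ hj (add_left_cancel h)
    by_contra! hlt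
    refine (minpoly.monic hz).map (algebraMap k Ω) |>.ne_zero <|
      eq_zero_of_natDegree_lt_card_of_eval_eq_zero _ hinj (fun m => ?_) ?_
    · rw [← algEquiv_pow_apply_of_apply_eq_add hσ, eval_map_algebraMap, aeval_algHom_apply,
        minpoly.aeval, map_zero]
    · simpa using hlt
  exact (linearIndependent_pow z).comp (Fin.castLE hdeg) (Fin.castLE_injective hdeg)

variable [Fact p.Prime]

theorem monoidHom_eq_of_comp_subtype_eq {G : Type*} [Group G] {H : Subgroup G} {c c' : G →* Ω}
    (hH : ∀ σ, σ ^ p ∈ H) (h : c.comp H.subtype = c'.comp H.subtype) : c = c' :=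
  MonoidHom.ext fun σ => frobenius_inj Ω p <| by
    simpa [frobenius_def] using DFunLike.congr_fun h ⟨σ ^ p, hH σ⟩

/-- Exponents `((i, j), c)` of the monomials `y₁ ^ i * y₂ ^ j * z ^ c` reduced modulo two Kummer
relations of degree `N` and one Artin–Schreier relation of degree `p`. -/
abbrev ReducedExponent (N p : ℕ) := (Fin N × Fin N) × Fin p

/-- The monomial `y₁ ^ i * y₂ ^ j * z ^ c` with exponents `t = ((i, j), c)`. -/
def reducedMonomial {S : Type*} [CommMonoid S] {N p : ℕ} (y₁ y₂ z : S) (t : ReducedExponent N p) :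
    S :=
  y₁ ^ (t.1.1 : ℕ) * y₂ ^ (t.1.2 : ℕ) * z ^ (t.2 : ℕ)

theorem linearIndependent_kummer_artinSchreier {N : ℕ} {y₁ y₂ z : Ω} (hy₁ : y₁ ≠ 0) (hy₂ : y₂ ≠ 0)
    (h₁ : ∀ σ : Ω ≃ₐ[k] Ω, ∃ ζ : k, ζ ^ N = 1 ∧ σ y₁ = algebraMap k Ω ζ * y₁)
    (h₂ : ∀ σ : Ω ≃ₐ[k] Ω, ∃ ζ : k, ζ ^ N = 1 ∧ σ y₂ = algebraMap k Ω ζ * y₂)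
    (hz : ∀ σ : Ω ≃ₐ[k] Ω, ∃ j : ℕ, σ z = z + j) (hzi : IsIntegral k z)
    (hzk : ∃ σ : Ω ≃ₐ[k] Ω, σ z ≠ z)
    (hy : ∀ i j : ℕ, (∀ σ : Ω ≃ₐ[k] Ω, σ (y₁ ^ i * y₂ ^ j) = y₁ ^ i * y₂ ^ j) → N ∣ i ∧ N ∣ j) :
    LinearIndependent k (reducedMonomial y₁ y₂ z : ReducedExponent N p → Ω) := by
  obtain ⟨c₁, hc₁, hc₁N⟩ := exists_character_of_apply_eq_mul hy₁ h₁
  obtain ⟨c₂, hc₂, hc₂N⟩ := exists_character_of_apply_eq_mul hy₂ h₂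
  have apply_monomial (i j : ℕ) (σ : Ω ≃ₐ[k] Ω) :
      σ (y₁ ^ i * y₂ ^ j) = (c₁ ^ i * c₂ ^ j) σ * (y₁ ^ i * y₂ ^ j) := by
    simp only [map_mul, map_pow, hc₁, hc₂, MonoidHom.mul_apply, MonoidHom.pow_apply]; ring
  let Γ : Subgroup (Ω ≃ₐ[k] Ω) := MulAction.stabilizer (Ω ≃ₐ[k] Ω) z
  have pow_mem (σ : Ω ≃ₐ[k] Ω) : σ ^ p ∈ Γ := by
    obtain ⟨j, hj⟩ := hz σ
    refine (algEquiv_pow_apply_of_apply_eq_add hj p).trans ?_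
    rw [CharP.cast_eq_zero, zero_mul, add_zero]
  have hχ : Function.Injective fun ij : Fin N × Fin N =>
      (c₁ ^ (ij.1 : ℕ) * c₂ ^ (ij.2 : ℕ)).comp Γ.subtype := fun ij ij' h =>
    injective_pow_mul_pow hc₁N hc₂N
      (fun i j hij => hy i j fun σ => by rw [apply_monomial, hij, MonoidHom.one_apply, one_mul])
      (monoidHom_eq_of_comp_subtype_eq pow_mem h)
  have vanish (n : ReducedExponent N p → k) (hn : ∑ t, n t • reducedMonomial y₁ y₂ z t = 0) (ij) :
      ∑ c, n (ij, c) • z ^ (c : ℕ) = 0 := by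
    refine eq_zero_of_sum_mul_eigenvector_eq_zero hχ
      (y := fun ij => y₁ ^ (ij.1 : ℕ) * y₂ ^ (ij.2 : ℕ))
      (a := fun ij => ∑ c, n (ij, c) • z ^ (c : ℕ)) (fun ij => ?_)
      (fun ij σ => ?_) (fun ij σ => ?_) ?_ ij
    · positivity
    · exact apply_monomial ij.1 ij.2 σ
    · have hσz : σ • z = z := σ.2
      simp only [Finset.smul_sum, smul_comm σ, smul_pow', hσz]
    · simp only [← hn, Fintype.sum_prod_type (α₁ := Fin N × Fin N), sum_mul, smul_mul_assoc,
        mul_comm (z ^ _), reducedMonomial]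
  obtain ⟨σ, hσ⟩ := hzk
  obtain ⟨j, hj⟩ := hz σ
  have indep_z : LinearIndependent k fun c : Fin p => z ^ (c : ℕ) :=
    linearIndependent_pow_of_apply_eq_add hzi (fun h => hσ (by rw [hj, h, add_zero])) hj
  rw [Fintype.linearIndependent_iff] at indep_z ⊢
  exact fun n hn ⟨ij, c⟩ => indep_z _ (vanish n hn ij) c

end KummerArtinSchreier

section MultiplicationTable

open scoped Matrix

variable {R S I : Type*} [CommRing R] [CommRing S] [Fintype I]

/-- The matrix of multiplication by `∑ i, n i * b i` for a family `b` with structure constants `c`,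
`b i * b j = ∑ l, c i j l * b l`. -/
def mulMatrix (c : I → I → I → R) (n : I → R) : Matrix I I R :=
  Matrix.of fun j l => ∑ i, n i * c i j l

theorem map_mulMatrix_mulVec {c : I → I → I → R} {φ : R →+* S} {b : I → S}
    (hb : ∀ i j, b i * b j = ∑ l, φ (c i j l) * b l) (n : I → R) :
    (mulMatrix c n).map φ *ᵥ b = (∑ i, φ (n i) * b i) • b := by
  funext j
  simp only [Matrix.mulVec, dotProduct, Matrix.map_apply, mulMatrix, Matrix.of_apply, map_sum,
    map_mul, Pi.smul_apply, smul_eq_mul, sum_mul, mul_assoc, hb, mul_sum]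
  exact sum_comm

theorem map_det_mulMatrix_eq_zero {c : I → I → I → R} {φ : R →+* S} {b : I → S}
    (hb : ∀ i j, b i * b j = ∑ l, φ (c i j l) * b l) {n : I → R} (hn : ∑ i, φ (n i) * b i = 0)
    {i₀ : I} (hi₀ : b i₀ = 1) : φ (mulMatrix c n).det = 0 := by
  have h := congrFun (Matrix.mulVec_mulVec b ((mulMatrix c n).map φ).adjugate
    ((mulMatrix c n).map φ)) i₀
  rwa [map_mulMatrix_mulVec hb, hn, zero_smul, Matrix.mulVec_zero, Matrix.adjugate_mul,
    Matrix.smul_mulVec, Matrix.one_mulVec, Pi.smul_apply, hi₀, smul_eq_mul, mul_one, eq_comm,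
    Pi.zero_apply, ← RingHom.mapMatrix_apply, ← RingHom.map_det] at h

theorem det_mulMatrix_ne_zero {Ω : Type*} [Field Ω] [IsDomain R] [Algebra R Ω] {c : I → I → I → R}
    {b : I → Ω} (hli : LinearIndependent R b)
    (hb : ∀ i j, b i * b j = ∑ l, algebraMap R Ω (c i j l) * b l) {n : I → R} (hn : n ≠ 0) :
    (mulMatrix c n).det ≠ 0 := fun hdet => by
  have indep (u : I → R) (hu : ∑ i, algebraMap R Ω (u i) * b i = 0) : u = 0 :=
    funext <| Fintype.linearIndependent_iff.1 hli u (by simpa only [Algebra.smul_def] using hu)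
  obtain ⟨v, hv0, hv⟩ := Matrix.exists_vecMul_eq_zero_iff.2 hdet
  have hprod : (∑ i, algebraMap R Ω (n i) * b i) * ∑ j, algebraMap R Ω (v j) * b j = 0 := calc
    _ = (algebraMap R Ω ∘ v) ⬝ᵥ (mulMatrix c n).map (algebraMap R Ω) *ᵥ b := by
      rw [map_mulMatrix_mulVec hb, dotProduct_smul, smul_eq_mul]; rfl
    _ = 0 := by
      have hφv : (algebraMap R Ω ∘ v) ᵥ* (mulMatrix c n).map (algebraMap R Ω) = 0 :=
        funext fun j => (RingHom.map_vecMul _ _ _ j).symm.trans (by rw [hv]; exact map_zero _)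
      rw [Matrix.dotProduct_mulVec, hφv, zero_dotProduct]
  exact (mul_eq_zero.1 hprod).elim (hn ∘ indep n) (hv0 ∘ indep v)

theorem natDegree_det_le {d : ℕ} {A : Matrix I I R[X]} (hA : ∀ i j, (A i j).natDegree ≤ d) :
    A.det.natDegree ≤ Fintype.card I * d := by
  rw [Matrix.det_apply]
  refine natDegree_sum_le_of_forall_le _ _ fun σ _ => (natDegree_smul_le _ _).trans ?_
  exact (natDegree_prod_le _ _).trans
    ((sum_le_card_nsmul _ _ d fun i _ => hA _ _).trans_eq (by rw [card_univ, smul_eq_mul]))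

theorem eq_zero_of_map_sum_eq_zero {E Ω : Type*} [Field E] [Field Ω] [Algebra E[X] Ω]
    {c : I → I → I → E[X]} {d L : ℕ} (hc : ∀ i j l, (c i j l).natDegree ≤ d) {b : I → Ω}
    (hli : LinearIndependent E[X] b)
    (hb : ∀ i j, b i * b j = ∑ l, algebraMap E[X] Ω (c i j l) * b l) {φ : E[X] →+* S}
    (hφ : ∀ f : E[X], f.natDegree ≤ Fintype.card I * (L + d) → φ f = 0 → f = 0) {W : I → S}
    (hW : ∀ i j, W i * W j = ∑ l, φ (c i j l) * W l) {i₀ : I} (hi₀ : W i₀ = 1) {n : I → E[X]}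
    (hn : ∀ i, (n i).natDegree ≤ L) (hsum : ∑ i, φ (n i) * W i = 0) : n = 0 := by
  by_contra hn0
  refine det_mulMatrix_ne_zero hli hb hn0 <|
    hφ _ (natDegree_det_le fun j l => ?_) (map_det_mulMatrix_eq_zero hW hsum hi₀)
  exact natDegree_sum_le_of_forall_le _ _ fun i _ =>
    natDegree_mul_le.trans (add_le_add (hn i) (hc i j l))

/-- The coefficient of `y ^ l` in `y ^ i * y ^ j` reduced by the relation `y ^ N = A * y + B`. -/
def powMulCoeff {N : ℕ} (A B : R) (i j l : Fin N) : R :=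
  if (i : ℕ) + j < N then if (l : ℕ) = i + j then 1 else 0
  else (if (l : ℕ) + N = i + j + 1 then A else 0) + if (l : ℕ) + N = i + j then B else 0

theorem pow_mul_pow_eq_sum_powMulCoeff {N : ℕ} (φ : R →+* S) {A B : R} {y : S}
    (hy : y ^ N = φ A * y + φ B) (i j : Fin N) :
    y ^ (i : ℕ) * y ^ (j : ℕ) = ∑ l, φ (powMulCoeff A B i j l) * y ^ (l : ℕ) := by
  have sum_ite {m : ℕ} (hm : m < N) (a : S) {P : Fin N → Prop} [DecidablePred P]
      (hP : ∀ l, P l ↔ (l : ℕ) = m) :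
      ∑ l : Fin N, (if P l then a else 0) * y ^ (l : ℕ) = a * y ^ m := by
    rw [sum_eq_single ⟨m, hm⟩ (fun l _ hl => by
      rw [if_neg fun h => hl (Fin.ext ((hP l).1 h)), zero_mul]) (by simp), if_pos ((hP _).2 rfl)]
  have hi := i.2
  have hj := j.2
  by_cases h : (i : ℕ) + j < N
  · simp only [powMulCoeff, if_pos h, apply_ite φ, map_one, map_zero]
    rw [sum_ite h 1 fun l => Iff.rfl, one_mul, pow_add]
  · obtain ⟨e, he⟩ := Nat.exists_eq_add_of_le' (not_lt.1 h)
    simp only [powMulCoeff, if_neg h, map_add, apply_ite φ, map_zero, add_mul, sum_add_distrib]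
    rw [sum_ite (m := e + 1) (by omega) (φ A) fun l => by omega,
      sum_ite (m := e) (by omega) (φ B) fun l => by omega, ← pow_add, he, pow_add, hy]
    ring

theorem natDegree_powMulCoeff_le {N d : ℕ} {A B : R[X]} (hA : A.natDegree ≤ d)
    (hB : B.natDegree ≤ d) (i j l : Fin N) : (powMulCoeff A B i j l).natDegree ≤ d := by
  unfold powMulCoeff
  split_ifs <;> simp [hA, hB, natDegree_add_le_of_degree_le]

/-- The coefficient at `l` of the product of the monomials `i` and `j` reduced by
`y₁ ^ N = K₁`, `y₂ ^ N = K₂` and `z ^ p = A * z + B`. -/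
def monomialMulCoeff {N p : ℕ} (K₁ K₂ A B : R) (i j l : ReducedExponent N p) : R :=
  powMulCoeff 0 K₁ i.1.1 j.1.1 l.1.1 * powMulCoeff 0 K₂ i.1.2 j.1.2 l.1.2 *
    powMulCoeff A B i.2 j.2 l.2

variable {N p : ℕ}

theorem reducedMonomial_mul_eq_sum (φ : R →+* S) {K₁ K₂ A B : R} {y₁ y₂ z : S}
    (hy₁ : y₁ ^ N = φ K₁) (hy₂ : y₂ ^ N = φ K₂) (hz : z ^ p = φ A * z + φ B)
    (i j : ReducedExponent N p) : reducedMonomial y₁ y₂ z i * reducedMonomial y₁ y₂ z j =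
      ∑ l, φ (monomialMulCoeff K₁ K₂ A B i j l) * reducedMonomial y₁ y₂ z l := by
  simp only [reducedMonomial, monomialMulCoeff, map_mul]
  rw [mul_mul_mul_comm, mul_mul_mul_comm (y₁ ^ (i.1.1 : ℕ)),
    pow_mul_pow_eq_sum_powMulCoeff φ (A := 0) (B := K₁) (by rw [hy₁, map_zero, zero_mul, zero_add]),
    pow_mul_pow_eq_sum_powMulCoeff φ (A := 0) (B := K₂) (by rw [hy₂, map_zero, zero_mul, zero_add]),
    pow_mul_pow_eq_sum_powMulCoeff φ hz, sum_mul_sum, ← Fintype.sum_prod_type', sum_mul_sum,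
    ← Fintype.sum_prod_type']
  exact sum_congr rfl fun l _ => by ring

theorem natDegree_monomialMulCoeff_le {d : ℕ} {K₁ K₂ A B : R[X]} (hK₁ : K₁.natDegree ≤ d)
    (hK₂ : K₂.natDegree ≤ d) (hA : A.natDegree ≤ d) (hB : B.natDegree ≤ d)
    (i j l : ReducedExponent N p) : (monomialMulCoeff K₁ K₂ A B i j l).natDegree ≤ 3 * d := by
  have h₁ := natDegree_powMulCoeff_le (natDegree_zero.trans_le d.zero_le) hK₁ i.1.1 j.1.1 l.1.1
  have h₂ := natDegree_powMulCoeff_le (natDegree_zero.trans_le d.zero_le) hK₂ i.1.2 j.1.2 l.1.2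
  exact (natDegree_mul_le.trans (add_le_add (natDegree_mul_le.trans (add_le_add h₁ h₂))
    (natDegree_powMulCoeff_le hA hB i.2 j.2 l.2))).trans_eq (by ring)

theorem eq_zero_of_map_sum_reducedMonomial_eq_zero {E Ω : Type*} [Field E] [Field Ω]
    [Algebra E[X] Ω] [NeZero N] [NeZero p] {K₁ K₂ A B : E[X]} {d L : ℕ} (hK₁ : K₁.natDegree ≤ d)
    (hK₂ : K₂.natDegree ≤ d) (hA : A.natDegree ≤ d) (hB : B.natDegree ≤ d) {y₁ y₂ z : Ω}
    (hy₁ : y₁ ^ N = algebraMap E[X] Ω K₁) (hy₂ : y₂ ^ N = algebraMap E[X] Ω K₂)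
    (hz : z ^ p = algebraMap E[X] Ω A * z + algebraMap E[X] Ω B)
    (hli : LinearIndependent E[X] (reducedMonomial y₁ y₂ z : ReducedExponent N p → Ω))
    {φ : E[X] →+* S} (hφ : ∀ f : E[X], f.natDegree ≤ N * N * p * (L + 3 * d) → φ f = 0 → f = 0)
    {h₁ h₂ w : S} (hh₁ : h₁ ^ N = φ K₁) (hh₂ : h₂ ^ N = φ K₂) (hw : w ^ p = φ A * w + φ B)
    {n : ReducedExponent N p → E[X]} (hn : ∀ t, (n t).natDegree ≤ L)
    (hsum : ∑ t, φ (n t) * reducedMonomial h₁ h₂ w t = 0) : n = 0 :=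
  eq_zero_of_map_sum_eq_zero (natDegree_monomialMulCoeff_le hK₁ hK₂ hA hB) hli
    (reducedMonomial_mul_eq_sum _ hy₁ hy₂ hz) (by simpa using hφ)
    (reducedMonomial_mul_eq_sum _ hh₁ hh₂ hw) (i₀ := ((0, 0), 0)) (by simp [reducedMonomial])
    hn hsum

end MultiplicationTable

section SeparableClosure

theorem mem_range_of_pow_card_eq_self {E Ω : Type*} [Field E] [Fintype E] [Field Ω]
    (i : E →+* Ω) {t : Ω} (ht : t ^ Fintype.card E = t) : t ∈ i.range :=
  Splits.mem_range_of_isRoot (f := X ^ Fintype.card E - X)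
    (by simpa using (FiniteField.isSplittingField_sub E E).splits)
    (FiniteField.X_pow_card_sub_X_ne_zero E Fintype.one_lt_card) (by simp [ht])

theorem exists_pow_char_eq_self_add {Ω : Type*} [Field Ω] [IsSepClosed Ω] (p : ℕ) [Fact p.Prime]
    [CharP Ω p] (ρ : Ω) : ∃ z, z ^ p = z + ρ := by
  obtain ⟨z, hz⟩ := IsSepClosed.exists_root_C_mul_X_pow_add_C_mul_X_add_C' p p (1 : Ω) (-1) (-ρ)
    dvd_rfl (Fact.out : p.Prime).two_le (neg_ne_zero.2 one_ne_zero)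
  exact ⟨z, by linear_combination hz⟩

variable {E k Ω : Type*} [Field E] [Field k] [Field Ω] [Algebra k Ω]

theorem exists_apply_eq_add_natCast_of_pow_char_eq {p : ℕ} [Fact p.Prime] [CharP Ω p] {z : Ω}
    {ρ : k} (hz : z ^ p = z + algebraMap k Ω ρ) (σ : Ω ≃ₐ[k] Ω) : ∃ j : ℕ, σ z = z + j := by
  obtain ⟨x, hx⟩ : σ z - z ∈ (ZMod.castHom dvd_rfl Ω : ZMod p →+* Ω).range :=
    mem_range_of_pow_card_eq_self _ <| by
      rw [ZMod.card, sub_pow_char, ← map_pow, hz, map_add, AlgEquiv.commutes]; ring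
  obtain ⟨j, rfl⟩ := ZMod.natCast_zmod_surjective x
  exact ⟨j, by rw [map_natCast] at hx; rw [hx, add_sub_cancel]⟩

theorem exists_apply_eq_mul_of_pow_eq [Fintype E] (i : E →+* k) {N : ℕ}
    (hN : N ∣ Fintype.card E - 1) {y : Ω} (hy0 : y ≠ 0) {K : k} (hy : y ^ N = algebraMap k Ω K)
    (σ : Ω ≃ₐ[k] Ω) : ∃ ζ : k, ζ ^ N = 1 ∧ σ y = algebraMap k Ω ζ * y := by
  have hroot : (σ y / y) ^ N = 1 := by
    rw [div_pow, ← map_pow, hy, AlgEquiv.commutes, ← hy, div_self (pow_ne_zero N hy0)]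
  obtain ⟨x, hx⟩ : σ y / y ∈ ((algebraMap k Ω).comp i).range :=
    mem_range_of_pow_card_eq_self _ <| by
      obtain ⟨m, hm⟩ := hN
      rw [← Nat.sub_add_cancel (Fintype.card_pos (α := E)), pow_succ, Nat.succ_eq_add_one, zero_add,
        hm, pow_mul, hroot, one_pow, one_mul]
  rw [RingHom.comp_apply] at hx
  exact ⟨i x, (algebraMap k Ω).injective (by rw [map_pow, hx, hroot, map_one]),
    by rw [hx, div_mul_cancel₀ _ hy0]⟩

end SeparableClosure

section RationalFunctions

variable {E : Type*} [Field E]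

theorem isUnit_of_isCoprime_of_mul_pow_sub_eq {u v : E[X]} {p : ℕ} (hp : 2 ≤ p)
    (huv : IsCoprime u v) {w : E[X]} (h : X * (u ^ p - u * v ^ (p - 1)) = v ^ p * w) :
    IsUnit v := by
  have hcop : IsCoprime v (u ^ p - u * v ^ (p - 1)) := by
    have : u ^ p - u * v ^ (p - 1) = u ^ p + v * (-(u * v ^ (p - 2))) := by
      rw [show p - 1 = p - 2 + 1 by lia]; ring
    exact this ▸ huv.symm.pow_right.add_mul_left_right _
  have hdvd : v ^ p ∣ X := hcop.pow_left.dvd_of_dvd_mul_right (h ▸ dvd_mul_right ..)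
  exact irreducible_X.squarefree v ((pow_two v ▸ pow_dvd_pow v hp).trans hdvd)

theorem X_mul_pow_sub_ne {p : ℕ} (hp : 2 ≤ p) {a b : E} (hab : a ≠ 0 ∨ b ≠ 0) (c : E) (u : E[X]) :
    X * (u ^ p - u) ≠ C c * X - C a * X ^ 2 - C b := by
  intro h
  have hb : b = 0 := by simpa using congrArg (eval 0) h
  have ha : -a ≠ 0 := by simpa [hb] using hab
  have hlin : u ^ p - u = C (-a) * X + C c := mul_left_cancel₀ X_ne_zero <| by
    rw [h, hb, C_neg, C_0]; ring
  have hdeg : (u ^ p - u).natDegree = 1 := by rw [hlin, natDegree_linear ha]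
  rcases Nat.eq_zero_or_pos u.natDegree with hu | hu
  · rw [eq_C_of_natDegree_eq_zero hu, ← C_pow, ← C_sub, natDegree_C] at hdeg
    exact zero_ne_one hdeg
  · have hlt : u.natDegree < (u ^ p).natDegree := by rw [natDegree_pow]; nlinarith
    rw [natDegree_sub_eq_left_of_natDegree_lt hlt] at hdeg
    lia

theorem ratFunc_pow_ne_self_add {p : ℕ} (hp : 2 ≤ p) {a b : E} (hab : a ≠ 0 ∨ b ≠ 0) (c : E)
    (u : RatFunc E) : u ^ p ≠ u + (.C c - (.C a * .X + .C b / .X)) := by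
  intro h
  have hX : (RatFunc.X : RatFunc E) ≠ 0 := RatFunc.X_ne_zero
  have hd : algebraMap E[X] (RatFunc E) u.denom ≠ 0 := by simpa using u.denom_ne_zero
  have hu : algebraMap E[X] (RatFunc E) u.num = u * algebraMap _ _ u.denom :=
    (div_eq_iff hd).1 u.num_div_denom
  have key : X * (u.num ^ p - u.num * u.denom ^ (p - 1)) =
      u.denom ^ p * (C c * X - C a * X ^ 2 - C b) := by
    apply RatFunc.algebraMap_injective E
    obtain ⟨p, rfl⟩ : ∃ n, p = n + 1 := ⟨p - 1, by lia⟩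
    simp only [map_mul, map_sub, map_pow, hu, mul_pow, h, RatFunc.algebraMap_C,
      RatFunc.algebraMap_X, Nat.add_sub_cancel]
    field_simp
    ring
  have hone : u.denom = 1 := (RatFunc.monic_denom u).eq_one_of_isUnit
    (isUnit_of_isCoprime_of_mul_pow_sub_eq hp u.isCoprime_num_denom key)
  rw [hone] at key
  exact X_mul_pow_sub_ne hp hab c u.num (by simpa using key)

/-- The classes of `X` and `R` are independent in the group of nonzero rational functions modulo
constants and `N`-th powers: `X ^ i * R ^ j` is a constant times an `N`-th power only for the
trivial exponents `N ∣ i` and `N ∣ j`. Denominators are cleared, to stay within polynomials. -/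
def KummerIndependent (N : ℕ) (R : E[X]) : Prop :=
  ∀ (i j : ℕ) (c : E) (w₁ w₂ : E[X]), c ≠ 0 → w₁ ≠ 0 → w₂ ≠ 0 →
    X ^ i * R ^ j * w₂ ^ N = C c * w₁ ^ N → N ∣ i ∧ N ∣ j

theorem KummerIndependent.dvd_of_pow_eq {N : ℕ} {R : E[X]} (h : KummerIndependent N R) (hN : 0 < N)
    (hR : R ≠ 0) {c₁ c₂ : E} (hc₁ : c₁ ≠ 0) (hc₂ : c₂ ≠ 0) {i j : ℕ} {u : RatFunc E}
    (hu : u ^ N = algebraMap E[X] _ ((C c₁ * X ^ (N - 1)) ^ i * (C c₂ * R ^ (N - 1)) ^ j)) :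
    N ∣ i ∧ N ∣ j := by
  have hd : algebraMap E[X] (RatFunc E) u.denom ≠ 0 := by simpa using u.denom_ne_zero
  have hu0 : u ≠ 0 := by
    rintro rfl
    rw [zero_pow hN.ne', eq_comm, map_eq_zero_iff _ (RatFunc.algebraMap_injective E)] at hu
    simp [hc₁, hc₂, hR] at hu
  have hnum : u.num ^ N =
      (C c₁ * X ^ (N - 1)) ^ i * (C c₂ * R ^ (N - 1)) ^ j * u.denom ^ N := by
    apply RatFunc.algebraMap_injective E
    rw [map_mul, ← hu, map_pow, map_pow, (div_eq_iff hd).1 u.num_div_denom, mul_pow]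
  refine h i j (c₁ ^ i * c₂ ^ j) (X ^ i * R ^ j * u.denom) u.num (by simp [hc₁, hc₂])
    (by simp [hR, u.denom_ne_zero]) (u.num_ne_zero hu0) ?_
  obtain ⟨N, rfl⟩ : ∃ n, N = n + 1 := ⟨N - 1, by lia⟩
  rw [hnum, C_mul, C_pow, C_pow, Nat.add_sub_cancel]
  ring

end RationalFunctions

section FunctionField

theorem linearIndependent_reducedMonomial_mul {A k Ω : Type*} [CommRing A] [Field k] [Field Ω]
    [Algebra A k] [Algebra k Ω] [Algebra A Ω] [IsScalarTower A k Ω] [FaithfulSMul A k] {N p : ℕ}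
    {y₁ y₂ z : Ω} (h : LinearIndependent k (reducedMonomial y₁ y₂ z : ReducedExponent N p → Ω))
    {c : k} (hc : c ≠ 0) :
    LinearIndependent A
      (reducedMonomial y₁ y₂ (algebraMap k Ω c * z) : ReducedExponent N p → Ω) := by
  have hu := h.units_smul fun t => Units.mk0 c hc ^ (t.2 : ℕ)
  convert! hu.restrict_scalars' A using 1
  funext t
  simp only [reducedMonomial, Pi.smul_apply', Units.smul_def, Units.val_pow_eq_pow_val,
    Units.val_mk0, Algebra.smul_def, map_pow]
  ring

variable {E : Type*} [Field E] [Fintype E] {N : ℕ}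

theorem natCast_ne_zero_of_dvd_card_sub_one (h : N ∣ Fintype.card E - 1) : (N : E) ≠ 0 := by
  intro hN
  obtain ⟨m, hm⟩ := h
  have : ((Fintype.card E - 1 : ℕ) : E) = -1 := by
    rw [Nat.cast_pred Fintype.card_pos, FiniteField.cast_card_eq_zero, zero_sub]
  rw [hm, Nat.cast_mul, hN, zero_mul] at this
  exact one_ne_zero (neg_eq_zero.1 this.symm)

variable {Ω : Type*} [Field Ω] [Algebra (RatFunc E) Ω] [IsGalois (RatFunc E) Ω] [Algebra E[X] Ω]
  [IsScalarTower E[X] (RatFunc E) Ω] {p : ℕ} [Fact p.Prime] [CharP E p] {R : E[X]} {c₁ c₂ a b : E}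

theorem linearIndependent_reducedMonomial_of_pow_eq (hN : N ∣ Fintype.card E - 1) (hR : R ≠ 0)
    (hc₁ : c₁ ≠ 0) (hc₂ : c₂ ≠ 0) (hab : a ≠ 0 ∨ b ≠ 0) (hkum : KummerIndependent N R) {c : E}
    {y₁ y₂ z : Ω} (hy₁ : y₁ ^ N = algebraMap E[X] _ (C c₁ * X ^ (N - 1)))
    (hy₂ : y₂ ^ N = algebraMap E[X] _ (C c₂ * R ^ (N - 1)))
    (hz : z ^ p = z + algebraMap (RatFunc E) _ (.C c - (.C a * .X + .C b / .X))) :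
    LinearIndependent (RatFunc E) (reducedMonomial y₁ y₂ z : ReducedExponent N p → Ω) := by
  have hp := (Fact.out : p.Prime)
  have hN0 : 0 < N := Nat.pos_of_ne_zero fun h =>
    natCast_ne_zero_of_dvd_card_sub_one hN (by rw [h, Nat.cast_zero])
  have := charP_of_injective_algebraMap (algebraMap (RatFunc E) Ω).injective p
  have hinj : Function.Injective (algebraMap E[X] Ω) := by
    rw [IsScalarTower.algebraMap_eq E[X] (RatFunc E)]
    exact (algebraMap (RatFunc E) Ω).injective.comp (RatFunc.algebraMap_injective E)
  have ne_zero {y : Ω} {K : E[X]} (hK : K ≠ 0) (hy : y ^ N = algebraMap E[X] _ K) : y ≠ 0 := by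
    rintro rfl
    rw [zero_pow hN0.ne', eq_comm, map_eq_zero_iff _ hinj] at hy
    exact hK hy
  have hy₁0 := ne_zero (by simp [hc₁]) hy₁
  have hy₂0 := ne_zero (by simp [hc₂, hR]) hy₂
  refine linearIndependent_kummer_artinSchreier hy₁0 hy₂0
    (exists_apply_eq_mul_of_pow_eq (RatFunc.C : E →+* _) hN hy₁0
      (hy₁.trans (IsScalarTower.algebraMap_apply _ (RatFunc E) _ _)))
    (exists_apply_eq_mul_of_pow_eq (RatFunc.C : E →+* _) hN hy₂0
      (hy₂.trans (IsScalarTower.algebraMap_apply _ (RatFunc E) _ _)))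
    (exists_apply_eq_add_natCast_of_pow_char_eq hz) (Algebra.IsIntegral.isIntegral z) ?_ ?_
  · by_contra! hfix
    obtain ⟨u, rfl⟩ := (InfiniteGalois.mem_range_algebraMap_iff_fixed z).2 hfix
    rw [← map_pow, ← map_add] at hz
    exact ratFunc_pow_ne_self_add hp.two_le hab c u ((algebraMap (RatFunc E) _).injective hz)
  · intro i j hfix
    obtain ⟨u, hu⟩ := (InfiniteGalois.mem_range_algebraMap_iff_fixed _).2 hfix
    refine hkum.dvd_of_pow_eq hN0 hR hc₁ hc₂ (u := u) ((algebraMap (RatFunc E) Ω).injective ?_)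
    rw [map_pow, hu, ← IsScalarTower.algebraMap_apply, map_mul, map_pow _ _ i, map_pow _ _ j,
      ← hy₁, ← hy₂]
    ring

variable (Ω) [IsSepClosed Ω]

theorem exists_linearIndependent_kummer_artinSchreier (hN : N ∣ Fintype.card E - 1) (hR : R ≠ 0)
    (hc₁ : c₁ ≠ 0) (hc₂ : c₂ ≠ 0) (hab : a ≠ 0 ∨ b ≠ 0) (hkum : KummerIndependent N R) {c c' : E}
    (hc : c ≠ 0) :
    ∃ y₁ y₂ z : Ω,
      y₁ ^ N = algebraMap E[X] _ (C c₁ * X ^ (N - 1)) ∧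
      y₂ ^ N = algebraMap E[X] _ (C c₂ * R ^ (N - 1)) ∧
      z ^ p = algebraMap E[X] _ ((C c * X) ^ (p - 1)) * z +
        algebraMap E[X] _ ((C c * X) ^ (p - 1) * (C c' * X - C c * (C a * X ^ 2 + C b))) ∧
      LinearIndependent E[X] (reducedMonomial y₁ y₂ z : ReducedExponent N p → Ω) := by
  have := charP_of_injective_algebraMap (algebraMap (RatFunc E) Ω).injective p
  have : NeZero (N : Ω) := ⟨by
    simpa using (map_ne_zero ((algebraMap (RatFunc E) Ω).comp RatFunc.C)).2
      (natCast_ne_zero_of_dvd_card_sub_one hN)⟩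
  obtain ⟨y₁, hy₁⟩ := IsSepClosed.exists_pow_nat_eq (algebraMap E[X] Ω (C c₁ * X ^ (N - 1))) N
  obtain ⟨y₂, hy₂⟩ := IsSepClosed.exists_pow_nat_eq (algebraMap E[X] Ω (C c₂ * R ^ (N - 1))) N
  obtain ⟨z, hz⟩ := exists_pow_char_eq_self_add p
    (algebraMap (RatFunc E) Ω (.C (c' / c) - (.C a * .X + .C b / .X)))
  have hcX : (.C c * .X : RatFunc E) ≠ 0 := by simpa [RatFunc.X_ne_zero] using hc
  refine ⟨y₁, y₂, algebraMap (RatFunc E) _ (.C c * .X) * z, hy₁, hy₂, ?_,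
    linearIndependent_reducedMonomial_mul
      (linearIndependent_reducedMonomial_of_pow_eq hN hR hc₁ hc₂ hab hkum hy₁ hy₂ hz) hcX⟩
  have hX : (RatFunc.X : RatFunc E) ≠ 0 := RatFunc.X_ne_zero
  have hcC : (RatFunc.C c : RatFunc E) ≠ 0 := left_ne_zero_of_mul hcX
  have key : (.C c * .X) * (.C (c' / c) - (.C a * .X + .C b / .X)) =
      algebraMap E[X] (RatFunc E) (C c' * X - C c * (C a * X ^ 2 + C b)) := by
    simp only [map_sub, map_mul, map_add, map_pow, map_div₀, RatFunc.algebraMap_C,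
      RatFunc.algebraMap_X]
    field_simp
  have tower (f : E[X]) : algebraMap E[X] Ω f = algebraMap (RatFunc E) Ω (algebraMap _ _ f) :=
    IsScalarTower.algebraMap_apply _ _ _ _
  rw [mul_pow, hz, tower, tower, map_mul _ (_ ^ _), ← key,
    ← pow_sub_one_mul (Fact.out : p.Prime).ne_zero (algebraMap (RatFunc E) Ω _)]
  simp only [map_mul, map_pow, RatFunc.algebraMap_C, RatFunc.algebraMap_X]
  ring

end FunctionField

section HalfTrace

variable {E : Type*} [Field E] {p r : ℕ}

/-- At a point `x` with `g.eval x = x * y` this polynomial takes the value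
`x ^ (p ^ r + 1) * ∑ i < r, y ^ p ^ i`: half of the trace of `y` from the field with `p ^ (2 * r)`
elements to its prime field, with denominators cleared. -/
noncomputable def halfTrace (p r : ℕ) (g : E[X]) : E[X] :=
  X * ∑ i ∈ range r, X ^ (p ^ r - p ^ i) * g ^ p ^ i

theorem eval_halfTrace (hp : 0 < p) {g : E[X]} {x y : E} (hg : g.eval x = x * y) :
    (halfTrace p r g).eval x = x ^ (p ^ r + 1) * ∑ i ∈ range r, y ^ p ^ i := by
  simp only [halfTrace, eval_mul, eval_X, eval_finsetSum, eval_pow, hg, pow_succ', mul_assoc,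
    mul_sum]
  refine sum_congr rfl fun i hi => ?_
  have hi' : p ^ i ≤ p ^ r := Nat.pow_le_pow_right hp (mem_range.1 hi).le
  rw [mul_pow, ← mul_assoc (x ^ _), ← pow_add, Nat.sub_add_cancel hi']

theorem natDegree_halfTrace_le (hp : 0 < p) {g : E[X]} (hg : g.natDegree ≤ 2) :
    (halfTrace p r g).natDegree ≤ 3 * p ^ r := by
  have hpow : 0 < p ^ r := pow_pos hp r
  have hsum : (∑ i ∈ range r, X ^ (p ^ r - p ^ i) * g ^ p ^ i).natDegree ≤ 2 * p ^ r := by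
    refine natDegree_sum_le_of_forall_le _ _ fun i hi => natDegree_mul_le.trans ?_
    have hi' : p ^ i ≤ p ^ r := Nat.pow_le_pow_right hp (mem_range.1 hi).le
    have := natDegree_pow_le.trans (Nat.mul_le_mul_left (p ^ i) hg)
    rw [natDegree_X_pow]
    lia
  refine natDegree_mul_le.trans ?_
  rw [natDegree_X]
  lia

variable [Fact p.Prime] [CharP E p]

theorem halfTrace_pow_char (g : E[X]) :
    halfTrace p r g ^ p = (X * X ^ p ^ r) ^ (p - 1) *
      (halfTrace p r g + X * g ^ p ^ r - X ^ p ^ r * g) := by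
  have hp := (Fact.out : p.Prime)
  let G (i : ℕ) : E[X] := X ^ (p ^ r - p ^ i) * g ^ p ^ i
  have hG (i : ℕ) (hi : i ∈ range r) : G i ^ p = (X ^ p ^ r) ^ (p - 1) * G (i + 1) := by
    have h₁ : p ^ (i + 1) ≤ p ^ r := Nat.pow_le_pow_right hp.pos (mem_range.1 hi)
    have h₂ : p ^ r ≤ p ^ r * p := Nat.le_mul_of_pos_right _ hp.pos
    rw [mul_pow, ← pow_mul, ← pow_mul, ← pow_succ, ← mul_assoc, ← pow_mul, ← pow_add]
    congr 2
    rw [Nat.sub_mul, ← pow_succ, Nat.mul_sub, mul_one]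
    lia
  have shift : ∑ i ∈ range r, G (i + 1) = ∑ i ∈ range r, G i + G r - G 0 := by
    rw [← sum_range_succ, sum_range_succ', add_sub_cancel_right]
  have hGr : G r = g ^ p ^ r := by simp [G]
  have hG0 : X * G 0 = X ^ p ^ r * g := by
    simp only [G, pow_zero, pow_one]
    rw [← mul_assoc, ← pow_succ', Nat.sub_add_cancel (Nat.one_le_pow _ _ hp.pos)]
  calc halfTrace p r g ^ p
      = X ^ p * ∑ i ∈ range r, (X ^ p ^ r) ^ (p - 1) * G (i + 1) := by
        rw [halfTrace, mul_pow, sum_pow_char, sum_congr rfl hG]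
    _ = (X * X ^ p ^ r) ^ (p - 1) * (X * ∑ i ∈ range r, G i + X * G r - X * G 0) := by
        rw [← mul_sum, shift, ← pow_sub_one_mul hp.ne_zero, mul_pow]; ring
    _ = _ := by rw [hGr, hG0]; rfl

theorem eval_halfTrace_pow [Fintype E] (hE : Fintype.card E = (p ^ r) ^ 2) {g : E[X]} {x y v : E}
    (hg : g.eval x = x * y) (hv : ∑ i ∈ range (2 * r), y ^ p ^ i = v) :
    (halfTrace p r g).eval x ^ p ^ r = v * x ^ (p ^ r + 1) - (halfTrace p r g).eval x := by
  have hsplit : ∑ i ∈ range r, y ^ p ^ i + (∑ i ∈ range r, y ^ p ^ i) ^ p ^ r = v := by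
    rw [← hv, two_mul, sum_range_add, sum_pow_char_pow]
    simp only [← pow_mul, ← pow_add, add_comm]
  have hnorm : (x ^ (p ^ r + 1)) ^ p ^ r = x ^ (p ^ r + 1) := by
    rw [← pow_mul, add_mul, one_mul, ← sq, ← hE, pow_add, FiniteField.pow_card, ← pow_succ']
  rw [eval_halfTrace (Fact.out : p.Prime).pos hg, mul_pow, hnorm, ← hsplit]
  ring

end HalfTrace

section FrobeniusRelations

variable {E : Type*} [Field E] {p r : ℕ} [Fact p.Prime]

theorem mk_pow_eq_mk_C_eval_pow [CharP E p] (x₀ : E) (f : E[X]) :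
    Ideal.Quotient.mk (Ideal.span {(X - C x₀) ^ p ^ r}) f ^ p ^ r =
      Ideal.Quotient.mk _ (C (f.eval x₀ ^ p ^ r)) := by
  rw [← map_pow, Ideal.Quotient.eq, Ideal.mem_span_singleton, C_pow, ← sub_pow_char_pow]
  exact pow_dvd_pow_of_dvd X_sub_C_dvd_sub_C_eval _

theorem eq_zero_of_mk_eq_zero {x₀ : E} {n : ℕ} {f : E[X]} (hf : f.natDegree < n)
    (h : Ideal.Quotient.mk (Ideal.span {(X - C x₀) ^ n}) f = 0) : f = 0 := by
  rw [Ideal.Quotient.eq_zero_iff_dvd] at h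
  exact eq_zero_of_dvd_of_natDegree_lt h (by simpa using hf)

variable {S : Type*} [CommRing S] {φ : E[X] →+* S} {x₀ : E}

theorem map_pow_pow_eq_of_frobenius (hφ : ∀ f, φ f ^ p ^ r = φ (C (f.eval x₀ ^ p ^ r))) {N : ℕ}
    (hN : 0 < N) (hNs : N ∣ p ^ r - 1) (f : E[X]) :
    φ (f ^ ((p ^ r - 1) / N + 1)) ^ N = φ (C (f.eval x₀ ^ p ^ r) * f ^ (N - 1)) := by
  have hexp : ((p ^ r - 1) / N + 1) * N = p ^ r + (N - 1) := by
    have := Nat.one_le_pow r p (Fact.out : p.Prime).pos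
    rw [add_mul, Nat.div_mul_cancel hNs]
    lia
  rw [map_pow, ← pow_mul, hexp, pow_add, hφ, map_mul, map_pow φ f]

theorem map_halfTrace_pow_of_frobenius [CharP E p]
    (hφ : ∀ f, φ f ^ p ^ r = φ (C (f.eval x₀ ^ p ^ r)))
    (g : E[X]) :
    φ (halfTrace p r g) ^ p =
      φ ((C (x₀ ^ p ^ r) * X) ^ (p - 1)) * φ (halfTrace p r g) +
      φ ((C (x₀ ^ p ^ r) * X) ^ (p - 1) * (C (g.eval x₀ ^ p ^ r) * X - C (x₀ ^ p ^ r) * g)) := by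
  have hX := hφ X
  rw [eval_X] at hX
  rw [← map_pow, halfTrace_pow_char]
  simp only [map_mul, map_sub, map_add, map_pow] at hX ⊢
  rw [hX, hφ g]
  simp only [map_pow]
  ring

end FrobeniusRelations

theorem pow_pow_eq_mul_pow_of_pow_eq {M : Type*} [Monoid M] {N s : ℕ} (hN : 0 < N) (hs : 0 < s)
    (hNs : N ∣ s - 1) {y u : M} (hu : y ^ ((s ^ 2 - 1) / N) = u) :
    (y ^ ((s - 1) / N + 1)) ^ s = u * y ^ (s - (s - 1) / N) := by
  obtain ⟨c, hc⟩ := hNs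
  obtain rfl : s = N * c + 1 := by lia
  have hsq : (N * c + 1) ^ 2 - 1 = N * (c * (N * c + 2)) := by
    rw [Nat.sub_eq_iff_eq_add (Nat.one_le_pow _ _ hs)]; ring
  have hcN : c ≤ N * c := Nat.le_mul_of_pos_left _ hN
  rw [← hu, ← pow_mul, ← pow_add, hsq, hc, Nat.mul_div_cancel_left _ hN,
    Nat.mul_div_cancel_left _ hN]
  congr 1
  zify [hcN.trans (Nat.le_succ _)]
  ring

theorem natDegree_reducedMonomial_le {A : Type*} [CommSemiring A] {N p a b c : ℕ} {f₁ f₂ f₃ : A[X]}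
    (h₁ : f₁.natDegree ≤ a) (h₂ : f₂.natDegree ≤ b) (h₃ : f₃.natDegree ≤ c)
    (t : ReducedExponent N p) :
    (reducedMonomial f₁ f₂ f₃ t).natDegree ≤ N * a + N * b + p * c := by
  refine natDegree_mul_le.trans (add_le_add (natDegree_mul_le.trans (add_le_add ?_ ?_)) ?_)
  · exact natDegree_pow_le.trans (Nat.mul_le_mul t.1.1.2.le h₁)
  · exact natDegree_pow_le.trans (Nat.mul_le_mul t.1.2.2.le h₂)
  · exact natDegree_pow_le.trans (Nat.mul_le_mul t.2.2.le h₃)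

section CharacterFibre

variable {E : Type*} [Field E] [Fintype E] {p r N dR L M : ℕ} {R : E[X]}
  {a b u₁ u₂ v : E}

/-- The points `x` over the field with `p ^ (2 * r)` elements at which `x` and `R x` lie in
prescribed cosets of the `N`-th powers and `a * x + b / x` has prescribed absolute trace `v`. The
coset of `y` is recorded by `y ^ ((p ^ (2 * r) - 1) / N)`. -/
noncomputable def characterFibre (p r N : ℕ) (R : E[X]) (a b u₁ u₂ v : E) : Finset E :=
  {x | x ≠ 0 ∧ R.eval x ≠ 0 ∧ x ^ (((p ^ r) ^ 2 - 1) / N) = u₁ ∧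
    R.eval x ^ (((p ^ r) ^ 2 - 1) / N) = u₂ ∧ ∑ i ∈ range (2 * r), (a * x + b / x) ^ p ^ i = v}

variable [Fact p.Prime] [CharP E p]

theorem eq_zero_of_dvd_sum_mul_reducedMonomial (hE : Fintype.card E = (p ^ r) ^ 2) (hN : 0 < N)
    (hNs : N ∣ p ^ r - 1) (hR : R ≠ 0) (hRd : R.natDegree ≤ dR) (hab : a ≠ 0 ∨ b ≠ 0)
    (hkum : KummerIndependent N R) {x₀ : E} (hx₀ : x₀ ≠ 0) (hRx₀ : R.eval x₀ ≠ 0) (hL : 0 < L)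
    (hLs : N * N * p * (L + 3 * (N * (dR + 1) + p + 1)) ≤ p ^ r) {n : ReducedExponent N p → E[X]}
    (hn : ∀ t, (n t).degree < L)
    (hdvd : (X - C x₀) ^ p ^ r ∣ ∑ t, n t * reducedMonomial (X ^ ((p ^ r - 1) / N + 1))
      (R ^ ((p ^ r - 1) / N + 1)) (halfTrace p r (C a * X ^ 2 + C b)) t) : n = 0 := by
  have hp := (Fact.out : p.Prime)
  have : NeZero N := ⟨hN.ne'⟩
  have : NeZero p := ⟨hp.ne_zero⟩
  have hNE : N ∣ Fintype.card E - 1 :=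
    hE ▸ hNs.trans (by simpa using Nat.sub_dvd_pow_sub_pow (p ^ r) 1 2)
  have hφ := mk_pow_eq_mk_C_eval_pow (p := p) (r := r) x₀
  obtain ⟨y₁, y₂, z, hy₁, hy₂, hz, hli⟩ :=
    exists_linearIndependent_kummer_artinSchreier (SeparableClosure (RatFunc E)) hNE hR
      (pow_ne_zero (p ^ r) hx₀) (pow_ne_zero (p ^ r) hRx₀) hab hkum
      (c' := (a * x₀ ^ 2 + b) ^ p ^ r) (pow_ne_zero (p ^ r) hx₀)
  have hX := map_pow_pow_eq_of_frobenius hφ hN hNs X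
  have hw := map_halfTrace_pow_of_frobenius hφ (C a * X ^ 2 + C b)
  simp only [eval_add, eval_mul, eval_C, eval_pow, eval_X] at hX hw
  have hNd : N * dR + N ≤ N * (dR + 1) + p + 1 := by lia
  have hcXp : ((C (x₀ ^ p ^ r) * X : E[X]) ^ (p - 1)).natDegree ≤ (p - 1) * 1 :=
    natDegree_pow_le_of_le _ ((natDegree_C_mul_le _ _).trans natDegree_X_le)
  refine eq_zero_of_map_sum_reducedMonomial_eq_zero (d := N * (dR + 1) + p + 1) (L := L - 1)
    ?_ ?_ (by lia) ?_ hy₁ hy₂ hz hli (fun f hf => eq_zero_of_mk_eq_zero (hf.trans_lt ?_)) hX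
    (map_pow_pow_eq_of_frobenius hφ hN hNs R) hw (fun t => ?_) ?_
  · exact (natDegree_C_mul_X_pow_le _ _).trans (by lia)
  · refine (natDegree_C_mul_le _ _).trans (natDegree_pow_le.trans ?_)
    exact (Nat.mul_le_mul (Nat.sub_le N 1) hRd).trans (by lia)
  · have : (C ((a * x₀ ^ 2 + b) ^ p ^ r) * X -
        C (x₀ ^ p ^ r) * (C a * X ^ 2 + C b)).natDegree ≤ 2 := by compute_degree
    exact natDegree_mul_le.trans (by have := hp.pos; lia)
  · have hD : 0 < N * N * p := mul_pos (mul_pos hN hN) hp.pos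
    exact (Nat.mul_lt_mul_of_pos_left (by lia) hD).trans_le hLs
  · rw [natDegree_le_iff_coeff_eq_zero]
    exact fun k hk => (degree_lt_iff_coeff_zero _ _).1 (hn t) k (by lia)
  · rw [← Ideal.Quotient.eq_zero_iff_dvd] at hdvd
    simpa only [reducedMonomial, map_sum, map_mul, map_pow] using hdvd

theorem card_characterFibre_le (hE : Fintype.card E = (p ^ r) ^ 2) (hN : 0 < N)
    (hNs : N ∣ p ^ r - 1) (hR : R ≠ 0) (hRd : R.natDegree ≤ dR) (hab : a ≠ 0 ∨ b ≠ 0)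
    (hkum : KummerIndependent N R) (hL : 0 < L)
    (hLs : N * N * p * (L + 3 * (N * (dR + 1) + p + 1)) ≤ p ^ r)
    (hcount : p ^ r * L + (N + N * dR + 3 * p) * p ^ r + M < L * M * (N * N * p)) :
    #(characterFibre p r N R a b u₁ u₂ v) ≤ L + (N + N * dR + 3 * p) * p ^ r + M * p ^ r := by
  obtain hempty | ⟨x₀, hx₀⟩ := (characterFibre p r N R a b u₁ u₂ v).eq_empty_or_nonempty
  · simp [hempty]
  have hp := (Fact.out : p.Prime)
  have hs : 0 < p ^ r := pow_pos hp.pos r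
  have hg : (C a * X ^ 2 + C b).natDegree ≤ 2 := by compute_degree
  have htrace := natDegree_halfTrace_le (r := r) hp.pos hg
  have hquot : (p ^ r - 1) / N + 1 ≤ p ^ r := by
    have := Nat.div_le_self (p ^ r - 1) N
    lia
  have hcompl : p ^ r - (p ^ r - 1) / N ≤ p ^ r := Nat.sub_le _ _
  have hRpow {k : ℕ} (hk : k ≤ p ^ r) : (R ^ k).natDegree ≤ p ^ r * dR :=
    natDegree_pow_le.trans (Nat.mul_le_mul hk hRd)
  have hB : (N + N * dR + 3 * p) * p ^ r = N * p ^ r + N * (p ^ r * dR) + p * (3 * p ^ r) := by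
    ring
  simp only [characterFibre, mem_filter_univ] at hx₀
  refine card_le_of_stepanov hE
    (W := reducedMonomial (X ^ ((p ^ r - 1) / N + 1)) (R ^ ((p ^ r - 1) / N + 1))
      (halfTrace p r (C a * X ^ 2 + C b)))
    (V := reducedMonomial (C u₁ * X ^ (p ^ r - (p ^ r - 1) / N))
      (C u₂ * R ^ (p ^ r - (p ^ r - 1) / N))
      (C v * X ^ (p ^ r + 1) - halfTrace p r (C a * X ^ 2 + C b)))
    (fun t => hB ▸ natDegree_reducedMonomial_le (by rwa [natDegree_X_pow]) (hRpow hquot) htrace t)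
    (fun t => hB ▸ natDegree_reducedMonomial_le ((natDegree_C_mul_X_pow_le _ _).trans hcompl)
      ((natDegree_C_mul_le _ _).trans (hRpow hcompl)) ?_ t) x₀ (fun x hx t => ?_)
    (fun n hn hdvd => congrFun <| eq_zero_of_dvd_sum_mul_reducedMonomial hE hN hNs hR hRd hab hkum
      hx₀.1 hx₀.2.1 hL hLs hn hdvd) (by simpa using hcount)
  · simp only [characterFibre, mem_filter_univ] at hx
    obtain ⟨hx0, -, hu₁, hu₂, hv⟩ := hx
    have hgx : (C a * X ^ 2 + C b).eval x = x * (a * x + b / x) := by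
      simp only [eval_add, eval_mul, eval_C, eval_pow, eval_X]
      field_simp
    simp only [reducedMonomial, eval_mul, eval_pow, eval_sub, eval_C, eval_X,
      ← pow_pow_eq_mul_pow_of_pow_eq hN hs hNs hu₁, ← pow_pow_eq_mul_pow_of_pow_eq hN hs hNs hu₂,
      ← eval_halfTrace_pow hE hgx hv]
    ring
  · refine (natDegree_sub_le _ _).trans (max_le ((natDegree_C_mul_X_pow_le _ _).trans ?_) htrace)
    lia

end CharacterFibre

universe u

theorem lt_div_of_stepanov_threshold {s D d B : ℕ} (hD : 0 < D)
    (hs : (D * (3 * d + 1) + 1) * (3 * d + 3 + B) < s) : 3 * d < s / D := by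
  rw [← Nat.add_one_le_iff, Nat.le_div_iff_mul_le hD]
  nlinarith

theorem stepanov_count_lt {s D d B : ℕ} (hD : 0 < D)
    (hs : (D * (3 * d + 1) + 1) * (3 * d + 3 + B) < s) :
    s * (s / D - 3 * d) + B * s + (s / D + (3 * d + 3 + B)) <
      (s / D - 3 * d) * (s / D + (3 * d + 3 + B)) * D := by
  obtain ⟨L, hL⟩ := Nat.exists_eq_add_of_le' (lt_div_of_stepanov_threshold hD hs).le
  have hlower : D * (L + 3 * d) ≤ s := hL ▸ Nat.mul_div_le s D
  have hupper : s ≤ D * L + D * (3 * d + 1) := by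
    have := Nat.lt_mul_div_succ s hD
    rw [hL] at this
    linarith
  rw [hL, Nat.add_sub_cancel]
  obtain ⟨M, hM⟩ : ∃ M, M = 3 * d + 3 + B := ⟨_, rfl⟩
  rw [← hM] at hs ⊢
  have hslack : (L + 3 * d + M) * (D * (3 * d + 1) + 1) + B * s < s * M := by
    calc (L + 3 * d + M) * (D * (3 * d + 1) + 1) + B * s
        ≤ (L + 3 * d) * (D * (3 * d + 1) + D) + (D * (3 * d + 1) + 1) * M + B * s := by
          rw [add_mul _ M, mul_comm M]; gcongr; exact hD
      _ = D * (L + 3 * d) * (3 * d + 2) + (D * (3 * d + 1) + 1) * M + B * s := by ring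
      _ < s * (3 * d + 2) + s + B * s :=
        Nat.add_lt_add_right (add_lt_add_of_le_of_lt (Nat.mul_le_mul_right _ hlower) hs) _
      _ = s * M := by rw [hM]; ring
  have hprod : s * (L + 3 * d + M) ≤ (D * L + D * (3 * d + 1)) * (L + 3 * d + M) :=
    Nat.mul_le_mul_right _ hupper
  linarith [Nat.zero_le (s * d)]

theorem exists_card_characterFibre_le (p N dR : ℕ) [Fact p.Prime] (hN : 0 < N) :
    ∃ C s₀ : ℕ, ∀ (E : Type u) [Field E] [Fintype E] [CharP E p] (r : ℕ) (R : E[X])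
      (a b u₁ u₂ v : E), Fintype.card E = (p ^ r) ^ 2 → N ∣ p ^ r - 1 → R ≠ 0 →
      R.natDegree ≤ dR → (a ≠ 0 ∨ b ≠ 0) → KummerIndependent N R → s₀ < p ^ r →
      N * N * p * #(characterFibre p r N R a b u₁ u₂ v) ≤ (p ^ r) ^ 2 + C * p ^ r := by
  have hD : 0 < N * N * p := mul_pos (mul_pos hN hN) (Fact.out : p.Prime).pos
  set D := N * N * p
  set d := N * (dR + 1) + p + 1
  set B := N + N * dR + 3 * p
  refine ⟨D * (1 + B + (3 * d + 3 + B)), (D * (3 * d + 1) + 1) * (3 * d + 3 + B), ?_⟩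
  intro E _ _ _ r R a b u₁ u₂ v hE hNs hR hRd hab hkum hs₀
  have hd := lt_div_of_stepanov_threshold hD hs₀
  have hdiv : D * (p ^ r / D) ≤ p ^ r := Nat.mul_div_le _ D
  have hcard := card_characterFibre_le (u₁ := u₁) (u₂ := u₂) (v := v) hE hN hNs hR hRd hab hkum
    (Nat.sub_pos_of_lt hd) (by rwa [Nat.sub_add_cancel hd.le]) (stepanov_count_lt hD hs₀)
  have hL : p ^ r / D - 3 * d ≤ p ^ r := (Nat.sub_le _ _).trans (Nat.div_le_self _ _)
  calc D * #(characterFibre p r N R a b u₁ u₂ v)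
      ≤ D * (p ^ r + B * p ^ r + (p ^ r / D + (3 * d + 3 + B)) * p ^ r) :=
        Nat.mul_le_mul_left _ (hcard.trans (by gcongr))
    _ = D * (p ^ r / D) * p ^ r + D * (1 + B + (3 * d + 3 + B)) * p ^ r := by ring
    _ ≤ (p ^ r) ^ 2 + D * (1 + B + (3 * d + 3 + B)) * p ^ r := by rw [sq]; gcongr

section Nonexceptional

/-- `f` is a constant times a power of `X` times a `d`-th power. -/
def IsPowUpToMonomial {F : Type*} [Field F] (d : ℕ) (f : F[X]) : Prop :=
  ∃ (c : F) (i : ℕ) (w : F[X]), f = C c * X ^ i * w ^ d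

/-- The numerator-denominator form of the condition that the fraction `f₁ / f₂` is in lowest terms
and not of the form `c * X ^ i * h ^ d` with `d > 1` a divisor of `N`. -/
structure IsNonexceptional {F : Type*} [Field F] (f₁ f₂ : F[X]) (N : ℕ) : Prop where
  num_ne_zero : f₁ ≠ 0
  denom_ne_zero : f₂ ≠ 0
  isCoprime : IsCoprime f₁ f₂
  not_isPowUpToMonomial : ∀ d, 1 < d → d ∣ N → ¬ (IsPowUpToMonomial d f₁ ∧ IsPowUpToMonomial d f₂)

theorem isPowUpToMonomial_of_forall_dvd_multiplicity {F : Type*} [Field F] {d : ℕ} {f : F[X]}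
    (hf : f ≠ 0)
    (h : ∀ P : F[X], Irreducible P → P.Monic → P ≠ X → d ∣ multiplicity P f) :
    IsPowUpToMonomial d f := by
  let s := normalizedFactors f
  obtain ⟨u, hu⟩ : ∃ u, s.filter (X ≠ ·) = d • u := by
    refine Multiset.exists_smul_of_dvd_count _ fun P hP => ?_
    rw [Multiset.mem_filter] at hP
    have hirr := irreducible_of_normalized_factor P hP.1
    have hnorm := normalize_normalized_factor P hP.1
    have hcount := emultiplicity_eq_count_normalizedFactors hirr hf
    rw [hnorm] at hcount
    rw [Multiset.count_filter_of_pos (p := (X ≠ ·)) hP.2,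
      ← multiplicity_eq_of_emultiplicity_eq_some hcount]
    exact h P hirr (hnorm ▸ monic_normalize hirr.ne_zero) hP.2.symm
  have hprod : s.prod = X ^ s.count X * u.prod ^ d := by
    rw [← Multiset.filter_add_not (X = ·) s, Multiset.prod_add, hu, Multiset.prod_nsmul,
      Multiset.filter_eq, Multiset.prod_replicate]
    congr 2
    rw [Multiset.count_add, Multiset.count_replicate_self, ← hu,
      Multiset.count_filter_of_neg (by simp), add_zero]
  obtain ⟨v, hv⟩ : Associated s.prod f := prod_normalizedFactors hf
  obtain ⟨c, -, hc⟩ := Polynomial.isUnit_iff.1 v.isUnit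
  exact ⟨c, s.count X, u.prod, by rw [← hv, hprod, ← hc]; ring⟩

theorem rootMultiplicity_pow_eq {A : Type*} [Field A] (f : A[X]) (k : ℕ) (β : A) :
    (f ^ k).rootMultiplicity β = k * f.rootMultiplicity β := by
  rw [← count_roots, ← count_roots, roots_pow, Multiset.count_nsmul]

theorem rootMultiplicity_map_eq_multiplicity {F A : Type*} [Field F] [PerfectField F] [Field A]
    [Algebra F A] {P f : F[X]} (hP : Irreducible P) (hf : f ≠ 0) {β : A} (hβ : aeval β P = 0) :
    (f.map (algebraMap F A)).rootMultiplicity β = multiplicity P f := by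
  have hmap {g : F[X]} (hg : g ≠ 0) : g.map (algebraMap F A) ≠ 0 := Polynomial.map_ne_zero hg
  obtain ⟨g, hg, hPg⟩ :=
    (FiniteMultiplicity.of_not_isUnit hP.not_isUnit hf).exists_eq_pow_mul_and_not_dvd
  have hg₀ : g ≠ 0 := by rintro rfl; exact hPg (dvd_zero P)
  have hP₁ : (P.map (algebraMap F A)).rootMultiplicity β = 1 := by
    refine le_antisymm (rootMultiplicity_le_one_of_separable
      (PerfectField.separable_of_irreducible hP).map β) ?_
    rwa [Nat.one_le_iff_ne_zero, ← pos_iff_ne_zero, rootMultiplicity_pos (hmap hP.ne_zero), IsRoot,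
      eval_map_algebraMap]
  have hg₁ : (g.map (algebraMap F A)).rootMultiplicity β = 0 := by
    refine rootMultiplicity_eq_zero fun h => hPg ?_
    rw [IsRoot, eval_map_algebraMap] at h
    exact (Dvd.intro _ (minpoly.eq_of_irreducible hP hβ)).trans (minpoly.dvd F β h)
  conv_lhs => rw [hg]
  rw [Polynomial.map_mul, Polynomial.map_pow,
    rootMultiplicity_mul (mul_ne_zero (pow_ne_zero _ (hmap hP.ne_zero)) (hmap hg₀)),
    rootMultiplicity_pow_eq, hP₁, hg₁, mul_one, add_zero]

theorem dvd_rootMultiplicity_of_mul_pow_eq {A : Type*} [Field A] {N i j : ℕ} {R w₁ w₂ : A[X]}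
    {c : A} (hR : R ≠ 0) (hc : c ≠ 0) (hw₁ : w₁ ≠ 0) (hw₂ : w₂ ≠ 0)
    (h : X ^ i * R ^ j * w₂ ^ N = C c * w₁ ^ N) (β : A) :
    N ∣ i * (X : A[X]).rootMultiplicity β + j * R.rootMultiplicity β := by
  have hβ := congrArg (rootMultiplicity β) h
  have hXi : (X : A[X]) ^ i ≠ 0 := pow_ne_zero _ X_ne_zero
  rw [rootMultiplicity_mul (mul_ne_zero (mul_ne_zero hXi (pow_ne_zero _ hR)) (pow_ne_zero _ hw₂)),
    rootMultiplicity_mul (mul_ne_zero hXi (pow_ne_zero _ hR)),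
    rootMultiplicity_mul (mul_ne_zero (C_ne_zero.2 hc) (pow_ne_zero _ hw₁)), rootMultiplicity_C,
    zero_add, rootMultiplicity_pow_eq, rootMultiplicity_pow_eq, rootMultiplicity_pow_eq,
    rootMultiplicity_pow_eq] at hβ
  exact (Nat.dvd_add_left (dvd_mul_right _ _)).1 ⟨_, hβ⟩

theorem KummerIndependent.of_map {E A : Type*} [Field E] [Field A] (φ : E →+* A) {N : ℕ} {R : E[X]}
    (h : KummerIndependent N (R.map φ)) : KummerIndependent N R := by
  intro i j c w₁ w₂ hc hw₁ hw₂ heq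
  refine h i j (φ c) (w₁.map φ) (w₂.map φ) (by simpa) (Polynomial.map_ne_zero hw₁)
    (Polynomial.map_ne_zero hw₂) ?_
  simpa using congrArg (map φ) heq

theorem rootMultiplicity_X_eq_zero_of_monic {F A : Type*} [Field F] [Field A] [Algebra F A]
    {P : F[X]} (hP : Irreducible P) (hmonic : P.Monic) (hPX : P ≠ X) {β : A}
    (hβ : aeval β P = 0) : (X : A[X]).rootMultiplicity β = 0 := by
  refine rootMultiplicity_eq_zero fun h => hPX ?_
  rw [IsRoot, eval_X] at h
  subst h
  rw [← coeff_zero_eq_aeval_zero', map_eq_zero] at hβ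
  exact (eq_of_monic_of_associated hmonic monic_X
    ((irreducible_X.associated_of_dvd hP (X_dvd_iff.2 hβ)).symm))

theorem dvd_multiplicity_of_isCoprime {F : Type*} [Field F] {f₁ f₂ P : F[X]} {d N : ℕ}
    (hf₁ : f₁ ≠ 0) (hf₂ : f₂ ≠ 0) (hcop : IsCoprime f₁ f₂) (hP : Irreducible P) (hN : 0 < N)
    (hdN : d ∣ N) (h : d ∣ multiplicity P (f₁ * f₂ ^ (N - 1))) :
    d ∣ multiplicity P f₁ ∧ d ∣ multiplicity P f₂ := by
  have hfin {g : F[X]} (hg : g ≠ 0) := FiniteMultiplicity.of_not_isUnit hP.not_isUnit hg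
  rw [multiplicity_mul hP.prime (hfin (mul_ne_zero hf₁ (pow_ne_zero _ hf₂))),
    (hfin hf₂).multiplicity_pow hP.prime] at h
  by_cases hPf : P ∣ f₂
  · have hPf₁ : ¬ P ∣ f₁ := fun h' => hP.not_isUnit (hcop.isUnit_of_dvd' h' hPf)
    rw [multiplicity_eq_zero.2 hPf₁, zero_add] at h
    have hd : d.Coprime (N - 1) :=
      ((Nat.coprime_self_sub_right hN).2 (Nat.coprime_one_right N)).coprime_dvd_left hdN
    exact ⟨by simp [multiplicity_eq_zero.2 hPf₁], hd.dvd_of_dvd_mul_left h⟩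
  · rw [multiplicity_eq_zero.2 hPf, mul_zero, add_zero] at h
    exact ⟨h, by simp [multiplicity_eq_zero.2 hPf]⟩

variable {F : Type*} [Field F] {f₁ f₂ : F[X]} {N : ℕ}

theorem IsNonexceptional.mul_pow_ne_zero (h : IsNonexceptional f₁ f₂ N) (k : ℕ) :
    f₁ * f₂ ^ k ≠ 0 :=
  mul_ne_zero h.num_ne_zero (pow_ne_zero _ h.denom_ne_zero)

theorem IsNonexceptional.dvd_of_forall_dvd_multiplicity (h : IsNonexceptional f₁ f₂ N) (hN : 0 < N)
    {j : ℕ} (hj : ∀ P : F[X], Irreducible P → P.Monic → P ≠ X →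
      N ∣ j * multiplicity P (f₁ * f₂ ^ (N - 1))) : N ∣ j := by
  have hgcd : 0 < N.gcd j := Nat.gcd_pos_of_pos_left _ hN
  have hdN : N / N.gcd j ∣ N := Nat.div_dvd_of_dvd (Nat.gcd_dvd_left N j)
  have hmult (P : F[X]) (hP : Irreducible P) (hmonic : P.Monic) (hPX : P ≠ X) :=
    dvd_multiplicity_of_isCoprime h.num_ne_zero h.denom_ne_zero h.isCoprime hP hN hdN
      ((Nat.div_dvd_iff_dvd_mul (Nat.gcd_dvd_left N j) hgcd).2
        (dvd_gcd_mul_of_dvd_mul (hj P hP hmonic hPX)))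
  have hle : ¬ 1 < N / N.gcd j := fun hlt => h.not_isPowUpToMonomial _ hlt hdN
    ⟨isPowUpToMonomial_of_forall_dvd_multiplicity h.num_ne_zero
        fun P hP hmonic hPX => (hmult P hP hmonic hPX).1,
      isPowUpToMonomial_of_forall_dvd_multiplicity h.denom_ne_zero
        fun P hP hmonic hPX => (hmult P hP hmonic hPX).2⟩
  have heq : N / N.gcd j = 1 :=
    le_antisymm (not_lt.1 hle) (Nat.div_pos (Nat.gcd_le_left _ hN) hgcd)
  rw [Nat.div_eq_iff_eq_mul_left hgcd (Nat.gcd_dvd_left N j), one_mul] at heq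
  exact heq ▸ Nat.gcd_dvd_right N j

theorem IsNonexceptional.kummerIndependent [PerfectField F] {E : Type*} [Field E] [Algebra F E]
    (h : IsNonexceptional f₁ f₂ N) (hN : 0 < N) :
    KummerIndependent N ((f₁ * f₂ ^ (N - 1)).map (algebraMap F E)) := by
  have hR := h.mul_pow_ne_zero (N - 1)
  refine .of_map (algebraMap E (AlgebraicClosure E)) ?_
  rw [Polynomial.map_map, ← IsScalarTower.algebraMap_eq]
  intro i j c w₁ w₂ hc hw₁ hw₂ heq
  have hdvd := dvd_rootMultiplicity_of_mul_pow_eq (Polynomial.map_ne_zero hR) hc hw₁ hw₂ heq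
  have hj : N ∣ j := by
    refine h.dvd_of_forall_dvd_multiplicity hN fun P hP hmonic hPX => ?_
    obtain ⟨β, hβ⟩ := IsAlgClosed.exists_aeval_eq_zero (AlgebraicClosure E) P
      (degree_pos_of_irreducible hP).ne'
    simpa only [rootMultiplicity_X_eq_zero_of_monic hP hmonic hPX hβ, mul_zero, zero_add,
      rootMultiplicity_map_eq_multiplicity hP hR hβ] using hdvd β
  refine ⟨?_, hj⟩
  have hX : (X : (AlgebraicClosure E)[X]).rootMultiplicity 0 = 1 := by
    simpa using rootMultiplicity_X_sub_C_self (x := (0 : AlgebraicClosure E))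
  have := (Nat.dvd_add_left (hj.mul_right _)).1 (hdvd 0)
  rwa [hX, mul_one] at this

end Nonexceptional

section Equidistribution

theorem norm_sum_le_of_card_fiber_le {ι κ : Type*} {S : Finset ι} {T : Finset κ} {key : ι → κ}
    (hT : T.Nonempty) (hkey : ∀ x ∈ S, key x ∈ T) {g : κ → ℂ} (hg : ∀ t ∈ T, ‖g t‖ ≤ 1)
    (hsum : ∑ t ∈ T, g t = 0) {A : ℝ} (hA : ∀ t ∈ T, (#T : ℝ) * #{x ∈ S | key x = t} ≤ A) :
    ‖∑ x ∈ S, g (key x)‖ ≤ A - #S := by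
  have hT' : (0 : ℝ) < #T := by exact_mod_cast hT.card_pos
  let deficit (t : κ) : ℝ := A / #T - #{x ∈ S | key x = t}
  have hdeficit (t : κ) (ht : t ∈ T) : 0 ≤ deficit t := by
    rw [sub_nonneg, le_div_iff₀' hT']
    exact hA t ht
  have hfiber : ∑ x ∈ S, g (key x) = ∑ t ∈ T, (#{x ∈ S | key x = t} : ℂ) * g t := by
    rw [← sum_fiberwise_of_maps_to hkey]
    refine sum_congr rfl fun t _ => ?_
    rw [sum_congr rfl fun x hx => by rw [(mem_filter.1 hx).2], sum_const, nsmul_eq_mul]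
  have hneg : ∑ x ∈ S, g (key x) = -∑ t ∈ T, (deficit t : ℂ) * g t := by
    rw [hfiber, ← sum_neg_distrib, ← sub_eq_zero, ← sum_sub_distrib, ← mul_zero ((A / #T : ℝ) : ℂ),
      ← hsum, mul_sum]
    refine sum_congr rfl fun t _ => ?_
    push_cast [deficit]
    ring
  calc ‖∑ x ∈ S, g (key x)‖ ≤ ∑ t ∈ T, deficit t := by
        rw [hneg, norm_neg]
        refine norm_sum_le_of_le _ fun t ht => ?_
        rw [norm_mul, Complex.norm_real, Real.norm_of_nonneg (hdeficit t ht)]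
        exact mul_le_of_le_one_right (hdeficit t ht) (hg t ht)
    _ = A - #S := by
        rw [sum_sub_distrib, sum_const, nsmul_eq_mul, mul_div_cancel₀ _ hT'.ne',
          card_eq_sum_card_fiberwise hkey, Nat.cast_sum]

theorem norm_mulChar_le_one {F : Type*} [Field F] [Finite F] (χ : MulChar F ℂ) (x : F) :
    ‖χ x‖ ≤ 1 := by
  have := Fintype.ofFinite F
  obtain rfl | hx := eq_or_ne x 0
  · simp [MulChar.map_zero]
  · refine (Complex.norm_eq_one_of_pow_eq_one (n := Fintype.card F - 1) ?_
      (Nat.sub_pos_of_lt Fintype.one_lt_card).ne').le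
    rw [← map_pow, FiniteField.pow_card_sub_one_eq_one x hx, map_one]

theorem norm_mulChar_mul_mulChar_mul_addChar_le_one {F G : Type*} [Field F] [Finite F]
    [AddGroup G] [Finite G] (χ₁ χ₂ : MulChar F ℂ) (ε : AddChar G ℂ) (x y : F) (z : G) :
    ‖χ₁ x * χ₂ y * ε z‖ ≤ 1 := by
  rw [norm_mul, norm_mul, AddChar.norm_apply, mul_one]
  exact mul_le_one₀ (norm_mulChar_le_one χ₁ x) (norm_nonneg _) (norm_mulChar_le_one χ₂ y)

theorem card_le_card_ne_zero_eval_ne_zero {E : Type*} [Field E] [Fintype E] {R : E[X]}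
    (hR : R ≠ 0) : Fintype.card E ≤ #{x : E | x ≠ 0 ∧ R.eval x ≠ 0} + (R.natDegree + 1) := by
  have hcompl : ({x : E | x ≠ 0 ∧ R.eval x ≠ 0} : Finset E)ᶜ ⊆ insert 0 R.roots.toFinset := by
    intro x
    simp only [mem_compl, mem_filter_univ, mem_insert, Multiset.mem_toFinset, mem_roots hR, IsRoot]
    tauto
  rw [← card_add_card_compl ({x : E | x ≠ 0 ∧ R.eval x ≠ 0} : Finset E)]
  gcongr
  exact (card_le_card hcompl).trans <| (card_insert_le _ _).trans <|
    Nat.succ_le_succ (R.roots.toFinset_card_le.trans R.card_roots')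

theorem sum_mulChar_norm_mul_addChar_trace_eq_sum_filter {F E : Type*} [Field F] [Field E]
    [Fintype E] [Algebra F E] {p : ℕ} [Algebra (ZMod p) E] (χ₁ χ₂ : MulChar F ℂ)
    (ε : AddChar (ZMod p) ℂ) (R : F[X]) (h : E → E) :
    ∑ x : E, χ₁ (Algebra.norm F x) * χ₂ (Algebra.norm F (aeval x R)) *
        ε (Algebra.trace (ZMod p) E (h x)) =
      ∑ x with x ≠ 0 ∧ (R.map (algebraMap F E)).eval x ≠ 0, χ₁ (Algebra.norm F x) *
        χ₂ (Algebra.norm F (aeval x R)) * ε (Algebra.trace (ZMod p) E (h x)) := by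
  refine (sum_filter_of_ne fun x _ hx => ⟨?_, ?_⟩).symm
  · rintro rfl
    simp [Algebra.norm_zero, MulChar.map_zero] at hx
  · intro hRx
    rw [eval_map_algebraMap] at hRx
    simp [hRx, Algebra.norm_zero, MulChar.map_zero] at hx

variable {F E : Type*} [Field F] [Fintype F] [Field E] [Fintype E] [Algebra F E] {p r k : ℕ}
  [Fact p.Prime] {R : F[X]} {a b : F}

theorem mem_characterFibre_norm_trace [Algebra (ZMod p) E] (hE : Fintype.card E = (p ^ r) ^ 2)
    {x : E} (hx : x ≠ 0) (hRx : aeval x R ≠ 0) :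
    x ∈ characterFibre p r (Fintype.card F - 1) (R.map (algebraMap F E)) (algebraMap F E a)
      (algebraMap F E b) (algebraMap F E (Algebra.norm F x))
      (algebraMap F E (Algebra.norm F (aeval x R))) (algebraMap (ZMod p) E
        (Algebra.trace (ZMod p) E (algebraMap F E a * x + algebraMap F E b / x))) := by
  have hfinrank : Module.finrank (ZMod p) E = 2 * r := by
    rw [Module.card_eq_pow_finrank (K := ZMod p), ZMod.card, ← pow_mul, mul_comm r] at hE
    exact Nat.pow_right_injective (Fact.out : p.Prime).two_le hE
  simp only [characterFibre, mem_filter_univ, eval_map_algebraMap,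
    FiniteField.algebraMap_norm_eq_pow, FiniteField.algebraMap_trace_eq_sum_pow,
    Nat.card_eq_fintype_card, hE, ZMod.card, hfinrank]
  exact ⟨hx, hRx, trivial, trivial, trivial⟩

/-- The values of the norm and trace keys recording in which `characterFibre` a point lies. -/
noncomputable def normTraceKeys (F : Type*) [Field F] [Fintype F] (p : ℕ) [Fact p.Prime] :
    Finset ((F × F) × ZMod p) :=
  (univ.erase 0 ×ˢ univ.erase 0) ×ˢ univ

theorem card_normTraceKeys :
    #(normTraceKeys F p) = (Fintype.card F - 1) * (Fintype.card F - 1) * p := by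
  simp [normTraceKeys, card_erase_of_mem, ZMod.card]

theorem sum_normTraceKeys_eq_zero {χ₁ χ₂ : MulChar F ℂ} {ε : AddChar (ZMod p) ℂ}
    (h : χ₁ ≠ 1 ∨ χ₂ ≠ 1 ∨ ε ≠ 1) :
    ∑ t ∈ normTraceKeys F p, χ₁ t.1.1 * χ₂ t.1.2 * ε t.2 = 0 := by
  have herase (χ : MulChar F ℂ) : ∑ y ∈ univ.erase 0, χ y = ∑ y, χ y :=
    sum_erase _ χ.map_zero
  simp only [normTraceKeys, sum_product, ← mul_sum, ← sum_mul, herase]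
  obtain h | h | h := h
  · simp [MulChar.sum_eq_zero_of_ne_one h]
  · simp [MulChar.sum_eq_zero_of_ne_one h]
  · simp [AddChar.sum_eq_zero_of_ne_one h]

theorem norm_sum_le_of_card_characterFibre_le [Algebra (ZMod p) E]
    (hE : Fintype.card E = (p ^ r) ^ 2) {χ₁ χ₂ : MulChar F ℂ} {ε : AddChar (ZMod p) ℂ}
    (hχ : χ₁ ≠ 1 ∨ χ₂ ≠ 1 ∨ ε ≠ 1) {A : ℕ}
    (hA : ∀ u₁ u₂ v, (Fintype.card F - 1) * (Fintype.card F - 1) * p *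
      #(characterFibre p r (Fintype.card F - 1) (R.map (algebraMap F E)) (algebraMap F E a)
        (algebraMap F E b) u₁ u₂ v) ≤ A) :
    ‖∑ x : E, χ₁ (Algebra.norm F x) * χ₂ (Algebra.norm F (aeval x R)) *
        ε (Algebra.trace (ZMod p) E (algebraMap F E a * x + algebraMap F E b / x))‖ ≤
      A - #{x : E | x ≠ 0 ∧ (R.map (algebraMap F E)).eval x ≠ 0} := by
  let key (x : E) := ((Algebra.norm F x, Algebra.norm F (aeval x R)),
    Algebra.trace (ZMod p) E (algebraMap F E a * x + algebraMap F E b / x))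
  rw [sum_mulChar_norm_mul_addChar_trace_eq_sum_filter]
  refine norm_sum_le_of_card_fiber_le (key := key) (T := normTraceKeys F p)
    ⟨((1, 1), 0), by simp [normTraceKeys]⟩ (fun x hx => ?_)
    (fun t _ => norm_mulChar_mul_mulChar_mul_addChar_le_one χ₁ χ₂ ε _ _ _)
    (sum_normTraceKeys_eq_zero hχ) (fun t _ => ?_)
  · simpa [normTraceKeys, key, Algebra.norm_eq_zero_iff, eval_map_algebraMap] using hx
  · rw [card_normTraceKeys]
    norm_cast
    refine (Nat.mul_le_mul_left _ (card_le_card fun x hx => ?_)).trans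
      (hA (algebraMap F E t.1.1) (algebraMap F E t.1.2) (algebraMap (ZMod p) E t.2))
    simp only [mem_filter] at hx
    obtain ⟨⟨-, hx₀, hRx⟩, rfl⟩ := hx
    exact mem_characterFibre_norm_trace hE hx₀ (by rwa [eval_map_algebraMap] at hRx)

universe v

theorem exists_norm_sum_le_of_isNonexceptional [Algebra (ZMod p) F] {f₁ f₂ : F[X]}
    (hf : IsNonexceptional f₁ f₂ (Fintype.card F - 1)) {χ₁ χ₂ : MulChar F ℂ}
    {ε : AddChar (ZMod p) ℂ} (hab : a ≠ 0 ∨ b ≠ 0) (hχ : χ₁ ≠ 1 ∨ χ₂ ≠ 1 ∨ ε ≠ 1) :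
    ∃ (C : ℝ) (k₀ : ℕ), ∀ k, k₀ ≤ k → ∀ (E : Type v) [Field E] [Fintype E] [Algebra F E]
      [Algebra (ZMod p) E] [IsScalarTower (ZMod p) F E], Module.finrank F E = 2 * k →
      ‖∑ x : E, χ₁ (Algebra.norm F x) *
        χ₂ (Algebra.norm F (aeval x (f₁ * f₂ ^ (Fintype.card F - 1 - 1)))) *
        ε (Algebra.trace (ZMod p) E (algebraMap F E a * x + algebraMap F E b / x))‖
        ≤ C * (Fintype.card F : ℝ) ^ k := by
  set N := Fintype.card F - 1
  have hN₀ : 0 < N := Nat.sub_pos_of_lt Fintype.one_lt_card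
  set R := f₁ * f₂ ^ (N - 1)
  obtain ⟨C, s₀, hfibre⟩ := exists_card_characterFibre_le.{v} p N R.natDegree hN₀
  refine ⟨C + (R.natDegree + 1), s₀ + 1, fun k hk E _ _ _ _ _ hfinrank => ?_⟩
  have : CharP E p := charP_of_injective_algebraMap (algebraMap (ZMod p) E).injective p
  set r := Module.finrank (ZMod p) F * k
  have hcard : Fintype.card F ^ k = p ^ r := by
    rw [Module.card_eq_pow_finrank (K := ZMod p), ZMod.card, ← pow_mul]
  have hE : Fintype.card E = (p ^ r) ^ 2 := by
    rw [Module.card_eq_pow_finrank (K := F), hfinrank, ← hcard, ← pow_mul, mul_comm 2 k]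
  have hdvd : N ∣ p ^ r - 1 := by
    simpa [hcard] using Nat.sub_dvd_pow_sub_pow (Fintype.card F) 1 k
  have hs₀ : s₀ < p ^ r := hcard ▸ hk.trans (Nat.lt_pow_self Fintype.one_lt_card).le
  have hR₀ : R.map (algebraMap F E) ≠ 0 :=
    (Polynomial.map_ne_zero_iff (algebraMap F E).injective).2 (hf.mul_pow_ne_zero _)
  have hbound := norm_sum_le_of_card_characterFibre_le hE hχ fun u₁ u₂ v =>
    hfibre E r (R.map (algebraMap F E)) (algebraMap F E a) (algebraMap F E b) u₁ u₂ v hE hdvd hR₀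
      (natDegree_map _).le (by simpa using hab) (hf.kummerIndependent hN₀) hs₀
  have hS := card_le_card_ne_zero_eval_ne_zero hR₀
  rw [hE, natDegree_map] at hS
  have hS' : (p ^ r : ℝ) ^ 2 ≤
      #{x : E | x ≠ 0 ∧ (R.map (algebraMap F E)).eval x ≠ 0} + (R.natDegree + 1) := by
    exact_mod_cast hS
  have hone : (1 : ℝ) ≤ p ^ r := by exact_mod_cast (Nat.zero_le s₀).trans_lt hs₀
  have hcard' : (Fintype.card F : ℝ) ^ k = p ^ r := by exact_mod_cast hcard
  refine hbound.trans ?_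
  rw [hcard']
  push_cast
  linarith [le_mul_of_one_le_right (by positivity : (0 : ℝ) ≤ R.natDegree + 1) hone]

end Equidistribution

section MixedCharSum

/-- Two multiplicative and two additive characters of `F` together with the numerator and
denominator of a rational function: the data of the sums
`∑ χ₁(x) χ₂(f₁(x) / f₂(x)) ψ₁(x) ψ₂(1 / x)` over `F` and, through norm and trace, over all finite
extensions of `F`. -/
structure MixedCharSum (F : Type*) [Field F] where
  χ₁ : MulChar F ℂ
  χ₂ : MulChar F ℂ
  ψ₁ : AddChar F ℂ
  ψ₂ : AddChar F ℂ
  f₁ : F[X]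
  f₂ : F[X]

namespace MixedCharSum

variable {F : Type*} [Field F]

/-- The summand of the character sum over the extension `E` of `F`. It vanishes at `0` and at the
zeros of `f₁` and `f₂`. -/
noncomputable def term (d : MixedCharSum F) (E : Type*) [Field E] [Algebra F E] (x : E) : ℂ :=
  d.χ₁ (Algebra.norm F x) * d.χ₂ (Algebra.norm F (aeval x d.f₁) / Algebra.norm F (aeval x d.f₂)) *
    d.ψ₁ (Algebra.trace F E x) * d.ψ₂ (Algebra.trace F E x⁻¹)

/-- At least one of the four characters is nontrivial. -/
def IsNontrivial (d : MixedCharSum F) : Prop :=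
  d.χ₁ ≠ 1 ∨ d.χ₂ ≠ 1 ∨ d.ψ₁ ≠ 1 ∨ d.ψ₂ ≠ 1

end MixedCharSum

theorem exists_forall_addChar_eq_comp_trace (F : Type*) [Field F] [Finite F] (p : ℕ)
    [Fact p.Prime] [Algebra (ZMod p) F] :
    ∃ ε : AddChar (ZMod p) ℂ, ε ≠ 1 ∧ ∀ ψ : AddChar F ℂ, ∃ a : F, ∀ y,
      ψ y = ε (Algebra.trace (ZMod p) F (a * y)) := by
  have := Fintype.ofFinite F
  have hε : (ZMod.stdAddChar (N := p)) ≠ 1 := by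
    simpa [AddChar.mulShift_one] using ZMod.isPrimitive_stdAddChar p one_ne_zero
  refine ⟨ZMod.stdAddChar, hε, fun ψ => ?_⟩
  let Ψ : AddChar F ℂ :=
    (ZMod.stdAddChar (N := p)).compAddMonoidHom (Algebra.trace (ZMod p) F).toAddMonoidHom
  have hΨ : Ψ ≠ 1 := by
    obtain ⟨v, hv⟩ := AddChar.ne_one_iff.1 hε
    obtain ⟨x, rfl⟩ := Algebra.trace_surjective (ZMod p) F v
    exact AddChar.ne_one_iff.2 ⟨x, hv⟩
  have hbij : Function.Bijective Ψ.mulShift := (Fintype.bijective_iff_injective_and_card _).2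
    ⟨AddChar.to_mulShift_inj_of_isPrimitive (.of_ne_one hΨ), AddChar.card_eq.symm⟩
  obtain ⟨a, rfl⟩ := hbij.2 ψ
  exact ⟨a, fun y => rfl⟩

namespace MixedCharSum

universe v

variable {F : Type*} [Field F] {d : MixedCharSum F}

theorem IsNontrivial.exists_addChar_eq_comp_trace [Finite F] (hd : d.IsNontrivial) (p : ℕ)
    [Fact p.Prime] [Algebra (ZMod p) F] :
    ∃ (ε : AddChar (ZMod p) ℂ) (a b : F), (a ≠ 0 ∨ b ≠ 0) ∧ (d.χ₁ ≠ 1 ∨ d.χ₂ ≠ 1 ∨ ε ≠ 1) ∧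
      (∀ y, d.ψ₁ y = ε (Algebra.trace (ZMod p) F (a * y))) ∧
      ∀ y, d.ψ₂ y = ε (Algebra.trace (ZMod p) F (b * y)) := by
  obtain ⟨ε, hε, htrace⟩ := exists_forall_addChar_eq_comp_trace F p
  obtain ⟨a, ha⟩ := htrace d.ψ₁
  obtain ⟨b, hb⟩ := htrace d.ψ₂
  by_cases hab : a = 0 ∧ b = 0
  · have h₁ : d.ψ₁ = 1 := by ext y; simp [ha, hab.1]
    have h₂ : d.ψ₂ = 1 := by ext y; simp [hb, hab.2]
    refine ⟨1, 1, 0, .inl one_ne_zero, ?_, by simp [h₁], by simp [h₂]⟩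
    simpa [IsNontrivial, h₁, h₂] using hd
  · exact ⟨ε, a, b, by tauto, .inr (.inr hε), ha, hb⟩

variable [Fintype F]

theorem term_eq_norm_trace (hF : 2 < Fintype.card F) {p : ℕ} [Algebra (ZMod p) F]
    {ε : AddChar (ZMod p) ℂ} {a b : F}
    (ha : ∀ y, d.ψ₁ y = ε (Algebra.trace (ZMod p) F (a * y)))
    (hb : ∀ y, d.ψ₂ y = ε (Algebra.trace (ZMod p) F (b * y)))
    {E : Type*} [Field E] [Finite E] [Algebra F E] [Algebra (ZMod p) E]
    [IsScalarTower (ZMod p) F E] [Fact p.Prime] (x : E) :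
    d.term E x = d.χ₁ (Algebra.norm F x) *
      d.χ₂ (Algebra.norm F (aeval x (d.f₁ * d.f₂ ^ (Fintype.card F - 1 - 1)))) *
      ε (Algebra.trace (ZMod p) E (algebraMap F E a * x + algebraMap F E b / x)) := by
  have hinv (y : F) : y⁻¹ = y ^ (Fintype.card F - 1 - 1) := by
    obtain rfl | hy := eq_or_ne y 0
    · rw [inv_zero, zero_pow (by omega)]
    · refine inv_eq_of_mul_eq_one_right ?_
      rw [← pow_succ', Nat.sub_add_cancel (by omega), FiniteField.pow_card_sub_one_eq_one y hy]
  have htrace (c : F) (z : E) :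
      c * Algebra.trace F E z = Algebra.trace F E (algebraMap F E c * z) := by
    rw [← Algebra.smul_def, map_smul, smul_eq_mul]
  rw [term, mul_assoc _ (d.ψ₁ _), ha, hb, ← AddChar.map_add_eq_mul, ← map_add, htrace, htrace,
    ← map_add, Algebra.trace_trace, div_eq_mul_inv, div_eq_mul_inv, hinv,
    map_mul (aeval x) d.f₁, map_pow (aeval x), map_mul (Algebra.norm F), map_pow (Algebra.norm F)]

theorem exists_norm_sum_term_le (hF : 2 < Fintype.card F)
    (hf : IsNonexceptional d.f₁ d.f₂ (Fintype.card F - 1)) (hd : d.IsNontrivial) :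
    ∃ (C : ℝ) (k₀ : ℕ), ∀ k, k₀ ≤ k → ∀ (E : Type v) [Field E] [Fintype E] [Algebra F E],
      Module.finrank F E = 2 * k → ‖∑ x : E, d.term E x‖ ≤ C * (Fintype.card F : ℝ) ^ k := by
  obtain ⟨p, _⟩ := CharP.exists F
  have : Fact p.Prime := ⟨CharP.char_is_prime F p⟩
  let _ := ZMod.algebra F p
  obtain ⟨ε, a, b, hab, hχ, ha, hb⟩ := hd.exists_addChar_eq_comp_trace p
  obtain ⟨C, k₀, hC⟩ := exists_norm_sum_le_of_isNonexceptional.{v} hf hab hχ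
  refine ⟨C, k₀, fun k hk E _ _ _ hfinrank => ?_⟩
  have : CharP E p := charP_of_injective_algebraMap (algebraMap F E).injective p
  let _ := ZMod.algebra E p
  have : IsScalarTower (ZMod p) F E := .of_algebraMap_eq' <| Subsingleton.elim _ _
  simpa only [term_eq_norm_trace hF ha hb] using hC k hk E hfinrank

end MixedCharSum

end MixedCharSum

section ResultantWeight

theorem resultant_mul_left_of_monic {R : Type*} [CommRing R] {h₁ h₂ : R[X]} (m₁ : h₁.Monic)
    (m₂ : h₂.Monic) (f : R[X]) : resultant (h₁ * h₂) f = resultant h₁ f * resultant h₂ f := by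
  rw [m₁.natDegree_mul m₂, resultant_mul_left _ _ _ _ le_rfl]

theorem resultant_X_right {R : Type*} [CommRing R] [Nontrivial R] (h : R[X]) :
    resultant h X = (-1) ^ h.natDegree * h.coeff 0 := by
  rw [coeff_zero_eq_eval_zero, ← resultant_X_sub_C_right h h.natDegree 0 le_rfl, C_0, sub_zero,
    natDegree_X]

theorem algebraMap_resultant_eq_prod_aroots {F Ω : Type*} [Field F] [Field Ω] [Algebra F Ω]
    {h : F[X]} (m : h.Monic) (hs : (h.map (algebraMap F Ω)).Splits) (f : F[X]) :
    algebraMap F Ω (resultant h f) = ((h.aroots Ω).map fun r => aeval r f).prod := by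
  have := resultant_eq_prod_eval (h.map (algebraMap F Ω)) (f.map (algebraMap F Ω)) f.natDegree
    natDegree_map_le hs
  rw [natDegree_map] at this
  rw [← resultant_map_map, this, (m.map _).leadingCoeff, one_pow, one_mul]
  simp only [eval_map_algebraMap]

theorem algebraMap_neg_coeff_one_div_coeff_zero_eq_sum_aroots {F Ω : Type*} [Field F] [Field Ω]
    [Algebra F Ω] {h : F[X]} (hs : (h.map (algebraMap F Ω)).Splits) (h₀ : h.coeff 0 ≠ 0) :
    algebraMap F Ω (-(h.coeff 1 / h.coeff 0)) = ((h.aroots Ω).map fun r => r⁻¹).sum := by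
  have hlog := hs.eval_derivative_div_eval_of_ne_zero (x := 0) (by
    rwa [← coeff_zero_eq_eval_zero, coeff_map, _root_.map_ne_zero])
  rw [← coeff_zero_eq_eval_zero, ← coeff_zero_eq_eval_zero, coeff_derivative, coeff_map,
    coeff_map] at hlog
  rw [map_neg, map_div₀, neg_eq_iff_eq_neg, ← Multiset.sum_map_neg']
  simpa only [zero_sub, one_div, inv_neg, Nat.cast_zero, zero_add, mul_one, Multiset.map_map,
    Function.comp_def, aroots_def] using hlog

theorem map_algHom_gen_eq_aroots {F S Ω : Type*} [Field F] [Ring S] [Algebra F S] [Field Ω]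
    [Algebra F Ω] [Fintype (S →ₐ[F] Ω)] (pb : PowerBasis F S) (hsep : IsSeparable F pb.gen) :
    (univ : Finset (S →ₐ[F] Ω)).val.map (fun σ => σ pb.gen) = (minpoly F pb.gen).aroots Ω := by
  refine (Multiset.Nodup.ext (univ.nodup.map fun σ τ h => pb.algHom_ext h)
    (nodup_roots (Polynomial.Separable.map hsep))).2 fun r => ?_
  have hsurj := pb.liftEquiv' (B := Ω) |>.surjective
  refine ⟨fun hr => ?_, fun hr => ?_⟩
  · obtain ⟨σ, -, rfl⟩ := Multiset.mem_map.1 hr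
    exact (pb.liftEquiv' σ).2
  · obtain ⟨σ, hσ⟩ := hsurj ⟨r, hr⟩
    exact Multiset.mem_map.2 ⟨σ, mem_univ_val σ, congrArg Subtype.val hσ⟩

section NormTrace

open IntermediateField Module

variable {F E : Type*} [Field F] [Field E] [Algebra F E] [FiniteDimensional F E]

theorem norm_coe_adjoin_simple (x : E) (z : F⟮x⟯) :
    Algebra.norm F (z : E) = Algebra.norm F z ^ finrank F⟮x⟯ E := by
  rw [← Algebra.norm_norm (S := F⟮x⟯), ← IntermediateField.algebraMap_apply,
    Algebra.norm_algebraMap, map_pow]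

theorem trace_coe_adjoin_simple (x : E) (z : F⟮x⟯) :
    Algebra.trace F E (z : E) = finrank F⟮x⟯ E • Algebra.trace F F⟮x⟯ z := by
  rw [← Algebra.trace_trace (S := F⟮x⟯), ← IntermediateField.algebraMap_apply,
    Algebra.trace_algebraMap, map_nsmul]

variable [Algebra.IsSeparable F E]

theorem map_algHom_adjoinSimple_gen_eq_aroots (Ω : Type*) [Field Ω] [Algebra F Ω] (x : E) :
    (univ : Finset (F⟮x⟯ →ₐ[F] Ω)).val.map (fun σ => σ (AdjoinSimple.gen F x)) =
      (minpoly F x).aroots Ω := by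
  have hx : IsIntegral F x := .of_finite F x
  have : Algebra.IsSeparable F F⟮x⟯ := Algebra.isSeparable_tower_bot_of_isSeparable F F⟮x⟯ E
  simpa [minpoly_gen] using map_algHom_gen_eq_aroots (Ω := Ω) (adjoin.powerBasis hx)
    (Algebra.IsSeparable.isSeparable F _)

theorem norm_aeval_eq_resultant_minpoly_pow (x : E) (f : F[X]) :
    Algebra.norm F (aeval x f) = resultant (minpoly F x) f ^ finrank F⟮x⟯ E := by
  have : Algebra.IsSeparable F F⟮x⟯ := Algebra.isSeparable_tower_bot_of_isSeparable F F⟮x⟯ E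
  have hgen : aeval x f = (aeval (AdjoinSimple.gen F x) f : F⟮x⟯) := by
    conv_lhs => rw [← AdjoinSimple.coe_gen F x]
    rw [← IntermediateField.coe_val, aeval_algHom_apply]
  rw [hgen, norm_coe_adjoin_simple]
  congr 1
  apply (algebraMap F (AlgebraicClosure F)).injective
  rw [Algebra.norm_eq_prod_embeddings F (AlgebraicClosure F),
    algebraMap_resultant_eq_prod_aroots (minpoly.monic (.of_finite F x)) (IsAlgClosed.splits _),
    ← map_algHom_adjoinSimple_gen_eq_aroots, Multiset.map_map]
  exact Finset.prod_congr rfl fun σ _ => (aeval_algHom_apply σ _ f).symm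

theorem trace_inv_eq_nsmul_minpoly_coeff {x : E} (hx : x ≠ 0) :
    Algebra.trace F E x⁻¹ =
      finrank F⟮x⟯ E • -((minpoly F x).coeff 1 / (minpoly F x).coeff 0) := by
  have : Algebra.IsSeparable F F⟮x⟯ := Algebra.isSeparable_tower_bot_of_isSeparable F F⟮x⟯ E
  have hgen : x⁻¹ = ((AdjoinSimple.gen F x)⁻¹ : F⟮x⟯) := by
    rw [IntermediateField.coe_inv, AdjoinSimple.coe_gen]
  rw [hgen, trace_coe_adjoin_simple]
  congr 1
  apply (algebraMap F (AlgebraicClosure F)).injective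
  rw [trace_eq_sum_embeddings (AlgebraicClosure F),
    algebraMap_neg_coeff_one_div_coeff_zero_eq_sum_aroots (IsAlgClosed.splits _)
      (minpoly.coeff_zero_ne_zero (.of_finite F x) hx),
    ← map_algHom_adjoinSimple_gen_eq_aroots, Multiset.map_map]
  exact Finset.sum_congr rfl fun σ _ => map_inv₀ σ _

end NormTrace

namespace MixedCharSum

variable {F : Type*} [Field F] (d : MixedCharSum F)

/-- The multiplicative function on monic polynomials whose value at the characteristic polynomial
of `x` is the summand `d.term E x`; each norm or trace in the summand is expressed by a resultant
or by coefficients. -/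
noncomputable def weight (h : F[X]) : ℂ :=
  d.χ₁ (resultant h X) * d.χ₂ (resultant h d.f₁ / resultant h d.f₂) * d.ψ₁ (-h.nextCoeff) *
    d.ψ₂ (-(h.coeff 1 / h.coeff 0))

theorem weight_eq_zero_of_coeff_zero_eq_zero {h : F[X]} (h₀ : h.coeff 0 = 0) : d.weight h = 0 := by
  rw [weight, resultant_X_right, h₀, mul_zero, MulChar.map_zero, zero_mul, zero_mul, zero_mul]

theorem weight_mul {h₁ h₂ : F[X]} (m₁ : h₁.Monic) (m₂ : h₂.Monic) :
    d.weight (h₁ * h₂) = d.weight h₁ * d.weight h₂ := by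
  by_cases h₀ : h₁.coeff 0 = 0
  · simp [weight_eq_zero_of_coeff_zero_eq_zero, mul_coeff_zero, h₀]
  by_cases h₀' : h₂.coeff 0 = 0
  · simp [weight_eq_zero_of_coeff_zero_eq_zero, mul_coeff_zero, h₀']
  have hlog : -((h₁ * h₂).coeff 1 / (h₁ * h₂).coeff 0) =
      -(h₁.coeff 1 / h₁.coeff 0) + -(h₂.coeff 1 / h₂.coeff 0) := by
    rw [mul_coeff_one, mul_coeff_zero]
    field_simp
    ring
  simp only [weight, resultant_mul_left_of_monic m₁ m₂, m₁.nextCoeff_mul m₂, hlog, neg_add,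
    AddChar.map_add_eq_mul, mul_div_mul_comm, map_mul]
  ring

theorem weight_one : d.weight 1 = 1 := by
  simp [weight, coeff_one, nextCoeff]

theorem weight_pow {h : F[X]} (m : h.Monic) (e : ℕ) : d.weight (h ^ e) = d.weight h ^ e := by
  induction e with
  | zero => simp [d.weight_one]
  | succ e ih => rw [pow_succ, d.weight_mul (m.pow e) m, ih, pow_succ]

theorem weight_X_sub_C (a : F) :
    d.weight (X - C a) = d.χ₁ a * d.χ₂ (d.f₁.eval a / d.f₂.eval a) * d.ψ₁ a * d.ψ₂ a⁻¹ := by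
  simp [weight, resultant_X_sub_C_left, nextCoeff_X_sub_C, coeff_C]

open IntermediateField Module in
theorem term_eq_weight_minpoly_pow {E : Type*} [Field E] [Algebra F E] [FiniteDimensional F E]
    [Algebra.IsSeparable F E] (x : E) :
    d.term E x = d.weight (minpoly F x) ^ finrank F⟮x⟯ E := by
  obtain rfl | hx := eq_or_ne x 0
  · have he : finrank F⟮(0 : E)⟯ E ≠ 0 := finrank_pos.ne'
    simp [term, weight_eq_zero_of_coeff_zero_eq_zero, MulChar.map_zero, Algebra.norm_zero, he]
  have hnorm := norm_aeval_eq_resultant_minpoly_pow x (X : F[X])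
  rw [aeval_X] at hnorm
  rw [term, hnorm, norm_aeval_eq_resultant_minpoly_pow, norm_aeval_eq_resultant_minpoly_pow,
    trace_eq_finrank_mul_minpoly_nextCoeff, ← nsmul_eq_mul, trace_inv_eq_nsmul_minpoly_coeff hx,
    weight]
  simp only [AddChar.map_nsmul_eq_pow, ← div_pow, map_pow, mul_pow]

end MixedCharSum

end ResultantWeight

section MonicOfDegree

variable (F : Type*) [Field F] [Finite F]

theorem finite_setOf_monic_natDegree_eq (n : ℕ) : {h : F[X] | h.Monic ∧ h.natDegree = n}.Finite :=
  Finite.of_equiv _ ((monicEquivDegreeLT n).trans (degreeLTEquiv F n).toEquiv).symm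

/-- The finset of monic polynomials of degree `n`. -/
noncomputable def monicOfDegree (n : ℕ) : Finset F[X] :=
  (finite_setOf_monic_natDegree_eq F n).toFinset

variable {F}

theorem mem_monicOfDegree {n : ℕ} {h : F[X]} : h ∈ monicOfDegree F n ↔ h.Monic ∧ h.natDegree = n :=
  Set.Finite.mem_toFinset _

theorem add_mem_monicOfDegree {n : ℕ} {h w : F[X]} (hw : w.degree < n)
    (hh : h ∈ monicOfDegree F n) : h + w ∈ monicOfDegree F n := by
  obtain ⟨m, hd⟩ := mem_monicOfDegree.1 hh
  have hlt : w.degree < h.degree := by rwa [degree_eq_natDegree m.ne_zero, hd]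
  exact mem_monicOfDegree.2
    ⟨m.add_of_left hlt, by rw [natDegree_add_eq_left_of_degree_lt hlt, hd]⟩

theorem add_mem_monicOfDegree_iff {n : ℕ} {h w : F[X]} (hw : w.degree < n) :
    h + w ∈ monicOfDegree F n ↔ h ∈ monicOfDegree F n :=
  ⟨fun hh => by simpa using add_mem_monicOfDegree (w := -w) (by rwa [degree_neg]) hh,
    add_mem_monicOfDegree hw⟩

theorem exists_bijOn_monicOfDegree_dvd_sub_mul {n : ℕ} {M w : F[X]} (hM : M ≠ 0)
    (hMn : M.natDegree ≤ n) (hw : IsCoprime w M) :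
    ∃ φ : F[X] → F[X], Set.BijOn φ (monicOfDegree F n) (monicOfDegree F n) ∧
      ∀ h, M ∣ φ h - w * h := by
  have hmod (g : F[X]) : M ∣ g - g % M :=
    ⟨g / M, by rw [sub_eq_iff_eq_add, EuclideanDomain.div_add_mod]⟩
  have hdeg (g : F[X]) : (g % M).degree < n :=
    (EuclideanDomain.mod_lt g hM).trans_le (natDegree_le_iff_degree_le.1 hMn)
  let φ (h : F[X]) : F[X] := h + (w * h % M - h % M)
  have hmaps : Set.MapsTo φ (monicOfDegree F n) (monicOfDegree F n) := fun h hh =>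
    add_mem_monicOfDegree ((degree_sub_le _ _).trans_lt (max_lt (hdeg _) (hdeg _))) hh
  have hφ (h : F[X]) : M ∣ φ h - w * h := by
    convert dvd_sub (hmod h) (hmod (w * h)) using 1
    ring
  have hinj : Set.InjOn φ (monicOfDegree F n) := by
    intro h₁ _ h₂ _ he
    have hdvd : M ∣ w * (h₁ - h₂) := by
      convert dvd_sub (hφ h₂) (hφ h₁) using 1
      rw [he]
      ring
    have h₁₂ : h₁ % M = h₂ % M := mod_eq_of_dvd_sub (hw.symm.dvd_of_dvd_mul_left hdvd)
    have hw₁₂ : w * h₁ % M = w * h₂ % M := mod_eq_of_dvd_sub (by rwa [← mul_sub])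
    simp only [φ, h₁₂, hw₁₂] at he
    exact add_right_cancel he
  exact ⟨φ, ⟨hmaps, hinj, (monicOfDegree F n).surjOn_of_injOn_of_card_le φ hmaps hinj le_rfl⟩, hφ⟩

end MonicOfDegree

theorem resultant_eq_of_dvd_sub {R : Type*} [CommRing R] [IsDomain R] {f h h' : R[X]}
    (hd : h.natDegree = h'.natDegree) (hdvd : f ∣ h' - h) : resultant h' f = resultant h f := by
  obtain ⟨p, hp⟩ := hdvd
  obtain rfl : h' = h + f * p := by rw [← hp]; ring
  by_cases h₀ : f * p = 0
  · rw [h₀, add_zero]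
  have hn : p.natDegree + f.natDegree ≤ h.natDegree := by
    rw [add_comm, ← natDegree_mul (left_ne_zero_of_mul h₀) (right_ne_zero_of_mul h₀), ← hp]
    exact (natDegree_sub_le _ _).trans (by rw [hd, max_self])
  rw [← hd, resultant_add_mul_left _ _ _ _ _ hn le_rfl]

theorem exists_dvd_natDegree_le_coeff_eq {F : Type*} [Field F] {M : F[X]} (hM : M ≠ 0) {n : ℕ}
    (hn : M.natDegree ≤ n) (y : F) : ∃ w : F[X], M ∣ w ∧ w.natDegree ≤ n ∧ w.coeff n = y := by
  refine ⟨M * (C (y / M.leadingCoeff) * X ^ (n - M.natDegree)), dvd_mul_right _ _, ?_, ?_⟩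
  · refine natDegree_mul_le.trans ?_
    have := natDegree_C_mul_X_pow_le (y / M.leadingCoeff) (n - M.natDegree)
    omega
  · rw [mul_left_comm, ← mul_assoc, coeff_mul_X_pow', if_pos (Nat.sub_le _ _), Nat.sub_sub_self hn,
      coeff_C_mul, coeff_natDegree, div_mul_cancel₀ _ (leadingCoeff_ne_zero.2 hM)]

namespace MixedCharSum

section Modulus

variable {F : Type*} [Field F] (d : MixedCharSum F)

/-- The modulus of the sum: up to the `ψ₁`-part, `weight h` depends only on `h` modulo it. -/
noncomputable def modulus : F[X] := X ^ 2 * (d.f₁ * d.f₂)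

variable {d}

theorem modulus_ne_zero (h₁ : d.f₁ ≠ 0) (h₂ : d.f₂ ≠ 0) : d.modulus ≠ 0 :=
  mul_ne_zero (pow_ne_zero _ X_ne_zero) (mul_ne_zero h₁ h₂)

theorem natDegree_modulus (h₁ : d.f₁ ≠ 0) (h₂ : d.f₂ ≠ 0) :
    d.modulus.natDegree = d.f₁.natDegree + d.f₂.natDegree + 2 := by
  rw [modulus, natDegree_mul (pow_ne_zero _ X_ne_zero) (mul_ne_zero h₁ h₂), natDegree_mul h₁ h₂,
    natDegree_X_pow, add_comm]

theorem weight_eq_mul_of_modulus_dvd_sub {h h' : F[X]} (hd : h.natDegree = h'.natDegree)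
    (hdvd : d.modulus ∣ h' - h) {z : F} (hz : h'.nextCoeff = h.nextCoeff + z) :
    d.weight h' = d.weight h * d.ψ₁ (-z) := by
  have hX := X_pow_dvd_iff.1 ((dvd_mul_right _ _).trans hdvd)
  have hc₀ := hX 0 two_pos
  have hc₁ := hX 1 one_lt_two
  rw [coeff_sub, sub_eq_zero] at hc₀ hc₁
  have hff : d.f₁ * d.f₂ ∣ h' - h := (dvd_mul_left _ _).trans hdvd
  rw [weight, resultant_eq_of_dvd_sub hd (X_dvd_iff.2 (by rw [coeff_sub, hc₀, sub_self])),
    resultant_eq_of_dvd_sub hd ((dvd_mul_right _ _).trans hff),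
    resultant_eq_of_dvd_sub hd ((dvd_mul_left _ _).trans hff), hc₀, hc₁, hz, weight, neg_add,
    AddChar.map_add_eq_mul]
  ring

theorem isCoprime_modulus_of_weight_ne_zero {h : F[X]} (m : h.Monic) (hh : d.weight h ≠ 0) :
    IsCoprime h d.modulus := by
  have hcop {f : F[X]} (hf : resultant h f ≠ 0) : IsCoprime h f :=
    (isUnit_resultant_iff_isCoprime m).1 hf.isUnit
  have hX : resultant h X ≠ 0 := fun h₀ => hh (by rw [weight, h₀, MulChar.map_zero]; simp)
  have h₁ : resultant h d.f₁ ≠ 0 := fun h₀ => hh (by simp [weight, h₀, MulChar.map_zero])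
  have h₂ : resultant h d.f₂ ≠ 0 := fun h₀ => hh (by simp [weight, h₀, MulChar.map_zero])
  exact (hcop hX).pow_right.mul_right ((hcop h₁).mul_right (hcop h₂))

end Modulus

section LCoeff

variable {F : Type*} [Field F] [Finite F] (d : MixedCharSum F)

/-- The coefficient of `Tᵏ` in the `L`-function `∑ₕ weight(h) T ^ (deg h)` of the sum. -/
noncomputable def lCoeff (k : ℕ) : ℂ := ∑ h ∈ monicOfDegree F k, d.weight h

variable {d}

theorem lCoeff_eq_zero_of_ψ₁_ne_one (h₁ : d.f₁ ≠ 0) (h₂ : d.f₂ ≠ 0) (hψ : d.ψ₁ ≠ 1) {k : ℕ}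
    (hk : d.f₁.natDegree + d.f₂.natDegree + 3 ≤ k) : d.lCoeff k = 0 := by
  have hMk := natDegree_modulus h₁ h₂
  obtain ⟨y, hy⟩ := AddChar.ne_one_iff.1 hψ
  obtain ⟨w, hMw, hwd, hwc⟩ :=
    exists_dvd_natDegree_le_coeff_eq (modulus_ne_zero h₁ h₂) (n := k - 1) (by omega) (-y)
  have hwk : w.degree < k :=
    (natDegree_le_iff_degree_le.1 hwd).trans_lt (Nat.cast_lt.2 (by omega))
  have hweight : ∀ h ∈ monicOfDegree F k, d.weight h * d.ψ₁ y = d.weight (h + w) := by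
    intro h hh
    have hd := (mem_monicOfDegree.1 hh).2
    have hd' := (mem_monicOfDegree.1 ((add_mem_monicOfDegree_iff hwk).2 hh)).2
    have hnext : (h + w).nextCoeff = h.nextCoeff + -y := by
      rw [nextCoeff_of_natDegree_pos (by omega), nextCoeff_of_natDegree_pos (by omega), hd, hd',
        coeff_add, hwc]
    rw [weight_eq_mul_of_modulus_dvd_sub (hd.trans hd'.symm) (by rwa [add_sub_cancel_left]) hnext,
      neg_neg]
  have hinv : d.lCoeff k * d.ψ₁ y = d.lCoeff k := by
    rw [lCoeff, sum_mul]
    exact Finset.sum_equiv (Equiv.addRight w) (fun _ => (add_mem_monicOfDegree_iff hwk).symm)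
      hweight
  by_contra h₀
  exact hy ((mul_eq_left₀ h₀).1 hinv)

theorem lCoeff_eq_zero_of_weight_ne (h₁ : d.f₁ ≠ 0) (h₂ : d.f₂ ≠ 0) (hψ : d.ψ₁ = 1) {k : ℕ}
    (hk : d.f₁.natDegree + d.f₂.natDegree + 2 ≤ k) {u u₀ : F[X]} (m : u.Monic) (m₀ : u₀.Monic)
    (hdeg : u.natDegree = u₀.natDegree) (hu : d.weight u ≠ 0) (hu₀ : d.weight u₀ ≠ 0)
    (hne : d.weight u ≠ d.weight u₀) : d.lCoeff k = 0 := by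
  obtain ⟨a, b, hab⟩ := isCoprime_modulus_of_weight_ne_zero m₀ hu₀
  have hw : IsCoprime (u * a) d.modulus :=
    (isCoprime_modulus_of_weight_ne_zero m hu).mul_left ⟨u₀, b, by rw [← hab]; ring⟩
  obtain ⟨φ, hφ, hφdvd⟩ := exists_bijOn_monicOfDegree_dvd_sub_mul (modulus_ne_zero h₁ h₂)
    ((natDegree_modulus h₁ h₂).trans_le hk) hw
  have hweight : ∀ h ∈ monicOfDegree F k,
      d.weight u * d.weight h = d.weight u₀ * d.weight (φ h) := by
    intro h hh
    obtain ⟨mh, hd⟩ := mem_monicOfDegree.1 hh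
    obtain ⟨mφ, hd'⟩ := mem_monicOfDegree.1 (hφ.mapsTo hh)
    have hdvd : d.modulus ∣ u₀ * φ h - u * h := by
      have e : u₀ * φ h - u * h = u₀ * (φ h - u * a * h) + d.modulus * (-(u * h * b)) := by
        linear_combination (u * h) * hab
      rw [e]
      exact dvd_add ((hφdvd h).mul_left _) (dvd_mul_right _ _)
    have hcongr := weight_eq_mul_of_modulus_dvd_sub
      (by rw [m.natDegree_mul mh, m₀.natDegree_mul mφ, hd, hd', hdeg]) hdvd
      (add_sub_cancel (u * h).nextCoeff (u₀ * φ h).nextCoeff).symm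
    rw [← d.weight_mul m mh, ← d.weight_mul m₀ mφ, hcongr, hψ, AddChar.one_apply, mul_one]
  have hinv : d.weight u * d.lCoeff k = d.weight u₀ * d.lCoeff k := by
    rw [lCoeff, mul_sum, mul_sum, Finset.sum_congr rfl hweight]
    exact Finset.sum_nbij φ hφ.mapsTo hφ.injOn hφ.surjOn fun _ _ => rfl
  exact (mul_eq_mul_right_iff.1 hinv).resolve_left hne

end LCoeff

end MixedCharSum

section FieldCharpoly

open IntermediateField Module

variable (F : Type*) [Field F] {E : Type*} [Field E] [Algebra F E]

/-- The characteristic polynomial over `F` of an element of a finite extension of `F`, as the power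
of its minimal polynomial whose degree is the degree of the extension. -/
noncomputable def fieldCharpoly (x : E) : F[X] := minpoly F x ^ finrank F⟮x⟯ E

variable [FiniteDimensional F E]

theorem fieldCharpoly_monic (x : E) : (fieldCharpoly F x).Monic :=
  (minpoly.monic (.of_finite F x)).pow _

theorem natDegree_fieldCharpoly (x : E) : (fieldCharpoly F x).natDegree = finrank F E := by
  rw [fieldCharpoly, natDegree_pow, ← adjoin.finrank (.of_finite F x), mul_comm,
    finrank_mul_finrank]

theorem minpoly_dvd_fieldCharpoly (x : E) : minpoly F x ∣ fieldCharpoly F x :=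
  dvd_pow_self _ finrank_pos.ne'

variable {F}

theorem natDegree_minpoly_dvd_finrank (x : E) : (minpoly F x).natDegree ∣ finrank F E := by
  rw [← adjoin.finrank (.of_finite F x)]
  exact ⟨_, (finrank_mul_finrank F F⟮x⟯ E).symm⟩

theorem fieldCharpoly_eq_minpoly_pow_div (x : E) :
    fieldCharpoly F x = minpoly F x ^ (finrank F E / (minpoly F x).natDegree) := by
  rw [fieldCharpoly, ← adjoin.finrank (.of_finite F x), ← finrank_mul_finrank F F⟮x⟯ E,
    Nat.mul_div_cancel_left _ finrank_pos]

theorem MixedCharSum.weight_fieldCharpoly (d : MixedCharSum F) [Algebra.IsSeparable F E] (x : E) :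
    d.weight (fieldCharpoly F x) = d.term E x := by
  rw [d.term_eq_weight_minpoly_pow, fieldCharpoly, d.weight_pow (minpoly.monic (.of_finite F x))]

end FieldCharpoly

section LCoeffVanishing

theorem norm_mulChar_of_ne_zero {F : Type*} [Field F] [Finite F] (χ : MulChar F ℂ) {x : F}
    (hx : x ≠ 0) : ‖χ x‖ = 1 := by
  have := Fintype.ofFinite F
  have hpow : χ x ^ (Fintype.card F - 1) = 1 := by
    rw [← map_pow, FiniteField.pow_card_sub_one_eq_one x hx, map_one]
  exact Complex.norm_eq_one_of_pow_eq_one hpow (Nat.sub_pos_of_lt Fintype.one_lt_card).ne'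

theorem norm_sum_eq_card_filter_ne_zero {ι : Type*} [Fintype ι] {f : ι → ℂ}
    (hnorm : ∀ i, f i ≠ 0 → ‖f i‖ = 1) (hconst : ∀ i j, f i ≠ 0 → f j ≠ 0 → f i = f j) :
    ‖∑ i, f i‖ = #{i | f i ≠ 0} := by
  rw [← sum_filter_ne_zero]
  obtain h | ⟨j, hj⟩ := (univ.filter fun i => f i ≠ 0).eq_empty_or_nonempty
  · simp [h]
  · have hj' := (mem_filter.1 hj).2
    rw [Finset.sum_congr rfl fun i hi => hconst i j (mem_filter.1 hi).2 hj', sum_const,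
      nsmul_eq_mul, norm_mul, hnorm j hj', mul_one, Complex.norm_natCast]

namespace MixedCharSum

variable {F : Type*} [Field F] {d : MixedCharSum F}

theorem term_eq_zero {E : Type*} [Field E] [Algebra F E] [FiniteDimensional F E] {x : E}
    (hx : ¬ (x ≠ 0 ∧ ((d.f₁ * d.f₂).map (algebraMap F E)).eval x ≠ 0)) : d.term E x = 0 := by
  rw [eval_map_algebraMap, map_mul, mul_ne_zero_iff] at hx
  rw [term]
  by_cases h₀ : x = 0
  · rw [h₀, Algebra.norm_zero, MulChar.map_zero, zero_mul, zero_mul, zero_mul]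
  by_cases h₁ : aeval x d.f₁ = 0
  · simp [h₁, Algebra.norm_zero, MulChar.map_zero]
  have h₂ : aeval x d.f₂ = 0 := by tauto
  simp [h₂, Algebra.norm_zero, MulChar.map_zero]

theorem norm_term_eq_one [Finite F] {E : Type*} [Field E] [Algebra F E] [FiniteDimensional F E]
    {x : E} (h₀ : x ≠ 0) (h₁ : ((d.f₁ * d.f₂).map (algebraMap F E)).eval x ≠ 0) :
    ‖d.term E x‖ = 1 := by
  rw [eval_map_algebraMap, map_mul, mul_ne_zero_iff] at h₁
  have hn {y : E} (hy : y ≠ 0) : Algebra.norm F y ≠ 0 := Algebra.norm_ne_zero_iff.2 hy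
  rw [term, norm_mul, norm_mul, norm_mul, AddChar.norm_apply, AddChar.norm_apply,
    norm_mulChar_of_ne_zero _ (hn h₀),
    norm_mulChar_of_ne_zero _ (div_ne_zero (hn h₁.1) (hn h₁.2)), mul_one, mul_one, mul_one]

theorem card_le_norm_sum_term_add [Finite F] {E : Type*} [Field E] [Fintype E] [Algebra F E]
    (hf₁ : d.f₁ ≠ 0) (hf₂ : d.f₂ ≠ 0)
    (hconst : ∀ x y : E, d.term E x ≠ 0 → d.term E y ≠ 0 → d.term E x = d.term E y) :
    (Fintype.card E : ℝ) ≤ ‖∑ x : E, d.term E x‖ + ((d.f₁ * d.f₂).natDegree + 1 : ℕ) := by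
  set R := (d.f₁ * d.f₂).map (algebraMap F E) with hR
  have hR₀ : R ≠ 0 := Polynomial.map_ne_zero (mul_ne_zero hf₁ hf₂)
  have hsupp (x : E) : d.term E x ≠ 0 ↔ x ≠ 0 ∧ R.eval x ≠ 0 :=
    ⟨fun hx => by_contra fun hR' => hx (term_eq_zero hR'),
      fun hx => norm_ne_zero_iff.1 (by rw [norm_term_eq_one hx.1 hx.2]; exact one_ne_zero)⟩
  have hnorm (x : E) (hx : d.term E x ≠ 0) : ‖d.term E x‖ = 1 :=
    norm_term_eq_one ((hsupp x).1 hx).1 ((hsupp x).1 hx).2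
  rw [norm_sum_eq_card_filter_ne_zero hnorm hconst, ← natDegree_map (algebraMap F E), ← hR]
  simp_rw [hsupp]
  exact_mod_cast card_le_card_ne_zero_eval_ne_zero hR₀

theorem exists_weight_ne [Fintype F] (hF : 2 < Fintype.card F)
    (hf : IsNonexceptional d.f₁ d.f₂ (Fintype.card F - 1)) (hd : d.IsNontrivial) :
    ∃ u u₀ : F[X], u.Monic ∧ u₀.Monic ∧ u.natDegree = u₀.natDegree ∧ d.weight u ≠ 0 ∧
      d.weight u₀ ≠ 0 ∧ d.weight u ≠ d.weight u₀ := by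
  by_contra! hcon
  obtain ⟨p, _⟩ := CharP.exists F
  have : Fact p.Prime := ⟨CharP.char_is_prime F p⟩
  obtain ⟨C, k₀, hC⟩ := exists_norm_sum_term_le.{0} hF hf hd
  set D := (d.f₁ * d.f₂).natDegree + 1
  obtain ⟨k₁, hk₁⟩ := exists_nat_gt (C + D)
  let k := max (max k₀ k₁) 1
  have hk : 1 ≤ k := le_max_right _ _
  have : NeZero (2 * k) := ⟨by omega⟩
  let E := FiniteField.Extension F p (2 * k)
  let _ : Fintype E := Fintype.ofFinite _
  have hfinrank : Module.finrank F E = 2 * k := FiniteField.finrank_extension F p (2 * k)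
  have hupper := hC k ((le_max_left _ _).trans (le_max_left _ _)) E hfinrank
  have hlower : (Fintype.card E : ℝ) ≤ ‖∑ x : E, d.term E x‖ + D := by
    refine card_le_norm_sum_term_add hf.num_ne_zero hf.denom_ne_zero fun x y hx hy => ?_
    rw [← weight_fieldCharpoly] at hx hy ⊢
    rw [← weight_fieldCharpoly]
    exact hcon _ _ (fieldCharpoly_monic F x) (fieldCharpoly_monic F y)
      (by rw [natDegree_fieldCharpoly, natDegree_fieldCharpoly]) hx hy
  have hlarge : C + D < (Fintype.card F : ℝ) ^ k := by
    have hlt : k < Fintype.card F ^ k := Nat.lt_pow_self (by omega)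
    have hk₁k : k₁ ≤ k := (le_max_right _ _).trans (le_max_left _ _)
    exact hk₁.trans (by exact_mod_cast hk₁k.trans_lt hlt)
  have hone : (1 : ℝ) ≤ (Fintype.card F : ℝ) ^ k :=
    one_le_pow₀ (by exact_mod_cast (by omega : 1 ≤ Fintype.card F))
  have hcard : (Fintype.card E : ℝ) = ((Fintype.card F : ℝ) ^ k) ^ 2 := by
    rw [Module.card_eq_pow_finrank (K := F), hfinrank, mul_comm 2 k, pow_mul, Nat.cast_pow,
      Nat.cast_pow]
  rw [hcard] at hlower
  nlinarith [Nat.cast_nonneg (α := ℝ) D]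

theorem lCoeff_eq_zero [Fintype F] (hF : 2 < Fintype.card F)
    (hf : IsNonexceptional d.f₁ d.f₂ (Fintype.card F - 1)) (hd : d.IsNontrivial) {k : ℕ}
    (hk : d.f₁.natDegree + d.f₂.natDegree + 3 ≤ k) : d.lCoeff k = 0 := by
  by_cases hψ : d.ψ₁ = 1
  · obtain ⟨u, u₀, m, m₀, hdeg, hu, hu₀, hne⟩ := exists_weight_ne hF hf hd
    exact lCoeff_eq_zero_of_weight_ne hf.num_ne_zero hf.denom_ne_zero hψ (by omega) m m₀ hdeg hu
      hu₀ hne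
  · exact lCoeff_eq_zero_of_ψ₁_ne_one hf.num_ne_zero hf.denom_ne_zero hψ hk

end MixedCharSum

end LCoeffVanishing

section CharpolyCounting

open Module

theorem sum_range_ite_dvd_succ {d c k : ℕ} (hd : 0 < d) (hk : d * c ≤ k) :
    ∑ j ∈ range k, (if d ∣ j + 1 ∧ (j + 1) / d ≤ c then d else 0) = d * c := by
  have himage : {j ∈ range k | d ∣ j + 1 ∧ (j + 1) / d ≤ c} =
      (range c).image fun e => d * (e + 1) - 1 := by
    ext j
    simp only [mem_filter, mem_range, mem_image]
    constructor
    · rintro ⟨-, ⟨e, he⟩, hec⟩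
      rw [he, Nat.mul_div_cancel_left _ hd] at hec
      have : e ≠ 0 := by rintro rfl; simp at he
      exact ⟨e - 1, by omega, by rw [Nat.sub_add_cancel (by omega), ← he, Nat.add_sub_cancel]⟩
    · rintro ⟨e, he, rfl⟩
      have hpos : 0 < d * (e + 1) := by positivity
      have hle : d * (e + 1) ≤ d * c := Nat.mul_le_mul_left _ he
      rw [Nat.sub_add_cancel hpos, Nat.mul_div_cancel_left _ hd]
      exact ⟨by omega, dvd_mul_right _ _, he⟩
  have hinj : Function.Injective fun e => d * (e + 1) - 1 := by
    intro a b hab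
    have ha : 0 < d * (a + 1) := by positivity
    have hb : 0 < d * (b + 1) := by positivity
    have := Nat.eq_of_mul_eq_mul_left hd (show d * (a + 1) = d * (b + 1) by grind)
    omega
  rw [← sum_filter, sum_const, himage, card_image_of_injective _ hinj, card_range, smul_eq_mul,
    mul_comm]

variable {F : Type*} [Field F]

theorem pow_dvd_iff_le_count_normalizedFactors {P h : F[X]} (hP : P ∈ normalizedFactors h)
    (h₀ : h ≠ 0) (e : ℕ) : P ^ e ∣ h ↔ e ≤ (normalizedFactors h).count P := by
  rw [pow_dvd_iff_le_emultiplicity, emultiplicity_eq_count_normalizedFactors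
    (irreducible_of_normalized_factor _ hP) h₀, normalize_normalized_factor _ hP, Nat.cast_le]

theorem sum_natDegree_mul_count_normalizedFactors {h : F[X]} (hm : h.Monic) :
    ∑ P ∈ (normalizedFactors h).toFinset, P.natDegree * (normalizedFactors h).count P =
      h.natDegree := by
  have hprod : (normalizedFactors h).prod = h := by
    rw [prod_normalizedFactors_eq hm.ne_zero, hm.normalize_eq_self]
  conv_rhs => rw [← hprod, natDegree_multiset_prod _ (zero_notMem_normalizedFactors h),
    sum_multiset_map_count]
  exact Finset.sum_congr rfl fun P _ => mul_comm _ _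

theorem card_minpoly_eq [Finite F] {E : Type*} [Field E] [Algebra F E] [Fintype E] {P : F[X]}
    (hm : P.Monic) (hP : Irreducible P) (hd : P.natDegree ∣ finrank F E) :
    #{x : E | minpoly F x = P} = P.natDegree := by
  have := Fintype.ofFinite F
  have hsplits : (P.map (algebraMap F E)).Splits := by
    have hX := (FiniteField.isSplittingField_sub E F).splits
    rw [Module.card_eq_pow_finrank (K := F), ← Nat.card_eq_fintype_card] at hX
    exact hX.of_dvd (map_ne_zero (FiniteField.X_pow_card_pow_sub_X_ne_zero _ finrank_pos.ne'
      Finite.one_lt_card))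
      (Polynomial.map_dvd _ (hP.natDegree_dvd_iff_dvd_X_pow_card_pow_sub_X.1 hd))
  rw [← card_rootSet_eq_natDegree (PerfectField.separable_of_irreducible hP) hsplits,
    ← Set.toFinset_card]
  congr 1
  ext x
  simp only [mem_filter, mem_univ, true_and, Set.mem_toFinset, mem_rootSet]
  refine ⟨?_, fun h => (minpoly.eq_of_irreducible_of_monic hP h.2 hm).symm⟩
  rintro rfl
  exact ⟨hm.ne_zero, minpoly.aeval _ _⟩

theorem card_fieldCharpoly_dvd_and_minpoly_eq [Finite F] {E : Type*} [Field E] [Algebra F E]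
    [Fintype E] {P h : F[X]} (h₀ : h ≠ 0) (hP : P ∈ normalizedFactors h) :
    #{x : E | fieldCharpoly F x ∣ h ∧ minpoly F x = P} =
      if P.natDegree ∣ finrank F E ∧
        finrank F E / P.natDegree ≤ (normalizedFactors h).count P then P.natDegree else 0 := by
  have hm : P.Monic := by
    rw [← normalize_normalized_factor _ hP]
    exact monic_normalize (ne_zero_of_mem_normalizedFactors hP)
  have hdvd (x : E) (hx : minpoly F x = P) :
      fieldCharpoly F x ∣ h ↔ finrank F E / P.natDegree ≤ (normalizedFactors h).count P := by
    rw [fieldCharpoly_eq_minpoly_pow_div, hx, pow_dvd_iff_le_count_normalizedFactors hP h₀]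
  split_ifs with hc
  · rw [← card_minpoly_eq hm (irreducible_of_normalized_factor _ hP) hc.1]
    refine congrArg card (filter_congr fun x _ => and_iff_right_of_imp fun hx => ?_)
    exact (hdvd x hx).2 hc.2
  · refine card_eq_zero.2 (filter_eq_empty_iff.2 fun x _ ⟨hdx, hx⟩ => hc ⟨?_, (hdvd x hx).1 hdx⟩)
    exact hx ▸ natDegree_minpoly_dvd_finrank x

theorem card_fieldCharpoly_dvd [Finite F] {E : Type*} [Field E] [Algebra F E] [Fintype E]
    {h : F[X]} (h₀ : h ≠ 0) :
    #{x : E | fieldCharpoly F x ∣ h} = ∑ P ∈ (normalizedFactors h).toFinset,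
      if P.natDegree ∣ finrank F E ∧
        finrank F E / P.natDegree ≤ (normalizedFactors h).count P then P.natDegree else 0 := by
  rw [card_eq_sum_card_fiberwise (f := minpoly F) (t := (normalizedFactors h).toFinset)]
  · refine Finset.sum_congr rfl fun P hP => ?_
    rw [← card_fieldCharpoly_dvd_and_minpoly_eq h₀ (Multiset.mem_toFinset.1 hP), filter_filter]
  · intro x hx
    have hi : IsIntegral F x := .of_finite F x
    rw [mem_coe, Multiset.mem_toFinset, mem_normalizedFactors_iff' h₀]
    exact ⟨minpoly.irreducible hi, (minpoly.monic hi).normalize_eq_self,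
      (minpoly_dvd_fieldCharpoly F x).trans (mem_filter.1 hx).2⟩

theorem sum_card_fieldCharpoly_dvd [Finite F] (p : ℕ) [Fact p.Prime] [CharP F p]
    [∀ j, Fintype (FiniteField.Extension F p (j + 1))] {h : F[X]} (hm : h.Monic) :
    ∑ j ∈ range h.natDegree,
      #{x : FiniteField.Extension F p (j + 1) | fieldCharpoly F x ∣ h} = h.natDegree := by
  simp_rw [card_fieldCharpoly_dvd hm.ne_zero, FiniteField.finrank_extension]
  rw [sum_comm]
  refine (Finset.sum_congr rfl fun P hP => ?_).trans (sum_natDegree_mul_count_normalizedFactors hm)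
  refine sum_range_ite_dvd_succ
    (irreducible_of_normalized_factor _ (Multiset.mem_toFinset.1 hP)).natDegree_pos ?_
  rw [← sum_natDegree_mul_count_normalizedFactors hm]
  exact single_le_sum (f := fun P => P.natDegree * (normalizedFactors h).count P)
    (fun _ _ => Nat.zero_le _) hP

end CharpolyCounting

namespace MixedCharSum

variable {F : Type*} [Field F]

theorem sum_weight_filter_dvd [Finite F] (d : MixedCharSum F) {u : F[X]} (hu : u.Monic) {k : ℕ}
    (hk : u.natDegree ≤ k) :
    ∑ h ∈ monicOfDegree F k with u ∣ h, d.weight h = d.weight u * d.lCoeff (k - u.natDegree) := by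
  have himage : {h ∈ monicOfDegree F k | u ∣ h} =
      (monicOfDegree F (k - u.natDegree)).image (u * ·) := by
    ext h
    simp only [mem_filter, mem_image, mem_monicOfDegree]
    constructor
    · rintro ⟨⟨mh, hd⟩, w, rfl⟩
      have mw := hu.of_mul_monic_left mh
      rw [hu.natDegree_mul mw] at hd
      exact ⟨w, ⟨mw, by omega⟩, rfl⟩
    · rintro ⟨w, ⟨mw, hd⟩, rfl⟩
      exact ⟨⟨hu.mul mw, by rw [hu.natDegree_mul mw]; omega⟩, dvd_mul_right _ _⟩
  rw [himage, sum_image (mul_right_injective₀ hu.ne_zero).injOn, lCoeff, mul_sum]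
  exact Finset.sum_congr rfl fun h hh => d.weight_mul hu (mem_monicOfDegree.1 hh).1

variable [Fintype F] (p : ℕ) [Fact p.Prime] [CharP F p]

/-- The sum over the extension of degree `j + 1` of `F`; indexing from zero makes these the power
sums in Newton's identities for the `lCoeff`. -/
noncomputable def extensionSum (d : MixedCharSum F) (j : ℕ) : ℂ :=
  letI : Fintype (FiniteField.Extension F p (j + 1)) := Fintype.ofFinite _
  ∑ x : FiniteField.Extension F p (j + 1), d.term (FiniteField.Extension F p (j + 1)) x

theorem extensionSum_mul_lCoeff [∀ j, Fintype (FiniteField.Extension F p (j + 1))]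
    (d : MixedCharSum F) {j k : ℕ} (hj : j < k) :
    d.extensionSum p j * d.lCoeff (k - 1 - j) = ∑ h ∈ monicOfDegree F k,
      d.weight h * #{x : FiniteField.Extension F p (j + 1) | fieldCharpoly F x ∣ h} := by
  have hterm (x : FiniteField.Extension F p (j + 1)) :
      d.term (FiniteField.Extension F p (j + 1)) x * d.lCoeff (k - 1 - j) =
        ∑ h ∈ monicOfDegree F k, if fieldCharpoly F x ∣ h then d.weight h else 0 := by
    have hdeg : (fieldCharpoly F x).natDegree = j + 1 := by
      rw [natDegree_fieldCharpoly, FiniteField.finrank_extension]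
    rw [← sum_filter, d.sum_weight_filter_dvd (fieldCharpoly_monic F x) (by omega),
      d.weight_fieldCharpoly, hdeg, Nat.sub_sub, add_comm 1 j]
  have hsum : d.extensionSum p j = ∑ x : FiniteField.Extension F p (j + 1),
      d.term (FiniteField.Extension F p (j + 1)) x := by
    rw [extensionSum]
    congr!
  rw [hsum, sum_mul, Finset.sum_congr rfl fun x _ => hterm x, sum_comm]
  refine Finset.sum_congr rfl fun h _ => ?_
  rw [← sum_filter, sum_const, nsmul_eq_mul, mul_comm]

theorem natCast_mul_lCoeff (d : MixedCharSum F) (k : ℕ) :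
    (k : ℂ) * d.lCoeff k = ∑ j ∈ range k, d.extensionSum p j * d.lCoeff (k - 1 - j) := by
  let _ : ∀ j, Fintype (FiniteField.Extension F p (j + 1)) := fun j => Fintype.ofFinite _
  rw [Finset.sum_congr rfl fun j hj => d.extensionSum_mul_lCoeff p (mem_range.1 hj), sum_comm,
    lCoeff, mul_sum]
  refine Finset.sum_congr rfl fun h hh => ?_
  obtain ⟨m, rfl⟩ := mem_monicOfDegree.1 hh
  rw [← mul_sum, mul_comm, ← Nat.cast_sum, sum_card_fieldCharpoly_dvd p m]

end MixedCharSum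

section PowerSums

theorem natCast_mul_neg_one_pow_mul_esymm {R : Type*} [CommRing R] (s : Multiset R) (k : ℕ) :
    (k : R) * ((-1) ^ k * s.esymm k) = ∑ j ∈ range k,
      -(s.map (· ^ (j + 1))).sum * ((-1) ^ (k - 1 - j) * s.esymm (k - 1 - j)) := by
  have hpsum (j : ℕ) : MvPolynomial.aeval (fun x : s => (x : R)) (MvPolynomial.psum s R j) =
      (s.map (· ^ j)).sum := by
    simp only [MvPolynomial.psum, map_sum, map_pow, MvPolynomial.aeval_X]
    exact congrArg Multiset.sum (s.map_univ (· ^ j))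
  have hnewton := congrArg (MvPolynomial.aeval fun x : s => (x : R))
    (MvPolynomial.mul_esymm_eq_sum s R k)
  simp only [map_mul, map_natCast, map_pow, map_neg, map_one, map_sum, hpsum,
    MvPolynomial.aeval_esymm_eq_multiset_esymm, Multiset.map_univ_coe] at hnewton
  rw [mul_left_comm, hnewton, ← mul_assoc, ← pow_add, show k + (k + 1) = 2 * k + 1 by ring,
    Odd.neg_one_pow ⟨k, rfl⟩, sum_filter, Nat.sum_antidiagonal_eq_sum_range_succ_mk,
    sum_range_succ, if_neg (lt_irrefl k), add_zero, neg_one_mul, ← sum_range_reflect,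
    ← sum_neg_distrib]
  refine Finset.sum_congr rfl fun j hj => ?_
  have hj := mem_range.1 hj
  rw [if_pos (by omega), show k - (k - 1 - j) = j + 1 by omega]
  ring

theorem eq_of_newton_identities {R : Type*} [CommRing R] {c S T : ℕ → R} (h₀ : c 0 = 1)
    (hS : ∀ k : ℕ, (k : R) * c k = ∑ j ∈ range k, S j * c (k - 1 - j))
    (hT : ∀ k : ℕ, (k : R) * c k = ∑ j ∈ range k, T j * c (k - 1 - j)) : S = T := by
  ext j
  induction j using Nat.strong_induction_on with
  | _ j ih =>
    have hj := (hS (j + 1)).symm.trans (hT (j + 1))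
    rw [sum_range_succ, sum_range_succ,
      Finset.sum_congr rfl fun x hx => by rw [ih x (mem_range.1 hx)]] at hj
    simpa [h₀] using hj

theorem exists_eq_neg_one_pow_mul_esymm {K : Type*} [Field K] [IsAlgClosed K] {n : ℕ} {c : ℕ → K}
    (h₀ : c 0 = 1) (hn : ∀ k, n < k → c k = 0) :
    ∃ s : Multiset K, s.card = n ∧ ∀ k, c k = (-1) ^ k * s.esymm k := by
  let P : K[X] := ∑ k ∈ range (n + 1), monomial k (c (n - k))
  have hcoeff (k : ℕ) : P.coeff k = if k ≤ n then c (n - k) else 0 := by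
    simp [P, finsetSum_coeff, coeff_monomial]
  have hle : P.natDegree ≤ n :=
    natDegree_le_iff_coeff_eq_zero.2 fun k hk => by rw [hcoeff, if_neg hk.not_ge]
  have hone : P.coeff n = 1 := by rw [hcoeff, if_pos le_rfl, Nat.sub_self, h₀]
  have hm : P.Monic := monic_of_natDegree_le_of_coeff_eq_one n hle hone
  have hdeg : P.natDegree = n :=
    hle.antisymm (le_natDegree_of_ne_zero (hone.trans_ne one_ne_zero))
  have hcard : P.roots.card = P.natDegree := (IsAlgClosed.splits P).natDegree_eq_card_roots.symm
  refine ⟨P.roots, hcard.trans hdeg, fun k => ?_⟩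
  obtain hk | hk := le_or_gt k n
  · have := coeff_eq_esymm_roots_of_card hcard (k := n - k) (by omega)
    rwa [hcoeff, if_pos (Nat.sub_le _ _), Nat.sub_sub_self hk, hm.leadingCoeff, hdeg,
      Nat.sub_sub_self hk, one_mul] at this
  · rw [hn k hk, Multiset.esymm, Multiset.powersetCard_eq_empty _ (by omega), Multiset.map_zero,
      Multiset.sum_zero, mul_zero]

theorem sum_map_eval_mul_pow {R : Type*} [CommRing R] (s : Multiset R) (P : R[X]) (k : ℕ) :
    (s.map fun z => P.eval z * z ^ k).sum =
      ∑ e ∈ range (P.natDegree + 1), P.coeff e * (s.map (· ^ (e + k))).sum := by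
  induction s using Multiset.induction_on with
  | empty => simp
  | cons z s ih =>
    rw [Multiset.map_cons, Multiset.sum_cons, ih, eval_eq_sum_range, sum_mul, ← sum_add_distrib]
    simp only [Multiset.map_cons, Multiset.sum_cons, mul_add, pow_add, mul_assoc]

theorem norm_le_one_of_bounded_power_sums {s : Multiset ℂ} {B : ℝ} {k₀ : ℕ}
    (hB : ∀ k ≥ k₀, ‖(s.map (· ^ k)).sum‖ ≤ B) {z : ℂ} (hz : z ∈ s) : ‖z‖ ≤ 1 := by
  by_contra! hlt
  -- `P` annihilates every element of `s` other than `z`, so it isolates the powers of `z`.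
  let P : ℂ[X] := ∏ x ∈ s.toFinset.erase z, (X - C x)
  have hPz : P.eval z ≠ 0 := by
    simp only [P, eval_prod, eval_sub, eval_X, eval_C]
    exact prod_ne_zero_iff.2 fun x hx => sub_ne_zero.2 (ne_of_mem_erase hx).symm
  have hP₀ : ∀ x ∈ s.toFinset, x ≠ z → P.eval x = 0 := fun x hx hxz => by
    simp only [P, eval_prod, eval_sub, eval_X, eval_C]
    exact prod_eq_zero (mem_erase.2 ⟨hxz, hx⟩) (sub_self x)
  have hisolate (k : ℕ) :
      (s.map fun x => P.eval x * x ^ k).sum = s.count z * (P.eval z * z ^ k) := by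
    rw [sum_multiset_map_count, sum_eq_single_of_mem z (Multiset.mem_toFinset.2 hz), nsmul_eq_mul]
    intro x hx hxz
    rw [hP₀ x hx hxz, zero_mul, smul_zero]
  have hbound : ∀ k ≥ k₀, ‖P.eval z‖ * ‖z‖ ^ k ≤
      ∑ e ∈ range (P.natDegree + 1), ‖P.coeff e‖ * B := by
    intro k hk
    have hcount : (1 : ℝ) ≤ s.count z := by exact_mod_cast Multiset.one_le_count_iff_mem.2 hz
    calc ‖P.eval z‖ * ‖z‖ ^ k ≤ s.count z * (‖P.eval z‖ * ‖z‖ ^ k) :=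
          le_mul_of_one_le_left (by positivity) hcount
      _ = ‖∑ e ∈ range (P.natDegree + 1), P.coeff e * (s.map (· ^ (e + k))).sum‖ := by
          rw [← sum_map_eval_mul_pow, hisolate, norm_mul, norm_mul, norm_pow, Complex.norm_natCast]
      _ ≤ ∑ e ∈ range (P.natDegree + 1), ‖P.coeff e‖ * B := by
          refine norm_sum_le_of_le _ fun e _ => ?_
          rw [norm_mul]
          exact mul_le_mul_of_nonneg_left (hB _ (by omega)) (norm_nonneg _)
  have htendsto : Filter.Tendsto (fun k => ‖P.eval z‖ * ‖z‖ ^ k) .atTop .atTop :=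
    (tendsto_pow_atTop_atTop_of_one_lt hlt).const_mul_atTop (norm_pos_iff.2 hPz)
  obtain ⟨k, hk, hk₀⟩ :=
    ((htendsto.eventually_gt_atTop _).and (Filter.eventually_ge_atTop k₀)).exists
  exact (hbound k hk₀).not_gt hk

end PowerSums

namespace MixedCharSum

variable {F : Type*} [Field F] (d : MixedCharSum F)

theorem lCoeff_zero [Finite F] : d.lCoeff 0 = 1 := by
  have h : monicOfDegree F 0 = {1} := by
    ext h
    rw [mem_monicOfDegree, mem_singleton]
    exact ⟨fun hh => hh.1.natDegree_eq_zero.1 hh.2, by rintro rfl; simp⟩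
  rw [lCoeff, h, sum_singleton, d.weight_one]

theorem lCoeff_one [Fintype F] : d.lCoeff 1 = ∑ a : F, d.weight (X - C a) := by
  have h : monicOfDegree F 1 = univ.image fun a : F => X - C a := by
    ext h
    simp only [mem_monicOfDegree, mem_image, mem_univ, true_and]
    constructor
    · rintro ⟨m, hd⟩
      exact ⟨-h.coeff 0, by rw [C_neg, sub_neg_eq_add, ← m.eq_X_add_C hd]⟩
    · rintro ⟨a, rfl⟩
      exact ⟨monic_X_sub_C a, natDegree_X_sub_C a⟩
  rw [lCoeff, h, sum_image fun a _ b _ hab => C_injective (sub_right_injective hab)]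

variable {d} [Fintype F] (hF : 2 < Fintype.card F)
  (hf : IsNonexceptional d.f₁ d.f₂ (Fintype.card F - 1)) (hd : d.IsNontrivial)
include hF hf hd

theorem exists_extensionSum_eq_neg_sum_pow (p : ℕ) [Fact p.Prime] [CharP F p] :
    ∃ s : Multiset ℂ, s.card = d.f₁.natDegree + d.f₂.natDegree + 2 ∧
      ∀ j, d.extensionSum p j = -(s.map (· ^ (j + 1))).sum := by
  obtain ⟨s, hs, hc⟩ := exists_eq_neg_one_pow_mul_esymm d.lCoeff_zero fun k hk =>
    lCoeff_eq_zero hF hf hd (k := k) hk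
  refine ⟨s, hs, congrFun (eq_of_newton_identities d.lCoeff_zero (d.natCast_mul_lCoeff p) ?_)⟩
  intro k
  simp only [hc]
  exact natCast_mul_neg_one_pow_mul_esymm s k

theorem norm_le_sqrt_card_of_extensionSum_eq {p : ℕ} [Fact p.Prime] [CharP F p] {s : Multiset ℂ}
    (hs : ∀ j, d.extensionSum p j = -(s.map (· ^ (j + 1))).sum) {z : ℂ} (hz : z ∈ s) :
    ‖z‖ ≤ √(Fintype.card F) := by
  have hF₀ : (0 : ℝ) < Fintype.card F := by exact_mod_cast two_pos.trans hF
  obtain ⟨C, k₀, hC⟩ := exists_norm_sum_term_le.{0} hF hf hd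
  have hbounded : ∀ k ≥ max k₀ 1,
      ‖((s.map fun w => w ^ 2 / (Fintype.card F : ℂ)).map (· ^ k)).sum‖ ≤ C := by
    intro k hk
    let _ : Fintype (FiniteField.Extension F p (2 * k - 1 + 1)) := Fintype.ofFinite _
    have hk₁ : 2 * k - 1 + 1 = 2 * k := by omega
    have hsum : ‖d.extensionSum p (2 * k - 1)‖ ≤ C * (Fintype.card F : ℝ) ^ k :=
      hC k (by omega) (FiniteField.Extension F p (2 * k - 1 + 1))
        (by rw [FiniteField.finrank_extension, hk₁])
    rw [hs, norm_neg, hk₁] at hsum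
    simp only [Multiset.map_map, Function.comp_apply, div_pow, ← pow_mul]
    rwa [Multiset.sum_map_div, norm_div, norm_pow, Complex.norm_natCast,
      div_le_iff₀ (pow_pos hF₀ k)]
  have hsq := norm_le_one_of_bounded_power_sums hbounded (Multiset.mem_map_of_mem _ hz)
  rw [norm_div, norm_pow, Complex.norm_natCast, div_le_one hF₀] at hsq
  exact Real.le_sqrt_of_sq_le hsq

theorem norm_sum_eval_le :
    ‖∑ a : F, d.χ₁ a * d.χ₂ (d.f₁.eval a / d.f₂.eval a) * d.ψ₁ a * d.ψ₂ a⁻¹‖ ≤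
      (d.f₁.natDegree + d.f₂.natDegree + 2 : ℕ) * √(Fintype.card F) := by
  obtain ⟨p, _⟩ := CharP.exists F
  have : Fact p.Prime := ⟨CharP.char_is_prime F p⟩
  obtain ⟨s, hcard, hs⟩ := exists_extensionSum_eq_neg_sum_pow hF hf hd p
  have hsum : ∑ a : F, d.χ₁ a * d.χ₂ (d.f₁.eval a / d.f₂.eval a) * d.ψ₁ a * d.ψ₂ a⁻¹ =
      -s.sum := by
    have hnewton := d.natCast_mul_lCoeff p 1
    simpa [lCoeff_one, lCoeff_zero, weight_X_sub_C, hs] using hnewton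
  rw [hsum, norm_neg, ← hcard, ← nsmul_eq_mul, ← Multiset.card_map norm s]
  refine (norm_multiset_sum_le s).trans (Multiset.sum_le_card_nsmul _ _ fun y hy => ?_)
  obtain ⟨z, hz, rfl⟩ := Multiset.mem_map.1 hy
  exact norm_le_sqrt_card_of_extensionSum_eq hF hf hd hs hz

end MixedCharSum

section CharExpansion

variable {A G ι : Type*} [CommGroup G]

/-- The function `u` on `A` is a linear combination of the characters `x ↦ Φ x g` with `g ∈ H`, in
which the trivial character has coefficient `c` and the absolute values of the coefficients sum
to `N`. -/
def HasCharExpansion [Fintype G] (Φ : A → G →* ℂ) (H : Subgroup G) (u : A → ℝ) (c N : ℝ) : Prop :=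
  ∃ a : H → ℂ, a 1 = c ∧ ∑ g, ‖a g‖ = N ∧ ∀ x, ∑ g, a g * Φ x g = u x

namespace HasCharExpansion

variable [Fintype G] {Φ : A → G →* ℂ} {H : Subgroup G} {u : A → ℝ} {c N : ℝ}

theorem neg (h : HasCharExpansion Φ H u c N) :
    HasCharExpansion Φ H (fun x => -u x) (-c) N := by
  obtain ⟨a, hc, hN, hu⟩ := h
  exact ⟨fun g => -a g, by simp [hc], by simpa only [norm_neg],
    fun x => by simp only [neg_mul, sum_neg_distrib, hu, Complex.ofReal_neg]⟩

theorem add_const (h : HasCharExpansion Φ H u c N) (r : ℝ) :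
    HasCharExpansion Φ H (fun x => u x + r) (c + r) (N - |c| + |c + r|) := by
  obtain ⟨a, hc, rfl, hu⟩ := h
  have hne {g : H} (hg : g ∈ univ.erase 1) : Function.update a 1 ((c + r : ℝ) : ℂ) g = a g :=
    Function.update_of_ne (ne_of_mem_erase hg) _ _
  refine ⟨Function.update a 1 ((c + r : ℝ) : ℂ), by simp, ?_, fun x => ?_⟩
  · rw [← add_sum_erase _ _ (mem_univ 1), ← add_sum_erase _ (fun g => ‖a g‖) (mem_univ 1),
      sum_congr rfl fun g hg => by rw [hne hg]]
    rw [Function.update_self, Complex.norm_real, hc, Complex.norm_real, Real.norm_eq_abs,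
      Real.norm_eq_abs]
    ring
  · rw [← add_sum_erase _ _ (mem_univ 1), sum_congr rfl fun g hg => by rw [hne hg],
      Function.update_self]
    have hx := hu x
    rw [← add_sum_erase _ _ (mem_univ 1), hc] at hx
    push_cast [← hx]
    simp
    ring

end HasCharExpansion

/-- The indicator function of the points `x` where `β * Φ x` is trivial on `H`. -/
noncomputable def twistTrivialIndicator (Φ : A → G →* ℂ) (β : G →* ℂ) (H : Subgroup G)
    (x : A) : ℝ :=
  if ∀ g ∈ H, β g * Φ x g = 1 then 1 else 0

/-- The indicator function of the points `x` where `Φ x` is nontrivial on `H`. -/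
noncomputable def nontrivialIndicator (Φ : A → G →* ℂ) (H : Subgroup G) (x : A) : ℝ :=
  if ∀ g ∈ H, Φ x g = 1 then 0 else 1

/-- The proportion of nontrivial elements of `H`, which is the expected mean of
`nontrivialIndicator Φ H`. -/
noncomputable def nontrivialDensity (H : Subgroup G) : ℝ :=
  1 - 1 / Nat.card H

/-- The indicator function of the points `x` where `β * Φ x` is trivial on `H none` and `Φ x` is
nontrivial on `H j` for each `j ∈ s`. -/
noncomputable def sieveWeight (Φ : A → G →* ℂ) (β : G →* ℂ) (H : Option ι → Subgroup G)
    (s : Finset ι) (x : A) : ℝ :=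
  twistTrivialIndicator Φ β (H none) x * ∏ j ∈ s, nontrivialIndicator Φ (H (some j)) x

theorem twistTrivialIndicator_nonneg (Φ : A → G →* ℂ) (β : G →* ℂ) (H : Subgroup G) (x : A) :
    0 ≤ twistTrivialIndicator Φ β H x := by
  rw [twistTrivialIndicator]
  split_ifs <;> norm_num

theorem nontrivialIndicator_nonneg (Φ : A → G →* ℂ) (H : Subgroup G) (x : A) :
    0 ≤ nontrivialIndicator Φ H x := by
  rw [nontrivialIndicator]
  split_ifs <;> norm_num

theorem nontrivialIndicator_le_one (Φ : A → G →* ℂ) (H : Subgroup G) (x : A) :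
    nontrivialIndicator Φ H x ≤ 1 := by
  rw [nontrivialIndicator]
  split_ifs <;> norm_num

theorem sieveWeight_nonneg (Φ : A → G →* ℂ) (β : G →* ℂ) (H : Option ι → Subgroup G)
    (s : Finset ι) (x : A) : 0 ≤ sieveWeight Φ β H s x :=
  mul_nonneg (twistTrivialIndicator_nonneg _ _ _ _)
    (prod_nonneg fun _ _ => nontrivialIndicator_nonneg _ _ _)

theorem sieveWeight_mul_nonpos {Φ : A → G →* ℂ} {β : G →* ℂ} {H : Option ι → Subgroup G}
    {s t : Finset ι} {x : A}
    (hx : (∀ g ∈ H none, β g * Φ x g = 1) → ∃ j ∈ s ∪ t, ∀ g ∈ H (some j), Φ x g = 1) :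
    sieveWeight Φ β H s x * (∑ j ∈ t, nontrivialIndicator Φ (H (some j)) x - (#t - 1)) ≤ 0 := by
  by_cases hw : sieveWeight Φ β H s x = 0
  · rw [hw, zero_mul]
  have hnone : ∀ g ∈ H none, β g * Φ x g = 1 := by
    by_contra h
    exact left_ne_zero_of_mul hw (if_neg h)
  obtain ⟨i, hi, htriv⟩ := hx hnone
  have hzero : nontrivialIndicator Φ (H (some i)) x = 0 := if_pos htriv
  have hit : i ∈ t := (mem_union.1 hi).resolve_left fun his =>
    prod_ne_zero_iff.1 (right_ne_zero_of_mul hw) i his hzero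
  refine mul_nonpos_of_nonneg_of_nonpos (sieveWeight_nonneg _ _ _ _ _) (sub_nonpos.2 ?_)
  rw [← add_sum_erase _ _ hit, hzero, zero_add, ← cast_card_erase_of_mem hit, ← nsmul_one]
  exact sum_le_card_nsmul _ _ _ fun j _ => nontrivialIndicator_le_one _ _ _

theorem nontrivialDensity_nonneg [Finite G] (H : Subgroup G) : 0 ≤ nontrivialDensity H :=
  sub_nonneg.2 (div_le_one_of_le₀ (by exact_mod_cast Nat.card_pos) (Nat.cast_nonneg _))

theorem nontrivialDensity_pos [Finite G] {H : Subgroup G} (hH : H ≠ ⊥) :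
    0 < nontrivialDensity H := by
  have h : (1 : ℝ) < Nat.card H := by exact_mod_cast H.one_lt_card_iff_ne_bot.2 hH
  exact sub_pos.2 ((div_lt_one (zero_lt_one.trans h)).2 h)

variable [Fintype G]

theorem hasCharExpansion_twistTrivialIndicator (Φ : A → G →* ℂ) (β : G →* ℂ) (H : Subgroup G) :
    HasCharExpansion Φ H (twistTrivialIndicator Φ β H) (1 / Nat.card H) 1 := by
  refine ⟨fun g => β g / Nat.card H, by simp, ?_, fun x => ?_⟩
  · have hβ (g : G) : ‖β g‖ = 1 :=
      Complex.norm_eq_one_of_pow_eq_one (by rw [← map_pow, pow_card_eq_one', map_one])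
        Nat.card_pos.ne'
    simp [hβ]
  · have hiff : (β * Φ x).comp H.subtype = 1 ↔ ∀ g ∈ H, β g * Φ x g = 1 := by
      simp [DFunLike.ext_iff]
    have hsum := sum_hom_units ((β * Φ x).comp H.subtype)
    simp only [hiff, MonoidHom.comp_apply, MonoidHom.mul_apply, Subgroup.subtype_apply,
      ← Nat.card_eq_fintype_card] at hsum
    simp only [div_mul_eq_mul_div, ← sum_div, hsum, twistTrivialIndicator]
    split_ifs <;> simp

theorem hasCharExpansion_nontrivialIndicator (Φ : A → G →* ℂ) (H : Subgroup G) :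
    HasCharExpansion Φ H (nontrivialIndicator Φ H) (nontrivialDensity H)
      (2 * nontrivialDensity H) := by
  have h := (hasCharExpansion_twistTrivialIndicator Φ 1 H).neg.add_const 1
  have hH := nontrivialDensity_nonneg H
  convert h using 1
  · ext x
    simp only [nontrivialIndicator, twistTrivialIndicator, MonoidHom.one_apply, one_mul]
    split_ifs <;> simp
  · rw [nontrivialDensity, neg_add_eq_sub]
  · rw [neg_add_eq_sub, ← nontrivialDensity, abs_of_nonneg hH, abs_neg,
      abs_of_nonneg (by positivity), nontrivialDensity]
    ring

theorem hasCharExpansion_nontrivialIndicator_sub (Φ : A → G →* ℂ) (H : Subgroup G) :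
    HasCharExpansion Φ H (fun x => nontrivialIndicator Φ H x - nontrivialDensity H) 0
      (nontrivialDensity H) := by
  have h := (hasCharExpansion_nontrivialIndicator Φ H).add_const (-nontrivialDensity H)
  rw [abs_of_nonneg (nontrivialDensity_nonneg H), add_neg_cancel, abs_zero, add_zero, two_mul,
    add_sub_cancel_right] at h
  simpa only [← sub_eq_add_neg] using h

variable [Fintype A] {Φ : A → G →* ℂ} {B : ℝ} (hB : ∀ g ≠ 1, ‖∑ x, Φ x g‖ ≤ B)
include hB

theorem abs_sum_prod_sub_le_of_iSupIndep [Fintype ι] {H : ι → Subgroup G} (hH : iSupIndep H)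
    {u : ι → A → ℝ} {c N : ι → ℝ} (h : ∀ i, HasCharExpansion Φ (H i) (u i) (c i) (N i)) :
    |∑ x, ∏ i, u i x - Fintype.card A * ∏ i, c i| ≤ B * (∏ i, N i - ∏ i, |c i|) := by
  choose a hc hN hu using h
  have hprod (y : ∀ i, H i) (hy : y ≠ 1) : ∏ i, (y i : G) ≠ 1 := fun h₁ => hy <| by
    have := Subgroup.eq_one_of_noncommProd_eq_one_of_iSupIndep univ (fun i => (y i : G))
      (fun _ _ _ _ _ => Commute.all _ _) H hH (fun i _ => (y i).2)
      (by rwa [noncommProd_eq_prod])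
    exact funext fun i => Subtype.ext (this i (mem_univ i))
  have hexpand : ((∑ x, ∏ i, u i x : ℝ) : ℂ) =
      ∑ y : ∀ i, H i, (∏ i, a i (y i)) * ∑ x, Φ x (∏ i, (y i : G)) := by
    push_cast
    simp_rw [← hu, Fintype.prod_sum, mul_sum]
    rw [sum_comm]
    simp_rw [prod_mul_distrib, map_prod]
  have hmain : ((∑ x, ∏ i, u i x - Fintype.card A * ∏ i, c i : ℝ) : ℂ) =
      ∑ y ∈ univ.erase (1 : ∀ i, H i), (∏ i, a i (y i)) * ∑ x, Φ x (∏ i, (y i : G)) := by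
    rw [Complex.ofReal_sub, hexpand, ← add_sum_erase _ _ (mem_univ 1)]
    simp [hc, mul_comm]
  have herror : ∏ i, N i - ∏ i, |c i| =
      ∑ y ∈ univ.erase (1 : ∀ i, H i), ∏ i, ‖a i (y i)‖ := by
    simp_rw [← hN, Fintype.prod_sum]
    rw [← add_sum_erase _ _ (mem_univ 1)]
    simp [hc]
  rw [← Real.norm_eq_abs, ← Complex.norm_real, hmain, herror, mul_sum]
  refine norm_sum_le_of_le _ fun y hy => ?_
  rw [norm_mul, norm_prod, mul_comm]
  gcongr
  exact hB _ (hprod y (ne_of_mem_erase hy))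

theorem abs_sum_prod_sub_le_of_supIndep {H : ι → Subgroup G} {s : Finset ι} (hs : s.SupIndep H)
    {u : ι → A → ℝ} {c N : ι → ℝ} (h : ∀ i ∈ s, HasCharExpansion Φ (H i) (u i) (c i) (N i)) :
    |∑ x, ∏ i ∈ s, u i x - Fintype.card A * ∏ i ∈ s, c i| ≤
      B * (∏ i ∈ s, N i - ∏ i ∈ s, |c i|) := by
  have := abs_sum_prod_sub_le_of_iSupIndep hB (hs.independent) fun i => h i i.2
  simpa only [prod_coe_sort s c, prod_coe_sort s N, prod_coe_sort s fun i => |c i|,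
    fun x => prod_coe_sort s fun i => u i x] using this

end CharExpansion

section Sieve

variable {A G ι : Type*} [Fintype A] [CommGroup G] [Finite G] {Φ : A → G →* ℂ} {β : G →* ℂ}
  {H : Option ι → Subgroup G} {s t : Finset ι} {B : ℝ} (hB : ∀ g ≠ 1, ‖∑ x, Φ x g‖ ≤ B)
include hB

theorem abs_sum_sieveWeight_sub_le (hH : (insertNone s).SupIndep H) :
    |∑ x, sieveWeight Φ β H s x -
        Fintype.card A * (1 / Nat.card (H none) * ∏ j ∈ s, nontrivialDensity (H (some j)))| ≤
      B * (2 ^ #s * ∏ j ∈ s, nontrivialDensity (H (some j)) -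
        1 / Nat.card (H none) * ∏ j ∈ s, nontrivialDensity (H (some j))) := by
  have := Fintype.ofFinite G
  have h := abs_sum_prod_sub_le_of_supIndep hB hH
    (u := fun o => o.elim (twistTrivialIndicator Φ β (H none))
      fun j => nontrivialIndicator Φ (H (some j)))
    (c := fun o => o.elim (1 / Nat.card (H none) : ℝ) fun j => nontrivialDensity (H (some j)))
    (N := fun o => o.elim 1 fun j => 2 * nontrivialDensity (H (some j))) fun o _ => by
      cases o with
      | none => exact hasCharExpansion_twistTrivialIndicator Φ β _
      | some j => exact hasCharExpansion_nontrivialIndicator Φ _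
  simpa only [sieveWeight, prod_insertNone, Option.elim, one_mul, prod_mul_distrib, prod_const,
    abs_of_nonneg (nontrivialDensity_nonneg _), Nat.abs_cast, abs_div, abs_one] using h

theorem abs_sum_sieveWeight_mul_le {i : ι} (hi : i ∉ s)
    (hH : (insertNone (insert i s)).SupIndep H) :
    |∑ x, sieveWeight Φ β H s x *
        (nontrivialIndicator Φ (H (some i)) x - nontrivialDensity (H (some i)))| ≤
      B * (2 ^ #s * (∏ j ∈ s, nontrivialDensity (H (some j))) *
        nontrivialDensity (H (some i))) := by
  have hne {j : ι} (hj : j ∈ s) : j ≠ i := fun h => hi (h ▸ hj)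
  have := Fintype.ofFinite G
  have h := abs_sum_prod_sub_le_of_supIndep hB hH
    (u := fun o => o.elim (twistTrivialIndicator Φ β (H none)) fun j x =>
      nontrivialIndicator Φ (H (some j)) x - if j = i then nontrivialDensity (H (some j)) else 0)
    (c := fun o => o.elim (1 / Nat.card (H none) : ℝ)
      fun j => if j = i then 0 else nontrivialDensity (H (some j)))
    (N := fun o => o.elim 1 fun j =>
      if j = i then nontrivialDensity (H (some j)) else 2 * nontrivialDensity (H (some j)))
    fun o _ => by
      rcases o with - | j
      · exact hasCharExpansion_twistTrivialIndicator Φ β _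
      · rcases eq_or_ne j i with rfl | hj
        · simpa using hasCharExpansion_nontrivialIndicator_sub Φ (H (some j))
        · simpa [hj] using hasCharExpansion_nontrivialIndicator Φ (H (some j))
  simp only [prod_insertNone, Option.elim, prod_insert hi, if_true, one_mul, zero_mul, mul_zero,
    sub_zero, abs_zero] at h
  convert h using 2
  · refine sum_congr rfl fun x _ => ?_
    rw [prod_congr rfl fun j hj => by rw [if_neg (hne hj), sub_zero], sieveWeight]
    ring
  · rw [prod_congr rfl fun j hj => if_neg (hne hj), prod_mul_distrib, prod_const]
    ring

theorem exists_forall_trivial_and_forall_nontrivial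
    (hH : (insertNone (s ∪ t)).SupIndep H) (hst : Disjoint s t)
    (hs : ∀ j ∈ s, H (some j) ≠ ⊥) {δ : ℝ}
    (hδ : δ = 1 - ∑ j ∈ t, 1 / (Nat.card (H (some j)) : ℝ)) (hpos : 0 < δ)
    (hcond : B * Nat.card (H none) * 2 ^ #s * ((#t - 1) / δ + 2) < Fintype.card A + B) :
    ∃ x, (∀ g ∈ H none, β g * Φ x g = 1) ∧ ∀ j ∈ s ∪ t, ∃ g ∈ H (some j), Φ x g ≠ 1 := by
  by_contra! hcon
  set k : ℝ := (Nat.card (H none) : ℝ)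
  set Θ : ℝ := ∏ j ∈ s, nontrivialDensity (H (some j))
  have hkpos : 0 < k := Nat.cast_pos.2 Nat.card_pos
  have hΘpos : 0 < Θ := prod_pos fun j hj => nontrivialDensity_pos (hs j hj)
  have hsum : ∑ j ∈ t, nontrivialDensity (H (some j)) = #t - 1 + δ := by
    simp only [nontrivialDensity, sum_sub_distrib, sum_const, nsmul_one, hδ]
    ring
  have hsub {r : Finset ι} (hr : r ⊆ s ∪ t) : (insertNone r).SupIndep H :=
    hH.subset (insertNone.monotone hr)
  have hmain : Fintype.card A * (1 / k * Θ) - B * (2 ^ #s * Θ - 1 / k * Θ) ≤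
      ∑ x, sieveWeight Φ β H s x := by
    have := (abs_le.1 (abs_sum_sieveWeight_sub_le hB (β := β) (hsub subset_union_left))).1
    linarith
  have herror : -(B * (2 ^ #s * Θ) * (#t - 1 + δ)) ≤ ∑ i ∈ t, ∑ x, sieveWeight Φ β H s x *
      (nontrivialIndicator Φ (H (some i)) x - nontrivialDensity (H (some i))) := by
    rw [← hsum, mul_sum, ← sum_neg_distrib]
    refine sum_le_sum fun i hi => ?_
    rw [mul_assoc]
    exact (abs_le.1 (abs_sum_sieveWeight_mul_le hB (disjoint_right.1 hst hi)
      (hsub (insert_subset (mem_union_right _ hi) subset_union_left)))).1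
  have hsplit : ∑ x, sieveWeight Φ β H s x *
        (∑ j ∈ t, nontrivialIndicator Φ (H (some j)) x - (#t - 1)) =
      δ * ∑ x, sieveWeight Φ β H s x + ∑ i ∈ t, ∑ x, sieveWeight Φ β H s x *
        (nontrivialIndicator Φ (H (some i)) x - nontrivialDensity (H (some i))) := by
    rw [sum_comm, mul_sum, ← sum_add_distrib]
    refine sum_congr rfl fun x _ => ?_
    rw [← mul_sum, sum_sub_distrib, hsum]
    ring
  have hnonpos := sum_nonpos fun x (_ : x ∈ univ) => sieveWeight_mul_nonpos (hcon x)
  have hfactor : Θ * δ / k * (Fintype.card A + B - B * k * 2 ^ #s * ((#t - 1) / δ + 2)) =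
      δ * (Fintype.card A * (1 / k * Θ) - B * (2 ^ #s * Θ - 1 / k * Θ)) -
        B * (2 ^ #s * Θ) * (#t - 1 + δ) := by
    field_simp
    ring
  have hfactorpos : 0 < Θ * δ / k *
      (Fintype.card A + B - B * k * 2 ^ #s * ((#t - 1) / δ + 2)) :=
    mul_pos (by positivity) (sub_pos.2 hcond)
  linarith [mul_le_mul_of_nonneg_left hmain hpos.le]

end Sieve

section CyclicVectors

open Module

variable {K V : Type*} [Field K] [AddCommGroup V] [Module K V] {φ : End K V} {x : V}

theorem exists_forall_minpoly_dvd_of_aeval_apply_eq_zero [FiniteDimensional K V] (φ : End K V) :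
    ∃ y, ∀ u, aeval φ u y = 0 → minpoly K φ ∣ u := by
  obtain ⟨y, hy⟩ := exists_ker_toSpanSingleton_eq_annihilator K[X] (AEval' φ)
  refine ⟨(AEval'.of φ).symm y, fun u hu => ?_⟩
  rw [← span_minpoly_eq_annihilator] at hy
  rw [← Ideal.mem_span_singleton, ← hy, LinearMap.mem_ker, LinearMap.toSpanSingleton_apply]
  exact hu

theorem linearIndependent_pow_apply_of_forall_minpoly_dvd [FiniteDimensional K V]
    (hx : ∀ u, aeval φ u x = 0 → minpoly K φ ∣ u) :
    LinearIndependent K fun i : Fin (minpoly K φ).natDegree => (φ ^ (i : ℕ)) x := by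
  rw [Fintype.linearIndependent_iff]
  intro c hc i
  have hdvd : minpoly K φ ∣ ∑ i : Fin (minpoly K φ).natDegree, C (c i) * X ^ (i : ℕ) := by
    refine hx _ ?_
    simpa [Module.algebraMap_end_apply] using hc
  have hμ : minpoly K φ ≠ 0 := minpoly.ne_zero (IsIntegral.of_finite K φ)
  have hzero := congrArg (coeff · i) <| eq_zero_of_dvd_of_degree_lt hdvd <|
    (degree_sum_fin_lt c).trans_eq (degree_eq_natDegree hμ).symm
  simpa [finsetSum_coeff, coeff_C_mul_X_pow, Fin.val_inj] using hzero

theorem aeval_apply_surjective_of_forall_minpoly_dvd [FiniteDimensional K V]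
    (hφ : (minpoly K φ).natDegree = finrank K V)
    (hx : ∀ u, aeval φ u x = 0 → minpoly K φ ∣ u) (v : V) :
    ∃ u : K[X], aeval φ u x = v := by
  have hspan := (linearIndependent_pow_apply_of_forall_minpoly_dvd
    hx).span_eq_top_of_card_eq_finrank' (by rw [Fintype.card_fin, hφ])
  obtain ⟨c, hc⟩ := (Submodule.mem_span_range_iff_exists_fun K).1
    (hspan.ge (Submodule.mem_top (x := v)))
  exact ⟨∑ i, C (c i) * X ^ (i : ℕ), by simpa [Module.algebraMap_end_apply] using hc⟩

theorem finrank_quotient_range_aeval [FiniteDimensional K V]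
    (hφ : (minpoly K φ).natDegree = finrank K V) {e : K[X]} (he : e ∣ minpoly K φ) :
    finrank K (V ⧸ LinearMap.range (aeval φ e)) = e.natDegree := by
  obtain ⟨y, hy⟩ := exists_forall_minpoly_dvd_of_aeval_apply_eq_zero φ
  let π : K[X] →ₗ[K] V ⧸ LinearMap.range (aeval φ e) :=
    (LinearMap.range (aeval φ e)).mkQ ∘ₗ LinearMap.applyₗ y ∘ₗ (aeval φ).toLinearMap
  have hπ : Function.Surjective π := (Submodule.mkQ_surjective _).comp
    (aeval_apply_surjective_of_forall_minpoly_dvd hφ hy)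
  have hker : LinearMap.ker π = (Ideal.span {e}).restrictScalars K := by
    ext u
    rw [LinearMap.mem_ker, Submodule.restrictScalars_mem, Ideal.mem_span_singleton]
    change Submodule.mkQ _ (aeval φ u y) = 0 ↔ _
    rw [Submodule.mkQ_apply, Submodule.Quotient.mk_eq_zero, LinearMap.mem_range]
    constructor
    · rintro ⟨v, hv⟩
      obtain ⟨w, rfl⟩ := aeval_apply_surjective_of_forall_minpoly_dvd hφ hy v
      have hdvd : e ∣ u - e * w := he.trans <| hy _ <| by
        rw [map_sub, map_mul, LinearMap.sub_apply, Module.End.mul_apply, hv, sub_self]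
      exact (dvd_sub_left (dvd_mul_right e w)).1 hdvd
    · rintro ⟨w, rfl⟩
      exact ⟨aeval φ w y, by rw [map_mul, Module.End.mul_apply]⟩
  rw [← finrank_quotient_span_eq_natDegree (f := e), ← (π.quotKerEquivOfSurjective hπ).finrank_eq,
    hker]
  rfl

theorem minpoly_dvd_of_forall_notMem_range_aeval [FiniteDimensional K V]
    (hφ : (minpoly K φ).natDegree = finrank K V)
    (hx : ∀ e : K[X], Irreducible e → e.Monic → e ∣ minpoly K φ →
      x ∉ LinearMap.range (aeval φ e)) (c : K[X]) (hc : aeval φ c x = 0) : minpoly K φ ∣ c := by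
  obtain ⟨y, hy⟩ := exists_forall_minpoly_dvd_of_aeval_apply_eq_zero φ
  obtain ⟨u, rfl⟩ := aeval_apply_surjective_of_forall_minpoly_dvd hφ hy x
  rw [← Module.End.mul_apply, ← map_mul] at hc
  refine IsCoprime.dvd_of_dvd_mul_right ?_ (hy _ hc)
  refine isCoprime_of_irreducible_dvd
    (fun h => minpoly.ne_zero (IsIntegral.of_finite K φ) h.1) fun e he hμ hu => ?_
  obtain ⟨w, rfl⟩ := normalize_dvd_iff.2 hu
  refine hx (normalize e) ((associated_normalize e).irreducible he) (monic_normalize he.ne_zero)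
    (normalize_dvd_iff.2 hμ) ⟨aeval φ w y, by rw [map_mul, Module.End.mul_apply]⟩

end CyclicVectors

section Frobenius

open Module

variable (K F : Type*) [Field K] [Field F] [Fintype K] [Algebra K F]

/-- The Frobenius automorphism `x ↦ x ^ |K|` of `F` as a `K`-linear endomorphism. -/
noncomputable def frobeniusEnd : End K F :=
  (FiniteField.frobeniusAlgHom K F).toLinearMap

variable {K F} in
theorem frobeniusEnd_pow_apply (i : ℕ) (x : F) :
    (frobeniusEnd K F ^ i) x = x ^ Fintype.card K ^ i := by
  rw [Module.End.coe_pow]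
  exact congrFun (pow_iterate _ i) x

variable [Finite F]

theorem natDegree_minpoly_frobeniusEnd :
    (minpoly K (frobeniusEnd K F)).natDegree = finrank K F := by
  rw [frobeniusEnd, FiniteField.minpoly_frobeniusAlgHom]
  exact natDegree_X_pow_sub_C

theorem natCard_quotient_range_aeval_frobeniusEnd {e : K[X]} (he : e ∣ X ^ finrank K F - 1) :
    Nat.card (F ⧸ LinearMap.range (aeval (frobeniusEnd K F) e)) =
      Fintype.card K ^ e.natDegree := by
  rw [Module.natCard_eq_pow_finrank (K := K), Nat.card_eq_fintype_card,
    finrank_quotient_range_aeval (natDegree_minpoly_frobeniusEnd K F)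
      (by rwa [frobeniusEnd, FiniteField.minpoly_frobeniusAlgHom])]

variable {K F}

theorem isNormalElem_of_forall_notMem_range_aeval {x : F}
    (hx : ∀ e : K[X], Irreducible e → e.Monic → e ∣ X ^ finrank K F - 1 →
      x ∉ LinearMap.range (aeval (frobeniusEnd K F) e)) :
    IsNormalElem K (Fintype.card K) (finrank K F) x := by
  have hdeg := natDegree_minpoly_frobeniusEnd K F
  have hli : LinearIndependent K fun i : Fin (finrank K F) => x ^ Fintype.card K ^ (i : ℕ) := by
    simp_rw [← frobeniusEnd_pow_apply]
    rw [← hdeg]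
    refine linearIndependent_pow_apply_of_forall_minpoly_dvd
      (minpoly_dvd_of_forall_notMem_range_aeval hdeg ?_)
    rwa [frobeniusEnd, FiniteField.minpoly_frobeniusAlgHom]
  exact ⟨hli, hli.span_eq_top_of_card_eq_finrank' (Fintype.card_fin _)⟩

end Frobenius

section ProductSubgroups

variable {A B : Type*} [Group A] [Group B]

theorem natCard_subgroup_prod (H : Subgroup A) (L : Subgroup B) :
    Nat.card (H.prod L) = Nat.card H * Nat.card L := by
  rw [Nat.card_congr (H.prodEquiv L).toEquiv, Nat.card_prod]

theorem disjoint_subgroup_prod {H H' : Subgroup A} {L L' : Subgroup B} (hH : Disjoint H H')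
    (hL : Disjoint L L') : Disjoint (H.prod L) (H'.prod L') := by
  rw [Subgroup.disjoint_def] at hH hL ⊢
  exact fun hx hx' => Prod.ext (hH hx.1 hx'.1) (hL hx.2 hx'.2)

variable {ι κ : Type*}

theorem supIndep_disjSum_prod {s : Finset ι} {t : Finset κ} {H : ι → Subgroup A}
    {L : κ → Subgroup B} (hH : s.SupIndep H) (hL : t.SupIndep L) :
    (s.disjSum t).SupIndep
      (Sum.elim (fun i => (H i).prod ⊥) fun j => (⊥ : Subgroup A).prod (L j)) := by
  rintro r hr (i | j) hi hir
  · refine (disjoint_subgroup_prod (H' := r.toLeft.sup H) (L' := ⊤)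
      (hH (fun k hk => inl_mem_disjSum.1 (hr (mem_toLeft.1 hk))) (inl_mem_disjSum.1 hi)
        (mt mem_toLeft.1 hir)) disjoint_bot_left).mono_right (Finset.sup_le ?_)
    rintro (k | k) hk
    · exact Subgroup.prod_mono (le_sup (f := H) (mem_toLeft.2 hk)) le_top
    · exact Subgroup.prod_mono bot_le le_top
  · refine (disjoint_subgroup_prod (H' := ⊤) (L' := r.toRight.sup L) disjoint_bot_left
      (hL (fun k hk => inr_mem_disjSum.1 (hr (mem_toRight.1 hk))) (inr_mem_disjSum.1 hi)
        (mt mem_toRight.1 hir))).mono_right (Finset.sup_le ?_)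
    rintro (k | k) hk
    · exact Subgroup.prod_mono le_top bot_le
    · exact Subgroup.prod_mono le_top (le_sup (f := L) (mem_toRight.2 hk))

theorem supIndep_insertNone_prod {s : Finset ι} (H : Subgroup A) {L : ι → Subgroup B}
    (hL : s.SupIndep L) :
    (insertNone s).SupIndep fun o => o.elim (H.prod ⊥) fun j => (⊥ : Subgroup A).prod (L j) := by
  rintro r hr (- | i) hi hir
  · refine (disjoint_subgroup_prod (H' := ⊥) (L' := ⊤) disjoint_bot_right
      disjoint_bot_left).mono_right (Finset.sup_le ?_)
    rintro (- | k) hk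
    · exact absurd hk hir
    · exact Subgroup.prod_mono le_rfl le_top
  · refine (disjoint_subgroup_prod (H' := ⊤) (L' := (eraseNone r).sup L) disjoint_bot_left
      (hL (fun k hk => some_mem_insertNone.1 (hr (mem_eraseNone.1 hk)))
        (some_mem_insertNone.1 hi) (mt mem_eraseNone.1 hir))).mono_right (Finset.sup_le ?_)
    rintro (- | k) hk
    · exact Subgroup.prod_mono le_top bot_le
    · exact Subgroup.prod_mono le_top (le_sup (f := L) (mem_eraseNone.2 hk))

end ProductSubgroups

section PowerCharacters

theorem supIndep_ker_powMonoidHom {G ι : Type*} [CommGroup G] {s : Finset ι} {n : ι → ℕ}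
    (hn : (s : Set ι).Pairwise (Function.onFun Nat.Coprime n)) :
    s.SupIndep fun i => (powMonoidHom (n i) : G →* G).ker := by
  intro t hts i hi hit
  have hle : t.sup (fun j => (powMonoidHom (n j) : G →* G).ker) ≤
      (powMonoidHom (∏ j ∈ t, n j) : G →* G).ker := by
    refine Finset.sup_le fun j hj g hg => ?_
    obtain ⟨k, hk⟩ := dvd_prod_of_mem n hj
    rw [MonoidHom.mem_ker, powMonoidHom_apply] at hg ⊢
    rw [hk, pow_mul, hg, one_pow]
  refine Disjoint.mono_right hle (Subgroup.disjoint_def.2 fun hg hg' => ?_)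
  have hcop : Nat.Coprime (n i) (∏ j ∈ t, n j) :=
    Nat.Coprime.prod_right fun j hj => hn hi (hts hj) fun h => hit (h ▸ hj)
  exact orderOf_eq_one_iff.1 <| Nat.dvd_one.1 <| hcop ▸
    Nat.dvd_gcd (orderOf_dvd_of_pow_eq_one hg) (orderOf_dvd_of_pow_eq_one hg')

variable {F : Type*} [Field F] [Fintype F]

theorem natCard_ker_powMonoidHom_mulChar {c : ℕ} (hc : c ∣ Fintype.card F - 1) :
    Nat.card (powMonoidHom c : MulChar F ℂ →* MulChar F ℂ).ker = c := by
  obtain ⟨e⟩ := MulChar.mulEquiv_units F ℂ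
  have : IsCyclic (MulChar F ℂ) := isCyclic_of_surjective e.symm e.symm.surjective
  rw [IsCyclic.card_powMonoidHom_ker, Nat.card_congr e.toEquiv, Nat.card_eq_fintype_card,
    Fintype.card_units, Nat.gcd_eq_right hc]

theorem orderOf_eq_natCard_of_forall_pow_ne {G : Type*} [Group G] [IsCyclic G] [Finite G] {x : G}
    (h : ∀ c : ℕ, c.Prime → c ∣ Nat.card G → ∀ y, y ^ c ≠ x) : orderOf x = Nat.card G := by
  obtain ⟨g, hg⟩ := IsCyclic.exists_generator (α := G)
  obtain ⟨k, rfl⟩ := mem_powers_iff_mem_zpowers.2 (hg x)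
  have hcop : Nat.Coprime (Nat.card G) k := by
    by_contra hcop
    obtain ⟨c, hc, hcG, j, rfl⟩ := Nat.Prime.not_coprime_iff_dvd.1 hcop
    exact h c hc hcG (g ^ j) (by rw [← pow_mul, mul_comm])
  rw [← orderOf_eq_card_of_forall_mem_zpowers hg] at hcop ⊢
  exact hcop.orderOf_pow

theorem isPrimitiveElem_of_forall_pow_ne {x : F} (hx : x ≠ 0)
    (h : ∀ c ∈ (Fintype.card F - 1).primeFactors, ∀ y, y ^ c ≠ x) : IsPrimitiveElem x := by
  have hcard : Nat.card Fˣ = Fintype.card F - 1 := by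
    rw [Nat.card_eq_fintype_card, Fintype.card_units]
  rw [IsPrimitiveElem, ← Units.val_mk0 hx, orderOf_units, ← hcard]
  refine orderOf_eq_natCard_of_forall_pow_ne fun c hc hdvd y hy => ?_
  refine h c (Nat.mem_primeFactors.2 ⟨hc, hcard ▸ hdvd, hcard ▸ Nat.card_pos.ne'⟩) y ?_
  rw [← Units.val_pow_eq_pow_val, hy, Units.val_mk0]

end PowerCharacters

section AnnihilatingCharacters

/-- The additive characters of `A` that are trivial on the subgroup `V`. -/
def addCharAnnihilator {A : Type*} [AddCommGroup A] (V : AddSubgroup A) :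
    Subgroup (AddChar A ℂ) where
  carrier := {ψ | ∀ y ∈ V, ψ y = 1}
  one_mem' _ _ := rfl
  mul_mem' hψ hψ' y hy := by rw [AddChar.mul_apply, hψ y hy, hψ' y hy, one_mul]
  inv_mem' hψ y hy := by rw [AddChar.inv_apply, hψ _ (neg_mem hy)]

variable {A : Type*} [AddCommGroup A] {V W : AddSubgroup A}

theorem addCharAnnihilator_anti (h : V ≤ W) : addCharAnnihilator W ≤ addCharAnnihilator V :=
  fun _ hψ y hy => hψ y (h hy)

theorem disjoint_addCharAnnihilator (h : Codisjoint V W) :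
    Disjoint (addCharAnnihilator V) (addCharAnnihilator W) := by
  refine Subgroup.disjoint_def.2 fun {ψ} hV hW => DFunLike.ext _ _ fun x => ?_
  obtain ⟨v, hv, w, hw, rfl⟩ := AddSubgroup.mem_sup.1 (h.eq_top ▸ AddSubgroup.mem_top x)
  rw [AddChar.map_add_eq_mul, hV v hv, hW w hw, one_mul, AddChar.one_apply]

/-- The characters of `A ⧸ V` are the characters of `A` trivial on `V`. -/
def addCharQuotientEquiv (V : AddSubgroup A) : AddChar (A ⧸ V) ℂ ≃ addCharAnnihilator V where
  toFun ψ := ⟨ψ.compAddMonoidHom (QuotientAddGroup.mk' V), fun y hy => by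
    simp [(QuotientAddGroup.eq_zero_iff y).2 hy]⟩
  invFun ψ := AddChar.toAddMonoidHomEquiv.symm <|
    QuotientAddGroup.lift V (AddChar.toAddMonoidHomEquiv ψ.1) ψ.2
  left_inv ψ := by
    ext y
    obtain ⟨x, rfl⟩ := QuotientAddGroup.mk_surjective y
    rfl
  right_inv _ := rfl

theorem natCard_addCharAnnihilator [Finite A] (V : AddSubgroup A) :
    Nat.card (addCharAnnihilator V) = Nat.card (A ⧸ V) := by
  have := Fintype.ofFinite (A ⧸ V)
  rw [← Nat.card_congr (addCharQuotientEquiv V), Nat.card_eq_fintype_card, AddChar.card_eq,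
    Nat.card_eq_fintype_card]

theorem mem_of_forall_addCharAnnihilator [Finite A] {x : A}
    (hx : ∀ ψ ∈ addCharAnnihilator V, ψ x = 1) : x ∈ V := by
  by_contra h
  obtain ⟨ψ, hψ⟩ := AddChar.exists_apply_ne_zero.2 (mt (QuotientAddGroup.eq_zero_iff x).1 h)
  exact hψ (hx _ (addCharQuotientEquiv V ψ).2)

theorem supIndep_addCharAnnihilator_range_aeval {K M ι : Type*} [CommRing K] [AddCommGroup M]
    [Module K M] (φ : Module.End K M) {s : Finset ι} {e : ι → K[X]}
    (he : (s : Set ι).Pairwise (Function.onFun IsCoprime e)) :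
    s.SupIndep fun i => addCharAnnihilator (LinearMap.range (aeval φ (e i))).toAddSubgroup := by
  intro t hts i hi hit
  have hle : t.sup (fun j => addCharAnnihilator (LinearMap.range (aeval φ (e j))).toAddSubgroup) ≤
      addCharAnnihilator (LinearMap.range (aeval φ (∏ j ∈ t, e j))).toAddSubgroup := by
    refine Finset.sup_le fun j hj => addCharAnnihilator_anti ?_
    obtain ⟨k, hk⟩ := dvd_prod_of_mem e hj
    rw [hk, map_mul]
    exact LinearMap.range_comp_le_range (aeval φ k) (aeval φ (e j))
  refine Disjoint.mono_right hle (disjoint_addCharAnnihilator ?_)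
  obtain ⟨a, b, hab⟩ : IsCoprime (e i) (∏ j ∈ t, e j) :=
    IsCoprime.prod_right fun j hj => he hi (hts hj) fun h => hit (h ▸ hj)
  refine codisjoint_iff.2 (eq_top_iff.2 fun y _ => AddSubgroup.mem_sup.2
    ⟨_, ⟨aeval φ a y, rfl⟩, _, ⟨aeval φ b y, rfl⟩, ?_⟩)
  rw [mul_comm a, mul_comm b] at hab
  simpa using congrArg (aeval φ · y) hab

end AnnihilatingCharacters

section CharQuadruple

variable {F : Type*} [Field F]

/-- The quadruples `(ψ₂, χ₁, χ₂, ψ₁)` of characters of `F`, over which the sieve runs. -/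
abbrev CharQuadruple (F : Type*) [Field F] :=
  AddChar F ℂ × MulChar F ℂ × MulChar F ℂ × AddChar F ℂ

/-- The nonzero points where neither `f₁` nor `f₂` vanishes. -/
abbrev NonvanishingPoint (f₁ f₂ : F[X]) :=
  {x : F // x ≠ 0 ∧ f₁.eval x ≠ 0 ∧ f₂.eval x ≠ 0}

/-- The value at `x` of the summand `χ₁(x) χ₂(f₁(x)/f₂(x)) ψ₁(x) ψ₂(x⁻¹)` of a mixed character
sum, as a homomorphism in the quadruple of characters. -/
@[simps]
noncomputable def NonvanishingPoint.charEval {f₁ f₂ : F[X]} (x : NonvanishingPoint f₁ f₂) :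
    CharQuadruple F →* ℂ where
  toFun g := g.2.1 x * g.2.2.1 (f₁.eval x.1 / f₂.eval x.1) * g.2.2.2 x * g.1 x.1⁻¹
  map_one' := by
    simp [MulChar.one_apply, x.2.1, x.2.2.1, x.2.2.2]
  map_mul' g h := by
    simp only [Prod.fst_mul, Prod.snd_mul, AddChar.mul_apply, MulChar.mul_apply]
    ring

/-- Evaluation of the first component of a quadruple at `z`. -/
@[simps]
def CharQuadruple.fstEval (z : F) : CharQuadruple F →* ℂ where
  toFun g := g.1 z
  map_one' := rfl
  map_mul' _ _ := rfl

variable [Fintype F] {f₁ f₂ : F[X]}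

theorem card_le_card_nonvanishingPoint_add (h₁ : f₁ ≠ 0) (h₂ : f₂ ≠ 0) :
    Fintype.card F ≤
      Fintype.card (NonvanishingPoint f₁ f₂) + (f₁.natDegree + f₂.natDegree + 1) := by
  have h := card_le_card_ne_zero_eval_ne_zero (mul_ne_zero h₁ h₂)
  simpa only [natDegree_mul h₁ h₂, eval_mul, mul_ne_zero_iff, ← Fintype.card_subtype] using h

theorem norm_sum_charEval_le (hF : 2 < Fintype.card F)
    (hf : IsNonexceptional f₁ f₂ (Fintype.card F - 1)) {g : CharQuadruple F} (hg : g ≠ 1) :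
    ‖∑ x : NonvanishingPoint f₁ f₂, x.charEval g‖ ≤
      (f₁.natDegree + f₂.natDegree + 2 : ℕ) * √(Fintype.card F) := by
  obtain ⟨ψ₂, χ₁, χ₂, ψ₁⟩ := g
  let d : MixedCharSum F := ⟨χ₁, χ₂, ψ₁, ψ₂, f₁, f₂⟩
  have hd : d.IsNontrivial := by
    contrapose! hg
    simp_all [MixedCharSum.IsNontrivial, d]
  refine le_of_eq_of_le (congrArg _ ?_) (MixedCharSum.norm_sum_eval_le hF (d := d) hf hd)
  refine Fintype.sum_of_injective _ Subtype.val_injective _ _ (fun x hx => ?_) fun _ => rfl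
  rw [Subtype.range_coe_subtype, Set.mem_ofPred_eq, ← div_ne_zero_iff, ← mul_ne_zero_iff,
    not_not, mul_eq_zero] at hx
  rcases hx with rfl | hx
  · rw [MulChar.map_zero, zero_mul, zero_mul, zero_mul]
  · rw [hx, MulChar.map_zero, mul_zero, zero_mul, zero_mul]

end CharQuadruple

section SieveSubgroup

variable (K F : Type*) [Field K] [Field F] [Fintype K] [Algebra K F]

/-- The characters detecting the conditions of the sieve on a point `x`: the index `none` stands
for a prescribed trace of `x⁻¹`, the two copies of `ℕ` for `x` and `f(x)` not being `c`-th powers,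
and `K[X]` for `x` not being in the range of `e` evaluated at the Frobenius endomorphism. -/
noncomputable def sieveSubgroup (o : Option (ℕ ⊕ ℕ ⊕ K[X])) : Subgroup (CharQuadruple F) :=
  o.elim ((addCharAnnihilator (LinearMap.ker (Algebra.trace K F)).toAddSubgroup).prod ⊥) fun j =>
    (⊥ : Subgroup (AddChar F ℂ)).prod <|
      Sum.elim (fun c => (powMonoidHom c : MulChar F ℂ →* MulChar F ℂ).ker.prod ⊥)
        (fun j => (⊥ : Subgroup (MulChar F ℂ)).prod <|
          Sum.elim (fun c => (powMonoidHom c : MulChar F ℂ →* MulChar F ℂ).ker.prod ⊥)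
            (fun e => (⊥ : Subgroup (MulChar F ℂ)).prod <|
              addCharAnnihilator (LinearMap.range (aeval (frobeniusEnd K F) e)).toAddSubgroup) j) j

theorem supIndep_sieveSubgroup {P : Finset ℕ} {E : Finset K[X]}
    (hP : (P : Set ℕ).Pairwise Nat.Coprime) (hE : (E : Set K[X]).Pairwise IsCoprime) :
    (insertNone (P.disjSum (P.disjSum E))).SupIndep (sieveSubgroup K F) :=
  supIndep_insertNone_prod _ <| supIndep_disjSum_prod (supIndep_ker_powMonoidHom hP) <|
    supIndep_disjSum_prod (supIndep_ker_powMonoidHom hP) <|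
      supIndep_addCharAnnihilator_range_aeval _ hE

theorem natCard_sieveSubgroup_none [Finite F] :
    Nat.card (sieveSubgroup K F none) = Fintype.card K := by
  simp only [sieveSubgroup, Option.elim, natCard_subgroup_prod, Subgroup.card_bot, mul_one,
    natCard_addCharAnnihilator, ← Nat.card_eq_fintype_card]
  exact Nat.card_congr
    ((Algebra.trace K F).quotKerEquivOfSurjective (Algebra.trace_surjective K F)).toEquiv

theorem natCard_sieveSubgroup_inr_inr [Finite F] {e : K[X]}
    (he : e ∣ X ^ Module.finrank K F - 1) :
    Nat.card (sieveSubgroup K F (some (.inr (.inr e)))) = Fintype.card K ^ e.natDegree := by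
  simp only [sieveSubgroup, Option.elim, Sum.elim_inr, natCard_subgroup_prod, Subgroup.card_bot,
    one_mul, natCard_addCharAnnihilator]
  exact natCard_quotient_range_aeval_frobeniusEnd K F he

variable {F} [Fintype F] {c : ℕ} (hc : c ∣ Fintype.card F - 1)
include hc

theorem natCard_sieveSubgroup_inl : Nat.card (sieveSubgroup K F (some (.inl c))) = c := by
  simp only [sieveSubgroup, Option.elim, Sum.elim_inl, natCard_subgroup_prod, Subgroup.card_bot,
    one_mul, mul_one, natCard_ker_powMonoidHom_mulChar hc]

theorem natCard_sieveSubgroup_inr_inl :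
    Nat.card (sieveSubgroup K F (some (.inr (.inl c)))) = c := by
  simp only [sieveSubgroup, Option.elim, Sum.elim_inr, Sum.elim_inl, natCard_subgroup_prod,
    Subgroup.card_bot, one_mul, mul_one, natCard_ker_powMonoidHom_mulChar hc]

end SieveSubgroup

section SieveConditions

variable {K F : Type*} [Field K] [Field F] [Fintype K] [Algebra K F] {f₁ f₂ : F[X]}
  {x : NonvanishingPoint f₁ f₂}

theorem trace_inv_eq_of_forall_sieveSubgroup_none [Finite F] {z : F}
    (h : ∀ g ∈ sieveSubgroup K F none, CharQuadruple.fstEval z g * x.charEval g = 1) :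
    Algebra.trace K F x.1⁻¹ = -Algebra.trace K F z := by
  have hmem : z + x.1⁻¹ ∈ (LinearMap.ker (Algebra.trace K F)).toAddSubgroup :=
    mem_of_forall_addCharAnnihilator fun ψ hψ => by
      have hψx := h (ψ, 1) ⟨hψ, one_mem _⟩
      rw [AddChar.map_add_eq_mul]
      simpa [MulChar.one_apply, x.2] using hψx
  rw [Submodule.mem_toAddSubgroup, LinearMap.mem_ker, map_add] at hmem
  exact eq_neg_of_add_eq_zero_right hmem

theorem mulChar_apply_eq_one_of_pow_eq {χ : MulChar F ℂ} {c : ℕ} (hc : c ≠ 0) (hχ : χ ^ c = 1)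
    {y z : F} (hz : z ≠ 0) (hy : y ^ c = z) : χ z = 1 := by
  rw [← hy, pow_ne_zero_iff hc] at hz
  rw [← hy, map_pow, ← MulChar.pow_apply' _ hc, hχ, MulChar.one_apply hz.isUnit]

theorem pow_ne_of_exists_sieveSubgroup_inl {c : ℕ} (hc : c ≠ 0)
    (h : ∃ g ∈ sieveSubgroup K F (some (.inl c)), x.charEval g ≠ 1) (y : F) : y ^ c ≠ x := by
  obtain ⟨⟨ψ₂, χ₁, χ₂, ψ₁⟩, ⟨hψ₂, hχ₁, h₁⟩, hg⟩ := h
  obtain ⟨rfl, rfl⟩ := Prod.mk_eq_one.1 (Subgroup.mem_bot.1 h₁)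
  obtain rfl := Subgroup.mem_bot.1 hψ₂
  refine fun hy => hg ?_
  simp [mulChar_apply_eq_one_of_pow_eq hc hχ₁ x.2.1 hy, MulChar.one_apply, x.2]

theorem pow_ne_of_exists_sieveSubgroup_inr_inl {c : ℕ} (hc : c ≠ 0)
    (h : ∃ g ∈ sieveSubgroup K F (some (.inr (.inl c))), x.charEval g ≠ 1) (y : F) :
    y ^ c ≠ f₁.eval x.1 / f₂.eval x.1 := by
  obtain ⟨⟨ψ₂, χ₁, χ₂, ψ₁⟩, ⟨hψ₂, hχ₁, hχ₂, hψ₁⟩, hg⟩ := h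
  obtain rfl := Subgroup.mem_bot.1 hψ₂
  obtain rfl := Subgroup.mem_bot.1 hχ₁
  obtain rfl := Subgroup.mem_bot.1 hψ₁
  refine fun hy => hg ?_
  simp [mulChar_apply_eq_one_of_pow_eq hc hχ₂ (div_ne_zero x.2.2.1 x.2.2.2) hy,
    MulChar.one_apply, x.2]

theorem notMem_range_aeval_of_exists_sieveSubgroup_inr_inr {e : K[X]}
    (h : ∃ g ∈ sieveSubgroup K F (some (.inr (.inr e))), x.charEval g ≠ 1) :
    x.1 ∉ LinearMap.range (aeval (frobeniusEnd K F) e) := by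
  obtain ⟨⟨ψ₂, χ₁, χ₂, ψ₁⟩, ⟨hψ₂, hχ₁, hχ₂, hψ₁⟩, hg⟩ := h
  obtain rfl := Subgroup.mem_bot.1 hψ₂
  obtain rfl := Subgroup.mem_bot.1 hχ₁
  obtain rfl := Subgroup.mem_bot.1 hχ₂
  refine fun hx => hg ?_
  simp [hψ₁ x.1 hx, MulChar.one_apply, x.2]

end SieveConditions

section NormalizedFactors

theorem pairwise_coprime_of_forall_prime {P : Finset ℕ} (hP : ∀ c ∈ P, c.Prime) :
    (P : Set ℕ).Pairwise Nat.Coprime :=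
  fun _ hc _ hd hcd => (Nat.coprime_primes (hP _ hc) (hP _ hd)).2 hcd

variable {K : Type*} [Field K]

theorem pairwise_isCoprime_of_forall_irreducible_monic {E : Finset K[X]}
    (hE : ∀ e ∈ E, Irreducible e ∧ e.Monic) : (E : Set K[X]).Pairwise IsCoprime := by
  intro d hd e he hde
  obtain ⟨hd, hd'⟩ := hE d hd
  obtain ⟨he, he'⟩ := hE e he
  exact hd.coprime_iff_not_dvd.2 fun h =>
    hde (eq_of_monic_of_associated hd' he' (hd.associated_of_dvd he h))

variable [DecidableEq K]

theorem mem_toFinset_normalizedFactors_iff {b : K[X]} (hb : b ≠ 0) {e : K[X]} :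
    e ∈ (normalizedFactors b).toFinset ↔ Irreducible e ∧ e.Monic ∧ e ∣ b := by
  rw [Multiset.mem_toFinset, mem_normalizedFactors_iff' hb]
  exact and_congr_right fun he => and_congr_left' (normalize_eq_self_iff_monic he.ne_zero)

theorem toFinset_normalizedFactors_filter_dvd {b g : K[X]} (hb : b ≠ 0) (hg : g ∣ b) :
    (normalizedFactors b).toFinset.filter (· ∣ g) = (normalizedFactors g).toFinset := by
  ext e
  rw [mem_filter, mem_toFinset_normalizedFactors_iff hb,
    mem_toFinset_normalizedFactors_iff (ne_zero_of_dvd_ne_zero hb hg)]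
  exact ⟨fun h => ⟨h.1.1, h.1.2.1, h.2⟩, fun h => ⟨⟨h.1, h.2.1, h.2.2.trans hg⟩, h.2.2⟩⟩

end NormalizedFactors

section Assembly

theorem exists_nonvanishingPoint_trivial_and_nontrivial {F ι : Type*} [Field F] [Fintype F]
    {f₁ f₂ : F[X]} (hF : 2 < Fintype.card F) (hf : IsNonexceptional f₁ f₂ (Fintype.card F - 1))
    (β : CharQuadruple F →* ℂ) {H : Option ι → Subgroup (CharQuadruple F)} {s t u : Finset ι}
    (hH : (insertNone u).SupIndep H) (hsu : s ⊆ u) (htu : t ⊆ u) (hst : Disjoint s t)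
    (hs : ∀ j ∈ s, H (some j) ≠ ⊥) {δ : ℝ}
    (hδ : δ = 1 - ∑ j ∈ t, 1 / (Nat.card (H (some j)) : ℝ)) (hpos : 0 < δ)
    (hcond : (f₁.natDegree + f₂.natDegree + 2 : ℕ) * √(Fintype.card F) * Nat.card (H none) *
      2 ^ #s * ((#t - 1) / δ + 2) < Fintype.card F) :
    ∃ x : NonvanishingPoint f₁ f₂, (∀ g ∈ H none, β g * x.charEval g = 1) ∧
      ∀ j, j ∈ s ∨ j ∈ t → ∃ g ∈ H (some j), x.charEval g ≠ 1 := by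
  have hcard : (Fintype.card F : ℝ) ≤
      Fintype.card (NonvanishingPoint f₁ f₂) + (f₁.natDegree + f₂.natDegree + 1 : ℕ) := by
    exact_mod_cast card_le_card_nonvanishingPoint_add hf.num_ne_zero hf.denom_ne_zero
  have hbound : ((f₁.natDegree + f₂.natDegree + 1 : ℕ) : ℝ) ≤
      (f₁.natDegree + f₂.natDegree + 2 : ℕ) * √(Fintype.card F) := by
    have hsqrt : 1 ≤ √(Fintype.card F : ℝ) := Real.one_le_sqrt.2 (by
      exact_mod_cast one_le_two.trans hF.le)
    push_cast
    nlinarith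
  simp only [← mem_union]
  exact exists_forall_trivial_and_forall_nontrivial (fun g hg => norm_sum_charEval_le hF hf hg)
    (hH.subset (insertNone.monotone (union_subset hsu htu))) hst hs hδ hpos
    (hcond.trans_le (by linarith))

variable {K F : Type*} [Field K] [Field F] [Fintype K] [Fintype F] [Algebra K F]
  {f₁ f₂ : F[X]}

theorem sum_one_div_natCard_sieveSubgroup {Q : Finset ℕ} {E : Finset K[X]}
    (hQ : ∀ c ∈ Q, c ∣ Fintype.card F - 1) (hE : ∀ e ∈ E, e ∣ X ^ Module.finrank K F - 1) :
    ∑ j ∈ Q.disjSum (Q.disjSum E), 1 / (Nat.card (sieveSubgroup K F (some j)) : ℝ) =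
      2 * (∑ c ∈ Q, (1 : ℝ) / c) + ∑ e ∈ E, (1 : ℝ) / (Fintype.card K : ℝ) ^ e.natDegree := by
  rw [sum_disjSum, sum_disjSum, two_mul, add_assoc]
  congr! 3 with c hc c hc e he
  · rw [natCard_sieveSubgroup_inl K (hQ c hc)]
  · rw [natCard_sieveSubgroup_inr_inl K (hQ c hc)]
  · rw [natCard_sieveSubgroup_inr_inr K F (hE e he), Nat.cast_pow]

theorem sieveSubgroup_ne_bot {P : Finset ℕ} {D : Finset K[X]}
    (hP : ∀ c ∈ P, 1 < c ∧ c ∣ Fintype.card F - 1)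
    (hD : ∀ e ∈ D, 0 < e.natDegree ∧ e ∣ X ^ Module.finrank K F - 1) {j : ℕ ⊕ ℕ ⊕ K[X]}
    (hj : j ∈ P.disjSum (P.disjSum D)) : sieveSubgroup K F (some j) ≠ ⊥ := by
  rw [← Subgroup.one_lt_card_iff_ne_bot]
  rcases j with c | c | e
  · have hc := hP c (by simpa using hj)
    exact (natCard_sieveSubgroup_inl K hc.2).symm ▸ hc.1
  · have hc := hP c (by simpa using hj)
    exact (natCard_sieveSubgroup_inr_inl K hc.2).symm ▸ hc.1
  · have he := hD e (by simpa using hj)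
    exact (natCard_sieveSubgroup_inr_inr K F he.2).symm ▸
      Nat.one_lt_pow he.1.ne' Fintype.one_lt_card

theorem exists_trace_inv_eq_and_forall_pow_ne_and_forall_notMem_range [DecidableEq K]
    (hF : 2 < Fintype.card F) (hf : IsNonexceptional f₁ f₂ (Fintype.card F - 1))
    {P Q : Finset ℕ} {D E : Finset K[X]} (hPQ : Disjoint P Q) (hDE : Disjoint D E)
    (hprime : ∀ c ∈ P ∪ Q, c.Prime ∧ c ∣ Fintype.card F - 1)
    (hirr : ∀ e ∈ D ∪ E, Irreducible e ∧ e.Monic ∧ e ∣ X ^ Module.finrank K F - 1)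
    {δ : ℝ} (hδ : δ = 1 - 2 * (∑ c ∈ Q, (1 : ℝ) / c) -
      ∑ e ∈ E, (1 : ℝ) / (Fintype.card K : ℝ) ^ e.natDegree) (hpos : 0 < δ)
    (hcond : (f₁.natDegree + f₂.natDegree + 2 : ℕ) * √(Fintype.card F) * Fintype.card K *
      2 ^ (2 * #P + #D) * ((2 * #Q + #E - 1) / δ + 2) < Fintype.card F) (a : K) :
    ∃ x : NonvanishingPoint f₁ f₂, Algebra.trace K F x.1⁻¹ = a ∧
      (∀ c ∈ P ∪ Q, ∀ y, y ^ c ≠ x.1) ∧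
      (∀ c ∈ P ∪ Q, ∀ y, y ^ c ≠ f₁.eval x.1 / f₂.eval x.1) ∧
      ∀ e ∈ D ∪ E, x.1 ∉ LinearMap.range (aeval (frobeniusEnd K F) e) := by
  obtain ⟨z, hz⟩ := Algebra.trace_surjective K F (-a)
  have hindep := supIndep_sieveSubgroup K F
    (pairwise_coprime_of_forall_prime fun c hc => (hprime c hc).1)
    (pairwise_isCoprime_of_forall_irreducible_monic fun e he =>
      ⟨(hirr e he).1, (hirr e he).2.1⟩)
  have hdisj : Disjoint (P.disjSum (P.disjSum D)) (Q.disjSum (Q.disjSum E)) := by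
    simp only [disjoint_left, Sum.forall, inl_mem_disjSum, inr_mem_disjSum] at hPQ hDE ⊢
    exact ⟨hPQ, hPQ, hDE⟩
  have hbot : ∀ j ∈ P.disjSum (P.disjSum D), sieveSubgroup K F (some j) ≠ ⊥ := fun _ =>
    sieveSubgroup_ne_bot
      (fun c hc => (hprime c (mem_union_left _ hc)).imp_left Nat.Prime.one_lt)
      fun e he => (hirr e (mem_union_left _ he)).imp Irreducible.natDegree_pos And.right
  have h := exists_nonvanishingPoint_trivial_and_nontrivial hF hf
    (CharQuadruple.fstEval z) hindep
    (disjSum_mono subset_union_left (disjSum_mono subset_union_left subset_union_left))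
    (disjSum_mono subset_union_right (disjSum_mono subset_union_right subset_union_right))
    hdisj hbot (δ := δ)
  rw [sum_one_div_natCard_sieveSubgroup (fun c hc => (hprime c (mem_union_right _ hc)).2)
      fun e he => (hirr e (mem_union_right _ he)).2.2,
    card_disjSum, card_disjSum, card_disjSum, card_disjSum, natCard_sieveSubgroup_none,
    ← add_assoc, ← two_mul, ← add_assoc, ← two_mul, ← sub_sub] at h
  push_cast at h hcond
  obtain ⟨x, htrace, hx⟩ := h hδ hpos hcond
  refine ⟨x, ?_, fun c hc => ?_, fun c hc => ?_, fun e he => ?_⟩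
  · rw [trace_inv_eq_of_forall_sieveSubgroup_none htrace, hz, neg_neg]
  · refine pow_ne_of_exists_sieveSubgroup_inl (hprime c hc).1.ne_zero (hx _ ?_)
    simpa only [inl_mem_disjSum, mem_union] using hc
  · refine pow_ne_of_exists_sieveSubgroup_inr_inl (hprime c hc).1.ne_zero (hx _ ?_)
    simpa only [inl_mem_disjSum, inr_mem_disjSum, mem_union] using hc
  · refine notMem_range_aeval_of_exists_sieveSubgroup_inr_inr (hx _ ?_)
    simpa only [inr_mem_disjSum, mem_union] using he

end Assembly

theorem isNonexceptional_num_denom {F : Type*} [Field F] [Fintype F] (hF : 2 < Fintype.card F)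
    {f : RatFunc F} (hf : ¬ExceptionalRatFunc f) :
    IsNonexceptional f.num f.denom (Fintype.card F - 1) where
  num_ne_zero h := hf <| .inl ⟨0, 0, 1, Fintype.card F - 1, by lia, dvd_rfl, by
    simp [RatFunc.num_eq_zero_iff.1 h]⟩
  denom_ne_zero := f.denom_ne_zero
  isCoprime := f.isCoprime_num_denom
  not_isPowUpToMonomial := by
    rintro d hd hdvd ⟨⟨c, i, w, hnum⟩, c', i', w', hdenom⟩
    refine hf <| .inl
      ⟨c / c', i - i', algebraMap _ _ w / algebraMap _ _ w', d, hd, hdvd, ?_⟩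
    rw [← RatFunc.num_div_denom f, hnum, hdenom, zpow_sub₀ RatFunc.X_ne_zero, map_div₀]
    simp only [map_mul, map_pow, RatFunc.algebraMap_C, RatFunc.algebraMap_X, zpow_natCast]
    ring

theorem sqrt_pow_mul_mul_rpow {q : ℝ} (hq : 0 < q) (m : ℕ) :
    √(q ^ m) * q * q ^ ((m : ℝ) / 2 - 1) = q ^ m := by
  rw [Real.rpow_sub hq, Real.rpow_one, mul_assoc, mul_div_cancel₀ _ hq.ne',
    ← Real.rpow_natCast, Real.sqrt_eq_rpow, ← Real.rpow_mul hq.le, mul_one_div,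
    ← Real.rpow_add hq, add_halves]

section Main

variable {K F : Type*} [Field K] [DecidableEq K] [Field F] [Fintype K] [Fintype F] [Algebra K F]
  {f₁ f₂ : F[X]}

theorem exists_isNormalElem_and_isPrimitiveElem (hF : 2 < Fintype.card F)
    (hf : IsNonexceptional f₁ f₂ (Fintype.card F - 1)) {l : ℕ} (hl : l ∣ Fintype.card F - 1)
    {g : K[X]} (hg : g ∣ X ^ Module.finrank K F - 1) {Q : Finset ℕ}
    (hQ : Q = {c ∈ (Fintype.card F - 1).primeFactors | ¬c ∣ l}) {E : Finset K[X]}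
    (hE : E = {e ∈ (normalizedFactors (X ^ Module.finrank K F - 1 : K[X])).toFinset | ¬e ∣ g})
    {δ : ℝ} (hδ : δ = 1 - 2 * (∑ c ∈ Q, (1 : ℝ) / c) -
      ∑ e ∈ E, (1 : ℝ) / (Fintype.card K : ℝ) ^ e.natDegree) (hpos : 0 < δ)
    (hcond : (f₁.natDegree + f₂.natDegree + 2 : ℕ) * √(Fintype.card F) * Fintype.card K *
      2 ^ (2 * #l.primeFactors + #(normalizedFactors g).toFinset) *
        ((2 * #Q + #E - 1) / δ + 2) < Fintype.card F) (a : K) :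
    ∃ x : F, IsNormalElem K (Fintype.card K) (Module.finrank K F) x ∧ IsPrimitiveElem x ∧
      IsPrimitiveElem (f₁.eval x / f₂.eval x) ∧ Algebra.trace K F x⁻¹ = a := by
  have hN : Fintype.card F - 1 ≠ 0 := by lia
  have hX : (X ^ Module.finrank K F - 1 : K[X]) ≠ 0 :=
    X_pow_sub_C_ne_zero Module.finrank_pos 1
  have hprimes : l.primeFactors ∪ Q = (Fintype.card F - 1).primeFactors := by
    rw [hQ, ← Nat.primeFactors_filter_dvd_of_dvd hN hl, filter_union_filter_not_eq]
  have hfactors (e : K[X]) : e ∈ (normalizedFactors g).toFinset ∨ e ∈ E ↔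
      Irreducible e ∧ e.Monic ∧ e ∣ X ^ Module.finrank K F - 1 := by
    rw [hE, ← toFinset_normalizedFactors_filter_dvd hX hg, ← mem_union,
      filter_union_filter_not_eq, mem_toFinset_normalizedFactors_iff hX]
  have hPQ : Disjoint l.primeFactors Q := by
    rw [hQ, ← Nat.primeFactors_filter_dvd_of_dvd hN hl]
    exact disjoint_filter_filter_not _ _ _
  have hDE : Disjoint (normalizedFactors g).toFinset E := by
    rw [hE, ← toFinset_normalizedFactors_filter_dvd hX hg]
    exact disjoint_filter_filter_not _ _ _
  obtain ⟨x, htrace, hx, hfx, hnormal⟩ :=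
    exists_trace_inv_eq_and_forall_pow_ne_and_forall_notMem_range hF hf hPQ hDE
      (fun c hc => by
        rw [hprimes] at hc
        exact ⟨Nat.prime_of_mem_primeFactors hc, Nat.dvd_of_mem_primeFactors hc⟩)
      (fun e he => (hfactors e).1 (mem_union.1 he)) hδ hpos hcond a
  refine ⟨x, ?_, ?_, ?_, htrace⟩
  · exact isNormalElem_of_forall_notMem_range_aeval fun e he hmonic hdvd =>
      hnormal e (mem_union.2 ((hfactors e).2 ⟨he, hmonic, hdvd⟩))
  · exact isPrimitiveElem_of_forall_pow_ne x.2.1 fun c hc => hx c (hprimes ▸ hc)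
  · exact isPrimitiveElem_of_forall_pow_ne (div_ne_zero x.2.2.1 x.2.2.2)
      fun c hc => hfx c (hprimes ▸ hc)

end Main

/-- Sieving criterion: with `p₁, …, p_r` the primes dividing `q^m−1` but not `l`,
`g₁, …, g_s` the monic irreducible factors of `x^m−1` not dividing `g`,
`δ = 1 − 2∑ 1/pᵢ − ∑ 1/q^{deg gᵢ} > 0` and `Δ = (2r+s−1)/δ + 2`, the inequality
`q^{m/2−1} > (n+2)·Δ·W(l)²·W(g)` implies the existence of a normal element `α` with
`(α, f(α))` a primitive pair and `Tr(α⁻¹) = a`, for every non-exceptional `f` of degree sum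
`n` and every `a`. -/
theorem sieving_criterion {K F : Type*} [Field K] [DecidableEq K] [Field F]
    [Fintype K] [Fintype F] [Algebra K F]
    (q m n : ℕ) (p t : ℕ) (hp : p.Prime) (hq : q = p ^ t) (ht : 0 < t)
    (hm : 3 ≤ m) (hn : 0 < n) (hK : Fintype.card K = q) (hF : Fintype.card F = q ^ m)
    (l : ℕ) (hl : l ∣ q ^ m - 1) (g : K[X]) (hg : g ∣ X ^ m - 1)
    (P : Finset ℕ) (hP : P = (q ^ m - 1).primeFactors.filter fun c => ¬ c ∣ l)
    (G : Finset K[X])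
    (hG : G = (normalizedFactors ((X : K[X]) ^ m - 1)).toFinset.filter fun e => ¬ e ∣ g)
    (δ : ℝ) (hδdef : δ = 1 - 2 * (∑ c ∈ P, (1 : ℝ) / c) -
      ∑ e ∈ G, (1 : ℝ) / (q : ℝ) ^ e.natDegree)
    (hδ : 0 < δ)
    (Δ : ℝ) (hΔ : Δ = (2 * P.card + G.card - 1) / δ + 2)
    (hcond : (q : ℝ) ^ ((m : ℝ) / 2 - 1) >
      (n + 2) * Δ * ((2 : ℝ) ^ l.primeFactors.card) ^ 2 *
        2 ^ (normalizedFactors g).toFinset.card)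
    (f : RatFunc F) (hf : ¬ ExceptionalRatFunc f)
    (hdeg : f.num.natDegree + f.denom.natDegree = n) (a : K) :
    ∃ α : F, IsNormalElem K q m α ∧ IsPrimitiveElem α ∧
      IsPrimitiveElem (RatFunc.eval (RingHom.id F) α f) ∧
      Algebra.trace K F α⁻¹ = a := by
  have hq : 1 < q := hK ▸ Fintype.one_lt_card
  have hcard : 2 < Fintype.card F := by
    rw [hF]
    exact (by norm_num : 2 < 2 ^ 3).trans_le
      ((Nat.pow_le_pow_left hq 3).trans (Nat.pow_le_pow_right hq.le hm))
  obtain rfl : Module.finrank K F = m := Nat.pow_right_injective hq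
    (by rw [← hF, Module.card_eq_pow_finrank (K := K), hK] : q ^ Module.finrank K F = q ^ m)
  have hsqrt := sqrt_pow_mul_mul_rpow (q := q) (by positivity) (Module.finrank K F)
  have hbound := mul_lt_mul_of_pos_left hcond
    (by positivity : 0 < √((q : ℝ) ^ Module.finrank K F) * q)
  rw [hsqrt, hΔ] at hbound
  obtain ⟨x, hx⟩ := exists_isNormalElem_and_isPrimitiveElem hcard
    (isNonexceptional_num_denom hcard hf) (hF ▸ hl) hg (hF ▸ hP) hG (hK ▸ hδdef) hδ (by
      rw [hdeg, hF, hK, pow_add, pow_mul']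
      push_cast
      exact lt_of_eq_of_lt (by ring) hbound) a
  refine ⟨x, ?_⟩
  rwa [RatFunc.eval, eval₂_id, eval₂_id, ← hK]
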